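/- arXiv:2211.05210 — 4 statements merged into one kernel-verified Lean document; each statement's English description precedes it below -/
import Mathlib

section
/- Let X be a log-concave real random variable with E X = 0. Then for all real numbers p, q with p ≥ q ≥ 1, one has ‖X‖_p ≤ (p/q)·‖X‖_q. -/
open MeasureTheory

/-- A real random variable (given by its distribution `μ`) is log-concave if it is
a.s. constant or has a density `f` w.r.t. Lebesgue measure satisfying
`f x ^ l * f y ^ (1 - l) ≤ f (l * x + (1 - l) * y)` for all `x y` and `l ∈ [0, 1]`. -/
def IsLogConcave (μ : Measure ℝ) : Prop :=
  IsProbabilityMeasure μ ∧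
  ((∃ c : ℝ, μ = Measure.dirac c) ∨
   ∃ f : ℝ → ℝ, (∀ x, 0 ≤ f x) ∧
     μ = volume.withDensity (fun x => ENNReal.ofReal (f x)) ∧
     ∀ x y l : ℝ, 0 ≤ l → l ≤ 1 → f x ^ l * f y ^ (1 - l) ≤ f (l * x + (1 - l) * y))

/-- The `s`-th moment norm `‖X‖ₛ = (E|X|^s)^(1/s)` of a random variable with
distribution `μ`. -/
noncomputable def momNorm (μ : Measure ℝ) (s : ℝ) : ℝ :=
  (∫ x, |x| ^ s ∂μ) ^ (1 / s)

/-!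
For `X` with law `μ` write `A s = E (X⁺) ^ s / Γ (s + 1)`, let `B s` be the same for `-X`, and
`a = P(X > 0)`. The tail of `X` crosses the exponential with the same value `a` at `0` and the same
`p`-th moment only once, whence `a ^ (1 - q / p) * A p ^ (q / p) ≤ A q` for `q ≤ p`. Adding the same
bound for `-X` loses at most a factor `exp (-((1 - q / p) * D))`, where `D` bounds the relative
entropy of the Bernoulli law with parameter `A p / (A p + B p)` with respect to the one with
parameter `a`; so `(log (A s + B s) + D) / s` decreases from `q` to `p`.

Since `‖X‖_s / s = exp ((g s + log (A s + B s)) / s)` with `g s = log (Γ (s + 1) / s ^ s)`, it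
suffices that `(g s - D) / s` be antitone. As `g` is concave, this holds on `[Q, ∞)` as soon as it
decreases from some `r < Q` to `Q`. A mean zero forces `1 / e ≤ a ≤ 1 - 1 / e` (Grünbaum) and bounds
`A p / B p` for bounded `p`, which gives admissible values of `D` on `[1, 2]`, `[2, 3]` and
`[3, 4]`; on `[4, ∞)` the trivial bound `D = 1` is good enough.
-/

section

open Real Set Filter Topology

/-! ### Relative entropy of Bernoulli laws -/

/-- The relative entropy of the Bernoulli distribution with parameter `w` with respect to the one
with parameter `a`. -/
noncomputable def bernoulliKL (w a : ℝ) : ℝ :=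
  w * log (w / a) + (1 - w) * log ((1 - w) / (1 - a))

lemma bernoulliKL_one_sub_one_sub (w a : ℝ) : bernoulliKL (1 - w) (1 - a) = bernoulliKL w a := by
  simp only [bernoulliKL, sub_sub_cancel]
  ring

lemma bernoulliKL_eq_sub_binEntropy (w : ℝ) {a : ℝ} (ha : a ∈ Ioo 0 1) :
    bernoulliKL w a = -(w * log a + (1 - w) * log (1 - a)) - binEntropy w := by
  have mul_log_div (v : ℝ) {b : ℝ} (hb : b ≠ 0) : v * log (v / b) = v * log v - v * log b := by
    rcases eq_or_ne v 0 with rfl | hv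
    · simp
    · rw [log_div hv hb, mul_sub]
  rw [bernoulliKL, mul_log_div w ha.1.ne', mul_log_div (1 - w) (sub_pos.2 ha.2).ne', binEntropy,
    log_inv, log_inv]
  ring

lemma convexOn_bernoulliKL_left {a : ℝ} (ha : a ∈ Ioo 0 1) :
    ConvexOn ℝ (Icc 0 1) fun w ↦ bernoulliKL w a := by
  refine ⟨convex_Icc 0 1, fun x hx y hy s t hs ht hst ↦ ?_⟩
  have hH := strictConcave_binEntropy.concaveOn.2 hx hy hs ht hst
  obtain rfl := eq_sub_of_add_eq hst
  simp only [smul_eq_mul, bernoulliKL_eq_sub_binEntropy _ ha] at hH ⊢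
  linarith

lemma convexOn_bernoulliKL_right {w : ℝ} (hw : w ∈ Icc 0 1) :
    ConvexOn ℝ (Ioo 0 1) (bernoulliKL w) := by
  refine ⟨convex_Ioo 0 1, fun x hx y hy s t hs ht hst ↦ ?_⟩
  have hlog := strictConcaveOn_log_Ioi.concaveOn.2 (mem_Ioi.2 hx.1) (mem_Ioi.2 hy.1) hs ht hst
  have hlog' := strictConcaveOn_log_Ioi.concaveOn.2 (mem_Ioi.2 (sub_pos.2 hx.2))
    (mem_Ioi.2 (sub_pos.2 hy.2)) hs ht hst
  have hz := convex_Ioo (0 : ℝ) 1 hx hy hs ht hst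
  obtain rfl := eq_sub_of_add_eq hst
  simp only [smul_eq_mul, bernoulliKL_eq_sub_binEntropy w hx, bernoulliKL_eq_sub_binEntropy w hy]
    at hlog hlog' hz ⊢
  rw [bernoulliKL_eq_sub_binEntropy w hz]
  rw [show (1 - t) * (1 - x) + t * (1 - y) = 1 - ((1 - t) * x + t * y) by ring] at hlog'
  linarith [mul_le_mul_of_nonneg_left hlog hw.1,
    mul_le_mul_of_nonneg_left hlog' (sub_nonneg.2 hw.2)]

lemma bernoulliKL_one_sub_le {W c : ℝ} (hW : 1 / 2 ≤ W) (hc : 0 < c) (hc' : c ≤ 1 / 2) :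
    bernoulliKL W (1 - c) ≤ bernoulliKL W c := by
  have hlog : log c ≤ log (1 - c) := log_le_log hc (by linarith)
  rw [bernoulliKL_eq_sub_binEntropy W ⟨by linarith, by linarith⟩,
    bernoulliKL_eq_sub_binEntropy W ⟨hc, by linarith⟩, sub_sub_cancel]
  nlinarith

lemma bernoulliKL_le_of_mem_Icc {w W a c : ℝ} (hc : 0 < c) (ha : a ∈ Icc c (1 - c)) (hW : W ≤ 1)
    (hw : w ∈ Icc (1 - W) W) : bernoulliKL w a ≤ bernoulliKL W c := by
  have hW' : 1 / 2 ≤ W := by linarith [hw.1, hw.2]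
  have hc' : c ≤ 1 / 2 := by linarith [ha.1, ha.2]
  have le_corner {b : ℝ} (hb : b ∈ Icc c (1 - c)) : bernoulliKL W b ≤ bernoulliKL W c :=
    ((convexOn_bernoulliKL_right ⟨by linarith, hW⟩).le_max_of_mem_Icc ⟨hc, by linarith⟩
      ⟨by linarith, by linarith⟩ hb).trans (max_le le_rfl (bernoulliKL_one_sub_le hW' hc hc'))
  have hlow : bernoulliKL (1 - W) a ≤ bernoulliKL W c := by
    rw [← bernoulliKL_one_sub_one_sub, sub_sub_cancel]
    exact le_corner ⟨by linarith [ha.2], by linarith [ha.1]⟩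
  exact ((convexOn_bernoulliKL_left ⟨hc.trans_le ha.1, by linarith [ha.2]⟩).le_max_of_mem_Icc
    ⟨by linarith, by linarith⟩ ⟨by linarith, hW⟩ hw).trans (max_le hlow (le_corner ha))

lemma exp_neg_mul_bernoulliKL_mul_rpow_le {a x y : ℝ} (t : ℝ) (ha : a ∈ Ioo 0 1) (hx : 0 < x)
    (hy : 0 < y) :
    exp (-(t * bernoulliKL (x / (x + y)) a)) * (x + y) ^ (1 - t) ≤
      a ^ t * x ^ (1 - t) + (1 - a) ^ t * y ^ (1 - t) := by
  have ha0 := ha.1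
  have ha1 : 0 < 1 - a := sub_pos.2 ha.2
  have hxy : 0 < x + y := add_pos hx hy
  set w := x / (x + y) with hw
  have hw1 : 1 - w = y / (x + y) := by rw [hw]; field_simp; ring
  have hw0 : 0 < w := by positivity
  have hw1' : 0 < 1 - w := by rw [hw1]; positivity
  have scale {c v z : ℝ} (hc : 0 < c) (hz : 0 < z) (hv : v = z / (x + y)) :
      v * (c / v) ^ t * (x + y) ^ (1 - t) = c ^ t * z ^ (1 - t) := by
    have hzv : z = v * (x + y) := by rw [hv]; field_simp
    have hv0 : 0 < v := by rw [hv]; positivity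
    rw [hzv, mul_rpow hv0.le hxy.le, rpow_sub hv0, rpow_one, div_rpow hc.le hv0.le]
    ring
  have exp_mul_log {u v : ℝ} (hu : 0 < u) (hv : 0 < v) :
      exp (-(t * (v * log (v / u)))) = ((u / v) ^ t) ^ v := by
    rw [← rpow_mul (by positivity), rpow_def_of_pos (by positivity), ← inv_div v u, log_inv]
    ring_nf
  rw [← scale ha0 hx hw, ← scale ha1 hy hw1, ← add_mul]
  gcongr
  calc exp (-(t * bernoulliKL w a))
      = ((a / w) ^ t) ^ w * (((1 - a) / (1 - w)) ^ t) ^ (1 - w) := by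
        rw [← exp_mul_log ha0 hw0, ← exp_mul_log ha1 hw1', ← exp_add, bernoulliKL]
        ring_nf
    _ ≤ w * (a / w) ^ t + (1 - w) * ((1 - a) / (1 - w)) ^ t :=
        geom_mean_le_arith_mean2_weighted hw0.le hw1'.le (by positivity) (by positivity) (by ring)

/-! ### Concavity of the normalized Gamma function -/

/-- The normalized Gamma function `log (Γ (s + 1) / s ^ s)`, extended to all real `s` by the junk
values of `Real.log`. Its concavity on the positive reals controls how moments of log-concave
variables grow. -/
noncomputable def gammaDefect (s : ℝ) : ℝ :=
  log (Gamma (s + 1)) - s * log s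

lemma concaveOn_mul_log_add_one_sub_log :
    ConcaveOn ℝ (Ioi 0) fun t ↦ t * (log (t + 1) - log t) := by
  refine ⟨convex_Ioi 0, fun x hx y hy a b ha hb hab ↦ ?_⟩
  have hz : 0 < a * x + b * y := convex_Ioi (0 : ℝ) hx hy ha hb hab
  have hx : 0 < x := hx
  have hy : 0 < y := hy
  set z := a * x + b * y with hz_def
  have hlog := strictConcaveOn_log_Ioi.concaveOn.2 (mem_Ioi.2 (show 0 < (x + 1) / x by positivity))
    (mem_Ioi.2 (show 0 < (y + 1) / y by positivity)) (show 0 ≤ a * x / z by positivity)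
    (show 0 ≤ b * y / z by positivity) (by rw [← add_div, ← hz_def, div_self hz.ne'])
  have hmean : a * x / z * ((x + 1) / x) + b * y / z * ((y + 1) / y) = (z + 1) / z := by
    field_simp
    linear_combination hab - hz_def
  simp only [smul_eq_mul, hmean] at hlog ⊢
  rw [log_div (by positivity) hx.ne', log_div (by positivity) hy.ne',
    log_div (by positivity) hz.ne'] at hlog
  calc a * (x * (log (x + 1) - log x)) + b * (y * (log (y + 1) - log y))
      = z * (a * x / z * (log (x + 1) - log x) + b * y / z * (log (y + 1) - log y)) := by
        field_simp
    _ ≤ z * (log (z + 1) - log z) := by gcongr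

lemma concaveOn_comp_add_nat {f : ℝ → ℝ} (hf : ConcaveOn ℝ (Ioi 0) f) (n : ℕ) :
    ConcaveOn ℝ (Ioi 0) fun s ↦ f (s + n) :=
  (hf.translate_left (n : ℝ)).subset (fun s (hs : 0 < s) ↦ show 0 < n + s by positivity)
    (convex_Ioi 0)

lemma concaveOn_sum_mul_log_add_one_sub_log (n : ℕ) :
    ConcaveOn ℝ (Ioi 0) fun s ↦
      ∑ k ∈ Finset.range n, (s + k) * (log (s + k + 1) - log (s + k)) := by
  induction n with
  | zero => simpa using concaveOn_const 0 (convex_Ioi (0 : ℝ))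
  | succ n ih =>
    simp only [Finset.sum_range_succ]
    exact ih.add (concaveOn_comp_add_nat concaveOn_mul_log_add_one_sub_log n)

lemma logGammaSeq_add_log_sub_mul_log (s : ℝ) (n : ℕ) :
    BohrMollerup.logGammaSeq s n + log s - s * log s =
      ∑ k ∈ Finset.range n, (s + k) * (log (s + k + 1) - log (s + k)) +
        (negMulLog (s + n) + (s * log n + log n.factorial)) := by
  have sum_eq (n : ℕ) : ∑ k ∈ Finset.range n, (s + k) * (log (s + k + 1) - log (s + k)) =
      (s + n) * log (s + n) - s * log s + log s - ∑ k ∈ Finset.range (n + 1), log (s + k) := by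
    induction n with
    | zero => simp
    | succ n ih =>
      rw [Finset.sum_range_succ, Finset.sum_range_succ _ (n + 1), ih]
      push_cast
      rw [← add_assoc]
      ring
  rw [sum_eq, BohrMollerup.logGammaSeq, negMulLog]
  ring

lemma concaveOn_logGammaSeq_add_log_sub_mul_log (n : ℕ) :
    ConcaveOn ℝ (Ioi 0) fun s ↦ BohrMollerup.logGammaSeq s n + log s - s * log s := by
  simp only [logGammaSeq_add_log_sub_mul_log]
  have hlin : ConcaveOn ℝ (Ioi 0) fun s : ℝ ↦ s * log n + log n.factorial :=
    ⟨convex_Ioi 0, fun x _ y _ a b _ _ hab ↦ le_of_eq <| by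
      simp only [smul_eq_mul]
      linear_combination log n.factorial * hab⟩
  exact (concaveOn_sum_mul_log_add_one_sub_log n).add <|
    (concaveOn_comp_add_nat (concaveOn_negMulLog.subset Ioi_subset_Ici_self (convex_Ioi 0)) n).add
      hlin

lemma concaveOn_gammaDefect : ConcaveOn ℝ (Ioi 0) gammaDefect := by
  have htendsto {s : ℝ} (hs : s ∈ Ioi 0) :
      Tendsto (fun n ↦ BohrMollerup.logGammaSeq s n + log s - s * log s) atTop
        (𝓝 (gammaDefect s)) := by
    rw [gammaDefect, Gamma_add_one (ne_of_gt hs), log_mul (ne_of_gt hs) (Gamma_pos_of_pos hs).ne',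
      add_comm (log s)]
    exact ((BohrMollerup.tendsto_log_gamma hs).add_const _).sub_const _
  refine ⟨convex_Ioi 0, fun x hx y hy a b ha hb hab ↦ ?_⟩
  exact le_of_tendsto_of_tendsto' (((htendsto hx).const_smul a).add ((htendsto hy).const_smul b))
    (htendsto (convex_Ioi (0 : ℝ) hx hy ha hb hab))
    fun n ↦ (concaveOn_logGammaSeq_add_log_sub_mul_log n).2 hx hy ha hb hab

lemma div_le_div_of_concaveOn {F : ℝ → ℝ} (hF : ConcaveOn ℝ (Ioi 0) F) {r s t : ℝ} (hr : 0 < r)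
    (hrs : r < s) (hst : s ≤ t) (h : F s / s ≤ F r / r) : F t / t ≤ F s / s := by
  rcases hst.eq_or_lt with rfl | hst
  · rfl
  have hs : 0 < s := hr.trans hrs
  have hslope : (F t - F s) / (t - s) ≤ F s / s :=
    calc (F t - F s) / (t - s)
        ≤ (F s - F r) / (s - r) := hF.slope_anti_adjacent hr (hs.trans hst) hrs hst
      _ ≤ F s / s := by
          rw [div_le_div_iff₀ hs hr] at h
          rw [div_le_div_iff₀ (sub_pos.2 hrs) hs]
          linarith
  rw [div_le_div_iff₀ (sub_pos.2 hst) hs] at hslope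
  rw [div_le_div_iff₀ (hs.trans hst) hs]
  linarith

lemma antitoneOn_div_of_concaveOn {F : ℝ → ℝ} (hF : ConcaveOn ℝ (Ioi 0) F) {r Q : ℝ} (hr : 0 < r)
    (hrQ : r < Q) (h : F Q / Q ≤ F r / r) : AntitoneOn (fun s ↦ F s / s) (Ici Q) := by
  intro q hq p _ hqp
  rcases (mem_Ici.1 hq).eq_or_lt with rfl | hQq
  · exact div_le_div_of_concaveOn hF hr hrQ hqp h
  · exact div_le_div_of_concaveOn hF (hr.trans hrQ) hQq hqp
      (div_le_div_of_concaveOn hF hr hrQ hQq.le h)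

lemma antitoneOn_gammaDefect_sub_div {D r Q : ℝ} (hr : 0 < r) (hrQ : r < Q)
    (hD : D * (Q - r) ≤ Q * gammaDefect r - r * gammaDefect Q) :
    AntitoneOn (fun s ↦ (gammaDefect s - D) / s) (Ici Q) := by
  have hconc : ConcaveOn ℝ (Ioi 0) fun s ↦ gammaDefect s - D :=
    concaveOn_gammaDefect.add_const (-D)
  refine antitoneOn_div_of_concaveOn hconc hr hrQ ?_
  rw [div_le_div_iff₀ (hr.trans hrQ) hr]
  linarith

lemma gammaDefect_natCast (n : ℕ) : gammaDefect n = log (n.factorial / (n : ℝ) ^ n) := by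
  rcases n.eq_zero_or_pos with rfl | hn
  · simp [gammaDefect]
  · rw [gammaDefect, Gamma_nat_eq_factorial, log_div (by positivity) (by positivity), log_pow]

lemma two_mul_gammaDefect_natCast_add_half (k : ℕ) :
    2 * gammaDefect (k + 1 / 2) = log (((2 * k + 1).doubleFactorial / 2 ^ (k + 1)) ^ 2 * π /
      ((k : ℝ) + 1 / 2) ^ (2 * k + 1)) := by
  rw [gammaDefect, add_right_comm, Gamma_nat_add_one_add_half, mul_div_right_comm,
    log_div (by positivity) (by positivity), log_mul (by positivity) (by positivity),
    log_mul (by positivity) (by positivity), log_sqrt pi_pos.le, log_pow, log_pow]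
  push_cast
  ring

lemma bernoulliKL_natCast_div_add_one_le_log {n : ℕ} (hn : 0 < n) {E : ℝ} (hE : 0 < E)
    (h : 2.72 ^ n * n ^ n ≤ ((n : ℝ) + 1) ^ (n + 1) * 0.63 * E ^ (n + 1)) :
    bernoulliKL (n / (n + 1)) (exp (-1)) ≤ log E := by
  have hexp : 0.63 ≤ 1 - exp (-1) := by linarith [exp_neg_one_lt_d9]
  have hKL : (n + 1) * bernoulliKL (n / (n + 1)) (exp (-1)) =
      n + n * log n - (n + 1) * log (n + 1) - log (1 - exp (-1)) := by
    have hW : 1 - (n : ℝ) / (n + 1) = 1 / (n + 1) := by field_simp; ring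
    rw [bernoulliKL, hW, log_div (by positivity) (by positivity), log_exp,
      log_div (by positivity) (by positivity), log_div (by positivity) (by linarith),
      log_div (by positivity) (by positivity), log_one]
    field_simp
    ring
  have hlog : log (exp 1 ^ n * n ^ n) ≤
      log (((n : ℝ) + 1) ^ (n + 1) * (1 - exp (-1)) * E ^ (n + 1)) := by
    refine log_le_log (by positivity) (le_trans ?_ (h.trans ?_))
    · gcongr
      linarith [exp_one_lt_d9]
    · gcongr
  have hsub : 0 < 1 - exp (-1) := by linarith
  rw [log_mul (by positivity) (by positivity), log_mul (by positivity) (by positivity),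
    log_mul (by positivity) (by positivity), log_pow, log_pow, log_pow, log_pow, log_exp] at hlog
  push_cast at hlog
  have hmul : (n + 1) * bernoulliKL (n / (n + 1)) (exp (-1)) ≤ (n + 1) * log E := by linarith
  exact le_of_mul_le_mul_left hmul (by positivity)

lemma log_mul_half_le_gammaDefect (k : ℕ) {E : ℝ} (hE : 0 < E)
    (h : E * ((k + 1).factorial / ((k : ℝ) + 1) ^ (k + 1)) ^ (2 * k + 1) ≤
      (((2 * k + 1).doubleFactorial / 2 ^ (k + 1)) ^ 2 * 3.14 /
        ((k : ℝ) + 1 / 2) ^ (2 * k + 1)) ^ (k + 1)) :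
    log E * ((k + 1) - (k + 1 / 2)) ≤
      (k + 1) * gammaDefect (k + 1 / 2) - (k + 1 / 2) * gammaDefect (k + 1) := by
  have hhalf := two_mul_gammaDefect_natCast_add_half k
  have hnat := gammaDefect_natCast (k + 1)
  push_cast at hnat
  have hlog : log (E * ((k + 1).factorial / ((k : ℝ) + 1) ^ (k + 1)) ^ (2 * k + 1)) ≤
      log ((((2 * k + 1).doubleFactorial / 2 ^ (k + 1)) ^ 2 * π /
        ((k : ℝ) + 1 / 2) ^ (2 * k + 1)) ^ (k + 1)) := by
    refine log_le_log (by positivity) (h.trans ?_)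
    gcongr
    exact pi_gt_d2.le
  rw [log_mul (by positivity) (by positivity), log_pow, log_pow, ← hnat, ← hhalf] at hlog
  push_cast at hlog
  linarith

lemma one_le_gammaDefect_three_four : 1 * (4 - 3) ≤ 4 * gammaDefect 3 - 3 * gammaDefect 4 := by
  have h3 := gammaDefect_natCast 3
  have h4 := gammaDefect_natCast 4
  push_cast at h3 h4
  rw [h3, h4, ← log_rpow (by positivity), ← log_rpow (by positivity),
    ← log_div (by positivity) (by positivity), le_log_iff_exp_le (by positivity)]
  norm_num [Nat.factorial]
  linarith [exp_one_lt_d9]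

/-! ### Log-concave functions on the line -/

lemma exists_mem_le_of_setIntegral_le {α : Type*} [MeasurableSpace α] {μ : Measure α}
    {f g : α → ℝ} {s : Set α} (hs : MeasurableSet s) (hμ : μ s ≠ 0) (hf : IntegrableOn f s μ)
    (hg : IntegrableOn g s μ) (h : ∫ x in s, g x ∂μ ≤ ∫ x in s, f x ∂μ) :
    ∃ x ∈ s, g x ≤ f x := by
  by_contra! hlt
  have hpos : 0 < ∫ x in s, (g x - f x) ∂μ := by
    rw [setIntegral_pos_iff_support_of_nonneg_ae
      ((ae_restrict_mem hs).mono fun x hx ↦ sub_nonneg.2 (hlt x hx).le) (hg.sub hf)]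
    refine (pos_iff_ne_zero.2 hμ).trans_le (measure_mono fun x hx ↦ ⟨?_, hx⟩)
    exact (sub_pos.2 (hlt x hx)).ne'
  rw [integral_sub hg hf] at hpos
  linarith

lemma integrableOn_exp_add_mul_Ioi {c κ t : ℝ} (hκ : κ < 0) :
    IntegrableOn (fun u ↦ exp (c + κ * u)) (Ioi t) := by
  simp only [exp_add]
  exact (integrableOn_exp_mul_Ioi hκ t).const_mul (exp c)

lemma integral_exp_add_log_add_mul_Ioi {c κ t : ℝ} (hκ : κ < 0) :
    ∫ u in Ioi t, exp (c + log (-κ) + κ * u) = exp (c + κ * t) := by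
  simp only [exp_add, exp_log (neg_pos.2 hκ)]
  rw [integral_const_mul, integral_exp_mul_Ioi hκ]
  field_simp [hκ.ne]

/-- A nonnegative function `f` on the real line is log-concave if `log f` is concave, as a function
with values in `[-∞, ∞)`. -/
def LogConcaveFn (f : ℝ → ℝ) : Prop :=
  (∀ x, 0 ≤ f x) ∧
    ∀ x y l : ℝ, 0 ≤ l → l ≤ 1 → f x ^ l * f y ^ (1 - l) ≤ f (l * x + (1 - l) * y)

namespace LogConcaveFn

variable {f : ℝ → ℝ} {x y z : ℝ}

lemma nonneg (hf : LogConcaveFn f) (x : ℝ) : 0 ≤ f x := hf.1 x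

lemma exp_add_mul_le (hf : LogConcaveFn f) {c κ : ℝ} (hx : exp (c + κ * x) ≤ f x)
    (hz : exp (c + κ * z) ≤ f z) (hy : y ∈ Icc x z) : exp (c + κ * y) ≤ f y := by
  rw [← segment_eq_Icc (hy.1.trans hy.2)] at hy
  obtain ⟨a, b, ha, hb, hab, rfl⟩ := hy
  obtain rfl := eq_sub_of_add_eq' hab
  calc exp (c + κ * (a • x + (1 - a) • z))
      = exp (c + κ * x) ^ a * exp (c + κ * z) ^ (1 - a) := by
        rw [← exp_mul, ← exp_mul, ← exp_add]
        simp only [smul_eq_mul]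
        ring_nf
    _ ≤ f x ^ a * f z ^ (1 - a) := by
        gcongr
        exact rpow_nonneg (hf.nonneg x) a
    _ ≤ f (a • x + (1 - a) • z) := hf.2 x z a ha (sub_nonneg.1 hb)

lemma of_exp_add_mul_le (hf : ∀ x, 0 ≤ f x)
    (h : ∀ ⦃c κ x y z⦄, x < y → y < z → exp (c + κ * x) ≤ f x → exp (c + κ * z) ≤ f z →
      exp (c + κ * y) ≤ f y) : LogConcaveFn f := by
  refine ⟨hf, fun x y l hl hl' ↦ ?_⟩
  wlog hxy : x ≤ y generalizing x y l
  · have := this y x (1 - l) (sub_nonneg.2 hl') (sub_le_self 1 hl) (le_of_not_ge hxy)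
    rwa [sub_sub_cancel, mul_comm, add_comm] at this
  rcases hl.eq_or_lt with rfl | hl
  · simp
  rcases hl'.eq_or_lt with rfl | hl'
  · simp
  rcases hxy.eq_or_lt with rfl | hxy
  · rw [← add_mul, add_sub_cancel, one_mul]
    rcases (hf x).eq_or_lt with hfx | hfx
    · rw [← hfx, zero_rpow hl.ne', zero_mul]
    · rw [← rpow_add hfx, add_sub_cancel, rpow_one]
  rcases (hf x).eq_or_lt with hfx | hfx
  · rw [← hfx, zero_rpow hl.ne', zero_mul]
    exact hf _
  rcases (hf y).eq_or_lt with hfy | hfy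
  · rw [← hfy, zero_rpow (sub_pos.2 hl').ne', mul_zero]
    exact hf _
  set κ := (log (f y) - log (f x)) / (y - x)
  have hslope : κ * (y - x) = log (f y) - log (f x) := div_mul_cancel₀ _ (sub_pos.2 hxy).ne'
  have hlow : x < l * x + (1 - l) * y := by nlinarith
  have hhigh : l * x + (1 - l) * y < y := by nlinarith
  have hchord := h (c := log (f x) - κ * x) (κ := κ) hlow hhigh
    (by rw [sub_add_cancel, exp_log hfx])
    (by rw [show log (f x) - κ * x + κ * y = log (f y) by linarith, exp_log hfy])
  refine le_trans (le_of_eq ?_) hchord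
  rw [rpow_def_of_pos hfx, rpow_def_of_pos hfy, ← exp_add]
  congr 1
  linear_combination (l - 1) * hslope

lemma log_le (hf : LogConcaveFn f) (hx : 0 < f x) (hz : 0 < f z) (hy : y ∈ Icc x z) :
    (z - y) * log (f x) + (y - x) * log (f z) ≤ (z - x) * log (f y) := by
  have hxz : x ≤ z := hy.1.trans hy.2
  rw [← segment_eq_Icc hxz] at hy
  obtain ⟨a, b, ha, hb, hab, rfl⟩ := hy
  obtain rfl := eq_sub_of_add_eq' hab
  have hlog := log_le_log (by positivity) (hf.2 x z a ha (sub_nonneg.1 hb))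
  rw [log_mul (by positivity) (by positivity), log_rpow hx, log_rpow hz] at hlog
  simp only [smul_eq_mul]
  linarith [mul_le_mul_of_nonneg_left hlog (sub_nonneg.2 hxz)]

lemma comp_neg (hf : LogConcaveFn f) : LogConcaveFn fun x ↦ f (-x) := by
  refine ⟨fun x ↦ hf.nonneg (-x), fun x y l hl hl' ↦ ?_⟩
  convert hf.2 (-x) (-y) l hl hl' using 2
  ring

lemma measurable (hf : LogConcaveFn f) : Measurable f := by
  refine measurable_of_Ici fun a ↦ ?_
  rcases le_or_gt a 0 with ha | ha
  · rw [preimage_eq_univ_iff.2 (by rintro _ ⟨x, rfl⟩; exact ha.trans (hf.nonneg x))]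
    exact .univ
  · refine OrdConnected.measurableSet ⟨fun x (hx : a ≤ f x) z (hz : a ≤ f z) y hy ↦ ?_⟩
    have hchord := hf.exp_add_mul_le (c := log a) (κ := 0) (x := x) (z := z) (y := y)
    simp only [zero_mul, add_zero, exp_log ha] at hchord
    exact hchord hx hz hy

lemma setIntegral_Ioi (hf : LogConcaveFn f) (hint : Integrable f) :
    LogConcaveFn fun t ↦ ∫ x in Ioi t, f x := by
  have hint_on (s : Set ℝ) : IntegrableOn f s := hint.integrableOn
  refine of_exp_add_mul_le (fun t ↦ setIntegral_nonneg measurableSet_Ioi fun x _ ↦ hf.nonneg x) ?_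
  intro c κ x y z hxy hyz hx hz
  rcases le_or_gt 0 κ with hκ | hκ
  · calc exp (c + κ * y) ≤ exp (c + κ * z) := by gcongr
      _ ≤ ∫ t in Ioi z, f t := hz
      _ ≤ ∫ t in Ioi y, f t := setIntegral_mono_set (hint_on _)
          (Eventually.of_forall hf.nonneg) (Ioi_subset_Ioi hyz.le).eventuallyLE
  set g : ℝ → ℝ := fun t ↦ exp (c + log (-κ) + κ * t)
  have hg_int (t : ℝ) : IntegrableOn g (Ioi t) := integrableOn_exp_add_mul_Ioi hκ
  have hsplit {h : ℝ → ℝ} {a b : ℝ} (hab : a ≤ b) (hh : IntegrableOn h (Ioi a)) :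
      ∫ t in Ioi a, h t = (∫ t in Ioc a b, h t) + ∫ t in Ioi b, h t := by
    rw [← intervalIntegral.integral_of_le hab, ← intervalIntegral.integral_Ioi_sub_Ioi hh hab,
      sub_add_cancel]
  rw [← integral_exp_add_log_add_mul_Ioi hκ] at hx hz ⊢
  by_contra! hy
  obtain ⟨v, hv, hgv⟩ : ∃ v ∈ Ioc x y, g v ≤ f v := by
    refine exists_mem_le_of_setIntegral_le measurableSet_Ioc (by simp [hxy]) (hint_on _)
      ((hg_int x).mono_set Ioc_subset_Ioi_self) ?_
    rw [hsplit hxy.le (hg_int x), hsplit hxy.le (hint_on _)] at hx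
    linarith
  obtain ⟨w, hw, hgw⟩ : ∃ w ∈ Ioi z, g w ≤ f w :=
    exists_mem_le_of_setIntegral_le measurableSet_Ioi (by simp) (hint_on _) (hg_int z) hz
  have hyz_int : ∫ t in Ioc y z, g t ≤ ∫ t in Ioc y z, f t :=
    setIntegral_mono_on ((hg_int y).mono_set Ioc_subset_Ioi_self) (hint_on _) measurableSet_Ioc
      fun t ht ↦ hf.exp_add_mul_le hgv hgw
        ⟨hv.2.trans ht.1.le, ht.2.trans (le_of_lt hw)⟩
  rw [hsplit hyz.le (hg_int y), hsplit hyz.le (hint_on _)] at hy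
  linarith

end LogConcaveFn

lemma setIntegral_rpow_mul_le_of_crossing {f g : ℝ → ℝ} {p q x : ℝ} (hx : 0 < x) (hqp : q ≤ p)
    (hfp : IntegrableOn (fun t ↦ t ^ (p - 1) * f t) (Ioi 0))
    (hgp : IntegrableOn (fun t ↦ t ^ (p - 1) * g t) (Ioi 0))
    (hfq : IntegrableOn (fun t ↦ t ^ (q - 1) * f t) (Ioi 0))
    (hgq : IntegrableOn (fun t ↦ t ^ (q - 1) * g t) (Ioi 0))
    (hbelow : ∀ t ∈ Ioo 0 x, g t ≤ f t) (habove : ∀ t ∈ Ioi x, f t ≤ g t)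
    (h : ∫ t in Ioi 0, t ^ (p - 1) * g t ≤ ∫ t in Ioi 0, t ^ (p - 1) * f t) :
    ∫ t in Ioi 0, t ^ (q - 1) * g t ≤ ∫ t in Ioi 0, t ^ (q - 1) * f t := by
  have hpointwise : ∀ t ∈ Ioi (0 : ℝ), x ^ (q - p) * (t ^ (p - 1) * f t - t ^ (p - 1) * g t) ≤
      t ^ (q - 1) * f t - t ^ (q - 1) * g t := by
    intro t (ht : 0 < t)
    have hsign : 0 ≤ (t ^ (q - p) - x ^ (q - p)) * (f t - g t) := by
      rcases lt_trichotomy t x with htx | rfl | hxt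
      · exact mul_nonneg
          (sub_nonneg.2 (rpow_le_rpow_of_nonpos ht htx.le (sub_nonpos.2 hqp)))
          (sub_nonneg.2 (hbelow t ⟨ht, htx⟩))
      · simp
      · exact mul_nonneg_of_nonpos_of_nonpos
          (sub_nonpos.2 (rpow_le_rpow_of_nonpos hx hxt.le (sub_nonpos.2 hqp)))
          (sub_nonpos.2 (habove t hxt))
    have hsplit : t ^ (q - 1) = t ^ (q - p) * t ^ (p - 1) := by
      rw [← rpow_add ht, sub_add_sub_cancel]
    rw [hsplit]
    linarith [mul_nonneg (rpow_nonneg ht.le (p - 1)) hsign]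
  have hint := setIntegral_mono_on ((hfp.sub hgp).const_mul _) (hfq.sub hgq) measurableSet_Ioi
    hpointwise
  rw [integral_const_mul] at hint
  simp only [Pi.sub_apply] at hint
  rw [integral_sub hfp hgp, integral_sub hfq hgq] at hint
  exact sub_nonneg.1 ((mul_nonneg (by positivity) (sub_nonneg.2 h)).trans hint)

/-- The Mellin transform of `R` on the positive half-line divided by that of `exp (-t)`, which makes
it equal to `ρ * (1 / l) ^ s` for `R t = ρ * exp (-(l * t))`. -/
noncomputable def normalizedMellin (R : ℝ → ℝ) (s : ℝ) : ℝ :=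
  (∫ t in Ioi 0, t ^ (s - 1) * R t) / Gamma s

lemma integrableOn_rpow_mul_exp {s l : ℝ} (C : ℝ) (hs : 0 < s) (hl : 0 < l) :
    IntegrableOn (fun t ↦ t ^ (s - 1) * (C * exp (-l * t))) (Ioi 0) := by
  refine IntegrableOn.congr_fun ((integrableOn_rpow_mul_exp_neg_mul_rpow
    (by linarith : -1 < s - 1) one_pos hl).const_mul C) (fun t _ ↦ ?_) measurableSet_Ioi
  simp only [rpow_one]
  ring

lemma normalizedMellin_mul_exp {s l : ℝ} (C : ℝ) (hs : 0 < s) (hl : 0 < l) :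
    normalizedMellin (fun t ↦ C * exp (-l * t)) s = C * (1 / l) ^ s := by
  rw [normalizedMellin, div_eq_iff (Gamma_pos_of_pos hs).ne', mul_assoc,
    ← integral_rpow_mul_exp_neg_mul_Ioi hs hl, ← integral_const_mul]
  congr 1 with t
  rw [neg_mul]
  ring

lemma integral_one_sub_mul_exp_mul {ρ l T : ℝ} (hl : l ≠ 0) :
    ∫ t in (0 : ℝ)..T, (1 - ρ * exp (l * t)) = T - ρ * (exp (l * T) - 1) / l := by
  rw [intervalIntegral.integral_sub (by simp)
    (Continuous.intervalIntegrable (by fun_prop) _ _), intervalIntegral.integral_const_mul,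
    intervalIntegral.integral_comp_mul_left _ hl, integral_exp]
  simp only [integral_one, sub_zero, mul_zero, exp_zero, smul_eq_mul]
  ring

namespace LogConcaveFn

variable {R : ℝ → ℝ}

lemma mul_exp_le (hR : LogConcaveFn R) {ρ κ x y z : ℝ} (hρ : 0 < ρ) (hx : ρ * exp (κ * x) ≤ R x)
    (hz : ρ * exp (κ * z) ≤ R z) (hy : y ∈ Icc x z) : ρ * exp (κ * y) ≤ R y := by
  have hchord := hR.exp_add_mul_le (c := log ρ) (κ := κ) (x := x) (y := y) (z := z)
  simp only [exp_add, exp_log hρ] at hchord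
  exact hchord hx hz hy

lemma exists_le_exp (hR : LogConcaveFn R) (hanti : Antitone R) (hlim : Tendsto R atTop (𝓝 0)) :
    ∃ C l, 0 < l ∧ ∀ t, 0 < t → R t ≤ C * exp (-l * t) := by
  rcases (hR.nonneg 0).eq_or_lt with h0 | h0
  · exact ⟨0, 1, one_pos, fun t ht ↦ by rw [zero_mul, h0]; exact hanti ht.le⟩
  obtain ⟨x, hx, hx0⟩ : ∃ x, R x < R 0 / 2 ∧ 0 < x :=
    ((hlim.eventually_lt_const (half_pos h0)).and (eventually_gt_atTop 0)).exists
  set l := log 2 / x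
  have hl : 0 < l := div_pos (log_pos one_lt_two) hx0
  have hlx : exp (-l * x) = 1 / 2 := by
    rw [neg_mul, div_mul_cancel₀ _ hx0.ne', exp_neg, exp_log two_pos, one_div]
  refine ⟨R 0 * 2, l, hl, fun t ht ↦ ?_⟩
  rcases le_or_gt t x with htx | hxt
  · calc R t ≤ R 0 := hanti ht.le
      _ = R 0 * 2 * exp (-l * x) := by rw [hlx]; ring
      _ ≤ R 0 * 2 * exp (-l * t) := by
        gcongr R 0 * 2 * exp ?_
        nlinarith
  · have hle : R t ≤ R 0 * exp (-l * t) := by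
      by_contra! hlt
      have hchord : R 0 * exp (-l * x) ≤ R x :=
        hR.mul_exp_le h0 (by simp) hlt.le ⟨hx0.le, hxt.le⟩
      rw [hlx] at hchord
      linarith
    refine hle.trans ?_
    gcongr
    linarith

lemma integrableOn_rpow_mul (hR : LogConcaveFn R) (hanti : Antitone R)
    (hlim : Tendsto R atTop (𝓝 0)) {s : ℝ} (hs : 0 < s) :
    IntegrableOn (fun t ↦ t ^ (s - 1) * R t) (Ioi 0) := by
  obtain ⟨C, l, hl, hbound⟩ := hR.exists_le_exp hanti hlim
  refine (integrableOn_rpow_mul_exp C hs hl).mono'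
    ((measurable_id.pow_const _).mul hR.measurable).aestronglyMeasurable ?_
  filter_upwards [ae_restrict_mem measurableSet_Ioi] with t (ht : 0 < t)
  rw [norm_of_nonneg (mul_nonneg (by positivity) (hR.nonneg t))]
  gcongr
  exact hbound t ht

lemma exists_crossing_mul_exp (hR : LogConcaveFn R) {ρ κ s : ℝ} (hρ : 0 < ρ) (h0 : ρ ≤ R 0)
    (hs : 0 < s) (hRs : ρ * exp (κ * s) ≤ R s) :
    (∀ t, 0 < t → ρ * exp (κ * t) ≤ R t) ∨
      ∃ x, 0 < x ∧ (∀ t ∈ Ioo 0 x, ρ * exp (κ * t) ≤ R t) ∧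
        ∀ t ∈ Ioi x, R t ≤ ρ * exp (κ * t) := by
  set S := {t | 0 < t ∧ ρ * exp (κ * t) ≤ R t}
  have hdown {t u : ℝ} (ht : 0 < t) (htu : t < u) (hu : u ∈ S) : ρ * exp (κ * t) ≤ R t :=
    hR.mul_exp_le hρ (by simpa using h0) hu.2 ⟨ht.le, htu.le⟩
  have hsS : s ∈ S := ⟨hs, hRs⟩
  by_cases hbdd : BddAbove S
  · have hpos : 0 < sSup S := hs.trans_le (le_csSup hbdd hsS)
    refine .inr ⟨sSup S, hpos, fun t ht ↦ ?_, fun t ht ↦ ?_⟩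
    · obtain ⟨u, hu, htu⟩ := exists_lt_of_lt_csSup ⟨s, hsS⟩ ht.2
      exact hdown ht.1 htu hu
    · by_contra! hlt
      exact notMem_of_csSup_lt ht hbdd ⟨hpos.trans ht, hlt.le⟩
  · refine .inl fun t ht ↦ ?_
    obtain ⟨u, hu, htu⟩ := not_bddAbove_iff.1 hbdd t
    exact hdown ht htu hu

lemma normalizedMellin_nonneg (hR : LogConcaveFn R) {s : ℝ} (hs : 0 < s) :
    0 ≤ normalizedMellin R s :=
  div_nonneg (setIntegral_nonneg measurableSet_Ioi fun t (ht : 0 < t) ↦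
    mul_nonneg (by positivity) (hR.nonneg t)) (Gamma_pos_of_pos hs).le

-- `R` and the exponential cross at most once on the positive half-line.
lemma mul_rpow_le_normalizedMellin (hR : LogConcaveFn R) (hanti : Antitone R)
    (hlim : Tendsto R atTop (𝓝 0)) (h0 : 0 < R 0) {l p q : ℝ} (hl : 0 < l) (hq : 0 < q)
    (hqp : q ≤ p) (h : R 0 * (1 / l) ^ p ≤ normalizedMellin R p) :
    R 0 * (1 / l) ^ q ≤ normalizedMellin R q := by
  have hp : 0 < p := hq.trans_le hqp
  have hint {s : ℝ} (hs : 0 < s) := hR.integrableOn_rpow_mul hanti hlim hs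
  have hexp_int {s : ℝ} (hs : 0 < s) := integrableOn_rpow_mul_exp (R 0) hs hl
  rw [← normalizedMellin_mul_exp _ hp hl, normalizedMellin, normalizedMellin,
    div_le_div_iff_of_pos_right (Gamma_pos_of_pos hp)] at h
  rw [← normalizedMellin_mul_exp _ hq hl, normalizedMellin, normalizedMellin,
    div_le_div_iff_of_pos_right (Gamma_pos_of_pos hq)]
  obtain ⟨s, hs, hs_le⟩ := exists_mem_le_of_setIntegral_le measurableSet_Ioi
    (by simp) (hint hp) (hexp_int hp) h
  rcases hR.exists_crossing_mul_exp h0 le_rfl hs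
    (le_of_mul_le_mul_left hs_le (rpow_pos_of_pos hs _)) with hle | ⟨x, hx, hbelow, habove⟩
  · exact setIntegral_mono_on (hexp_int hq) (hint hq) measurableSet_Ioi fun t (ht : 0 < t) ↦
      mul_le_mul_of_nonneg_left (hle t ht) (rpow_nonneg ht.le _)
  · exact setIntegral_rpow_mul_le_of_crossing hx hqp (hint hp) (hexp_int hp) (hint hq)
      (hexp_int hq) hbelow habove h

lemma rpow_mul_normalizedMellin_rpow_le (hR : LogConcaveFn R) (hanti : Antitone R)
    (hlim : Tendsto R atTop (𝓝 0)) (h0 : 0 < R 0) {p q : ℝ} (hq : 0 < q) (hqp : q ≤ p) :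
    R 0 ^ (1 - q / p) * normalizedMellin R p ^ (q / p) ≤ normalizedMellin R q := by
  have hp : 0 < p := hq.trans_le hqp
  rcases (hR.normalizedMellin_nonneg hp).eq_or_lt with hMp | hMp
  · rw [← hMp, zero_rpow (by positivity), mul_zero]
    exact hR.normalizedMellin_nonneg hq
  set l := (R 0 / normalizedMellin R p) ^ (1 / p)
  have hl_pow (s : ℝ) : (1 / l) ^ s = (normalizedMellin R p / R 0) ^ (s / p) := by
    rw [one_div, ← inv_rpow (by positivity), inv_div, ← rpow_mul (by positivity),
      one_div_mul_eq_div]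
  calc R 0 ^ (1 - q / p) * normalizedMellin R p ^ (q / p) = R 0 * (1 / l) ^ q := by
        rw [hl_pow, div_rpow hMp.le h0.le, rpow_sub h0, rpow_one, div_mul_comm, mul_comm]
    _ ≤ normalizedMellin R q := by
        refine hR.mul_rpow_le_normalizedMellin hanti hlim h0 (by positivity) hq hqp ?_
        rw [hl_pow, div_self hp.ne', rpow_one, mul_div_cancel₀ _ h0.ne']

lemma le_mul_exp_of_nonpos (hR : LogConcaveFn R) {κ t x : ℝ} (h0 : 0 < R 0) (hx : 0 < x)
    (hRx : R 0 * exp (κ * x) ≤ R x) (ht : t ≤ 0) : R t ≤ R 0 * exp (κ * t) := by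
  rcases (hR.nonneg t).eq_or_lt with hRt | hRt
  · rw [← hRt]
    positivity
  have hexp : 0 < R 0 * exp (κ * x) := by positivity
  have hlog_x := log_le_log hexp hRx
  have hlog := hR.log_le hRt (hexp.trans_le hRx) ⟨ht, hx.le⟩
  rw [log_mul h0.ne' (exp_pos _).ne', log_exp] at hlog_x
  rw [← log_le_log_iff hRt (by positivity), log_mul h0.ne' (exp_pos _).ne', log_exp]
  refine le_of_mul_le_mul_left ?_ hx
  linarith [mul_le_mul_of_nonpos_left hlog_x ht]

lemma exp_neg_one_le_apply_zero (hR : LogConcaveFn R) (hanti : Antitone R) (hle : ∀ t, R t ≤ 1)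
    (hint : IntegrableOn R (Ioi 0)) (hint' : IntegrableOn (fun t ↦ 1 - R (-t)) (Ioi 0))
    (hpos : 0 < ∫ t in Ioi 0, R t)
    (h : ∫ t in Ioi 0, (1 - R (-t)) ≤ ∫ t in Ioi 0, R t) : exp (-1) ≤ R 0 := by
  set m := ∫ t in Ioi 0, R t
  have h0 : 0 < R 0 := by
    by_contra! h0
    exact hpos.not_ge (setIntegral_nonpos measurableSet_Ioi fun t ht ↦
      (hanti (le_of_lt ht)).trans h0)
  set l := R 0 / m
  have hl : 0 < l := div_pos h0 hpos
  have hexp_int : ∫ t in Ioi 0, R 0 * exp (-l * t) = m := by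
    rw [integral_const_mul, integral_exp_mul_Ioi (neg_lt_zero.2 hl), mul_zero, exp_zero]
    simp only [l]
    field_simp
  obtain ⟨x, hx, hRx⟩ : ∃ x ∈ Ioi 0, R 0 * exp (-l * x) ≤ R x :=
    exists_mem_le_of_setIntegral_le measurableSet_Ioi (by simp) hint
      ((integrableOn_exp_mul_Ioi (neg_lt_zero.2 hl) 0).const_mul _) hexp_int.le
  set T := -log (R 0) / l
  have hlT : l * T = -log (R 0) := mul_div_cancel₀ _ hl.ne'
  have hT : 0 ≤ T := div_nonneg (neg_nonneg.2 (log_nonpos h0.le (hle 0))) hl.le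
  have hT_le : ∫ t in (0 : ℝ)..T, (1 - R 0 * exp (l * t)) ≤ m := by
    rw [intervalIntegral.integral_of_le hT]
    refine le_trans ?_ h
    refine (setIntegral_mono_on (Continuous.integrableOn_Ioc (by fun_prop))
      (hint'.mono_set Ioc_subset_Ioi_self) measurableSet_Ioc fun t ht ↦ ?_).trans
      (setIntegral_mono_set hint' (Eventually.of_forall fun t ↦ sub_nonneg.2 (hle _))
        Ioc_subset_Ioi_self.eventuallyLE)
    have := hR.le_mul_exp_of_nonpos h0 hx hRx (neg_nonpos.2 ht.1.le)
    rw [neg_mul_neg] at this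
    linarith
  rw [integral_one_sub_mul_exp_mul hl.ne', hlT, exp_neg, exp_log h0] at hT_le
  rw [← le_log_iff_exp_le h0]
  calc -1 = l * (T - R 0 * ((R 0)⁻¹ - 1) / l) - l * T - R 0 := by field_simp; ring
    _ ≤ l * m - l * T - R 0 := by gcongr
    _ = log (R 0) := by rw [hlT, div_mul_cancel₀ _ hpos.ne']; ring

end LogConcaveFn

/-! ### Moments of the positive and negative parts -/

lemma Gamma_add_one_le_factorial {n : ℕ} {x : ℝ} (hx : 1 ≤ x) (hxn : x ≤ n) :
    Gamma (x + 1) ≤ n.factorial := by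
  rw [← Gamma_nat_eq_factorial]
  exact Gamma_strictMonoOn_Ici.monotoneOn (mem_Ici.2 (by linarith)) (mem_Ici.2 (by linarith))
    (by linarith)

-- `1.71829` is just above `e - 1`.
lemma one_sub_div_le_of_exp_neg_one_le {a : ℝ} (ha : exp (-1) ≤ a) :
    (1 - a) / a ≤ 1.71829 := by
  have ha0 : 0 < a := (exp_pos _).trans_le ha
  have hinv : a⁻¹ ≤ exp 1 := by
    rw [← inv_inv (exp 1), ← exp_neg]
    exact inv_anti₀ (exp_pos _) ha
  rw [sub_div, div_self ha0.ne', one_div]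
  linarith [exp_one_lt_d9]

section PositiveParts

variable {μ : Measure ℝ}

/-- The survival function `t ↦ P(X > t)` of a random variable `X` with distribution `μ`. -/
noncomputable def survival (μ : Measure ℝ) (t : ℝ) : ℝ := μ.real (Ioi t)

/-- The `s`-th moment `E (X⁺) ^ s / Γ (s + 1)` of the positive part of a random variable `X` with
distribution `μ`, normalized by that of the standard exponential law. -/
noncomputable def posMoment (μ : Measure ℝ) (s : ℝ) : ℝ :=
  (∫ x, x⁺ ^ s ∂μ) / Gamma (s + 1)

/-- The absolute moment `E |X| ^ s / Γ (s + 1)` of a random variable with distribution `μ`,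
normalized by that of the standard exponential law. -/
noncomputable def absMoment (μ : Measure ℝ) (s : ℝ) : ℝ :=
  (∫ x, |x| ^ s ∂μ) / Gamma (s + 1)

/-- Both tails of a random variable with distribution `μ` are log-concave; unlike log-concavity of
a density, this makes sense for every law on the line. -/
structure HasLogConcaveTails (μ : Measure ℝ) : Prop where
  right : LogConcaveFn (survival μ)
  left : LogConcaveFn (survival μ.neg)

lemma HasLogConcaveTails.neg (h : HasLogConcaveTails μ) : HasLogConcaveTails μ.neg :=
  ⟨h.left, by rw [Measure.neg_neg]; exact h.right⟩

lemma integral_neg_measure (g : ℝ → ℝ) : ∫ x, g x ∂μ.neg = ∫ x, g (-x) ∂μ :=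
  (MeasurableEquiv.neg ℝ).measurableEmbedding.integral_map g

instance isProbabilityMeasure_neg [IsProbabilityMeasure μ] : IsProbabilityMeasure μ.neg :=
  Measure.isProbabilityMeasure_map measurable_neg.aemeasurable

lemma integral_id_neg_measure (hmean : ∫ x, x ∂μ = 0) : ∫ x, x ∂μ.neg = 0 := by
  rw [integral_neg_measure, integral_neg, hmean, neg_zero]

lemma posMoment_nonneg {s : ℝ} (hs : 0 < s) : 0 ≤ posMoment μ s :=
  div_nonneg (integral_nonneg fun x ↦ rpow_nonneg (posPart_nonneg x) s)
    (Gamma_pos_of_pos (by linarith)).le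

lemma posMoment_one : posMoment μ 1 = ∫ x, x⁺ ∂μ := by
  simp [posMoment, one_add_one_eq_two]

lemma Gamma_mul_posMoment {s : ℝ} (hs : 0 < s) :
    Gamma (s + 1) * posMoment μ s = ∫ x, x⁺ ^ s ∂μ :=
  mul_div_cancel₀ _ (Gamma_pos_of_pos (by linarith)).ne'

lemma abs_rpow_eq_posPart_rpow_add {s : ℝ} (hs : 0 < s) (x : ℝ) :
    |x| ^ s = x⁺ ^ s + (-x)⁺ ^ s := by
  rcases le_total 0 x with hx | hx
  · rw [abs_of_nonneg hx, posPart_eq_self.2 hx, posPart_eq_zero.2 (neg_nonpos.2 hx),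
      zero_rpow hs.ne', add_zero]
  · rw [abs_of_nonpos hx, posPart_eq_zero.2 hx, posPart_eq_self.2 (neg_nonneg.2 hx),
      zero_rpow hs.ne', zero_add]

lemma momNorm_div_eq_exp {s : ℝ} (hs : 0 < s) (hS : 0 < absMoment μ s) :
    momNorm μ s / s = exp ((gammaDefect s + log (absMoment μ s)) / s) := by
  have hGamma : 0 < Gamma (s + 1) := Gamma_pos_of_pos (by linarith)
  have hint : ∫ x, |x| ^ s ∂μ = Gamma (s + 1) * absMoment μ s :=
    (mul_div_cancel₀ _ hGamma.ne').symm
  rw [div_eq_iff hs.ne']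
  calc momNorm μ s
      = exp ((log (Gamma (s + 1)) + log (absMoment μ s)) * (1 / s)) := by
        rw [momNorm, hint, rpow_def_of_pos (by positivity), log_mul hGamma.ne' hS.ne']
    _ = exp ((gammaDefect s + log (absMoment μ s)) / s + log s) := by
        rw [gammaDefect]
        congr 1
        field_simp
        ring
    _ = exp ((gammaDefect s + log (absMoment μ s)) / s) * s := by rw [exp_add, exp_log hs]

variable [IsProbabilityMeasure μ]

lemma antitone_survival : Antitone (survival μ) := fun _ _ h ↦
  measureReal_mono (Ioi_subset_Ioi h)

lemma survival_eq_one_sub_cdf (t : ℝ) : survival μ t = 1 - ProbabilityTheory.cdf μ t := by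
  rw [ProbabilityTheory.cdf_eq_real, survival, ← compl_Iic,
    probReal_compl_eq_one_sub measurableSet_Iic]

lemma tendsto_survival_atTop : Tendsto (survival μ) atTop (𝓝 0) := by
  have hcdf := (ProbabilityTheory.tendsto_cdf_atTop μ).const_sub 1
  rw [sub_self] at hcdf
  exact hcdf.congr fun t ↦ (survival_eq_one_sub_cdf t).symm

lemma survival_neg (t : ℝ) : survival μ.neg t = 1 - μ.real (Ici (-t)) := by
  rw [survival, measureReal_def, Measure.neg_apply, neg_Ioi, ← measureReal_def, ← compl_Ici,
    probReal_compl_eq_one_sub measurableSet_Ici]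

-- Only `=ᵐ`, since the two sides differ at `t` if `-t` is an atom of `μ`.
lemma one_sub_survival_neg_ae_eq :
    (fun t ↦ 1 - survival μ (-t)) =ᵐ[volume] survival μ.neg := by
  filter_upwards [meas_le_ae_eq_meas_lt μ volume (fun x : ℝ ↦ -x)] with t ht
  have hle : {x : ℝ | t ≤ -x} = Iic (-t) := by ext; simp [le_neg]
  have hlt : {x : ℝ | t < -x} = Iio (-t) := by ext; simp [lt_neg]
  rw [survival, survival, measureReal_def μ.neg, Measure.neg_apply, neg_Ioi, ← hlt, ← ht, hle,
    ← measureReal_def, ← compl_Iic, probReal_compl_eq_one_sub measurableSet_Iic, sub_sub_cancel]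

lemma lintegral_posPart_rpow {s : ℝ} (hs : 0 < s) :
    ∫⁻ x, ENNReal.ofReal (x⁺ ^ s) ∂μ =
      ENNReal.ofReal s * ∫⁻ t in Ioi 0, ENNReal.ofReal (t ^ (s - 1) * survival μ t) := by
  rw [lintegral_rpow_eq_lintegral_meas_lt_mul μ (Eventually.of_forall fun x ↦ posPart_nonneg x)
    measurable_posPart.aemeasurable hs]
  congr 1
  refine setLIntegral_congr_fun measurableSet_Ioi fun t (ht : 0 < t) ↦ ?_
  have hset : {x : ℝ | t < x⁺} = Ioi t := by
    ext x
    simp [posPart_def, ht.not_gt]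
  simp only [hset]
  rw [ENNReal.ofReal_mul (by positivity), survival, ofReal_measureReal, mul_comm]

lemma posMoment_eq_normalizedMellin {s : ℝ} (hs : 0 < s) :
    posMoment μ s = normalizedMellin (survival μ) s := by
  have hmeas : Measurable (survival μ) := antitone_survival.measurable
  rw [posMoment, normalizedMellin, Gamma_add_one hs.ne',
    integral_eq_lintegral_of_nonneg_ae
      (Eventually.of_forall fun x ↦ rpow_nonneg (posPart_nonneg x) s)
      (measurable_posPart.pow_const s).aestronglyMeasurable,
    lintegral_posPart_rpow hs, ENNReal.toReal_mul, ENNReal.toReal_ofReal hs.le,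
    ← integral_eq_lintegral_of_nonneg_ae _ (by fun_prop), mul_div_mul_left _ _ hs.ne']
  filter_upwards [ae_restrict_mem measurableSet_Ioi] with t (ht : 0 < t)
  exact mul_nonneg (by positivity) measureReal_nonneg

lemma integrable_posPart_rpow (hR : LogConcaveFn (survival μ)) {s : ℝ} (hs : 0 < s) :
    Integrable (fun x ↦ x⁺ ^ s) μ := by
  rw [← lintegral_ofReal_ne_top_iff_integrable
    (measurable_posPart.pow_const s).aestronglyMeasurable
    (Eventually.of_forall fun x ↦ rpow_nonneg (posPart_nonneg x) s), lintegral_posPart_rpow hs]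
  exact ENNReal.mul_ne_top ENNReal.ofReal_ne_top
    (hR.integrableOn_rpow_mul antitone_survival tendsto_survival_atTop hs).lintegral_lt_top.ne

lemma integrable_posPart (hR : LogConcaveFn (survival μ)) : Integrable (fun x ↦ x⁺) μ := by
  simpa only [rpow_one] using integrable_posPart_rpow hR one_pos

lemma integrable_posPart_neg_rpow (hL : LogConcaveFn (survival μ.neg)) {s : ℝ} (hs : 0 < s) :
    Integrable (fun x ↦ (-x)⁺ ^ s) μ :=
  (integrable_map_equiv (MeasurableEquiv.neg ℝ) _).1 (integrable_posPart_rpow hL hs)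

lemma integral_abs_rpow_eq (h : HasLogConcaveTails μ) {s : ℝ} (hs : 0 < s) :
    ∫ x, |x| ^ s ∂μ = Gamma (s + 1) * (posMoment μ s + posMoment μ.neg s) := by
  simp only [abs_rpow_eq_posPart_rpow_add hs]
  rw [integral_add (integrable_posPart_rpow h.right hs) (integrable_posPart_neg_rpow h.left hs),
    mul_add, Gamma_mul_posMoment hs, Gamma_mul_posMoment hs, integral_neg_measure]

lemma posMoment_neg_one (h : HasLogConcaveTails μ) (hmean : ∫ x, x ∂μ = 0) :
    posMoment μ.neg 1 = posMoment μ 1 := by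
  have hint := integrable_posPart_neg_rpow h.left one_pos
  simp only [rpow_one] at hint
  rw [posMoment_one, posMoment_one, integral_neg_measure, eq_comm, ← sub_eq_zero,
    ← integral_sub (integrable_posPart h.right) hint]
  simpa only [posPart_neg, posPart_sub_negPart] using hmean

lemma survival_zero_pos (hm : 0 < posMoment μ 1) : 0 < survival μ 0 := by
  refine measureReal_nonneg.lt_of_ne' fun h0 ↦ hm.ne' ?_
  rw [posMoment_one]
  refine integral_eq_zero_of_ae ?_
  filter_upwards [measure_eq_zero_iff_ae_notMem.1 ((measureReal_eq_zero_iff).1 h0)] with x hx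
  exact posPart_eq_zero.2 (not_lt.1 hx)

lemma rpow_mul_posMoment_rpow_le (hR : LogConcaveFn (survival μ)) (hm : 0 < posMoment μ 1)
    {p q : ℝ} (hq : 0 < q) (hqp : q ≤ p) :
    survival μ 0 ^ (1 - q / p) * posMoment μ p ^ (q / p) ≤ posMoment μ q := by
  rw [posMoment_eq_normalizedMellin hq, posMoment_eq_normalizedMellin (hq.trans_le hqp)]
  exact hR.rpow_mul_normalizedMellin_rpow_le antitone_survival tendsto_survival_atTop
    (survival_zero_pos hm) hq hqp

lemma posMoment_one_eq_setIntegral : posMoment μ 1 = ∫ t in Ioi 0, survival μ t := by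
  simp [posMoment_eq_normalizedMellin one_pos, normalizedMellin]

lemma integrableOn_survival (hR : LogConcaveFn (survival μ)) :
    IntegrableOn (survival μ) (Ioi 0) := by
  simpa using hR.integrableOn_rpow_mul antitone_survival tendsto_survival_atTop one_pos

lemma exp_neg_one_le_survival_zero (h : HasLogConcaveTails μ) (hmean : ∫ x, x ∂μ = 0)
    (hm : 0 < posMoment μ 1) : exp (-1) ≤ survival μ 0 := by
  have hae := ae_restrict_of_ae (s := Ioi 0) (one_sub_survival_neg_ae_eq (μ := μ))
  refine h.right.exp_neg_one_le_apply_zero antitone_survival (fun t ↦ measureReal_le_one)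
    (integrableOn_survival h.right) ((integrable_congr hae).2 (integrableOn_survival h.left))
    (posMoment_one_eq_setIntegral (μ := μ) ▸ hm) ?_
  rw [integral_congr_ae hae, ← posMoment_one_eq_setIntegral (μ := μ.neg),
    ← posMoment_one_eq_setIntegral, posMoment_neg_one h hmean]

lemma survival_neg_zero (hR : LogConcaveFn (survival μ)) (hm : 0 < posMoment μ 1) :
    survival μ.neg 0 = 1 - survival μ 0 := by
  have h0 := survival_zero_pos hm
  obtain ⟨x, hx, hRx⟩ : ∃ x ∈ Ioi (0 : ℝ), 0 < survival μ x := by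
    by_contra! hle
    rw [posMoment_one_eq_setIntegral] at hm
    exact hm.not_ge (setIntegral_nonpos measurableSet_Ioi hle)
  set κ := log (survival μ x / survival μ 0) / x
  have hκ : survival μ 0 * exp (κ * x) = survival μ x := by
    rw [div_mul_cancel₀ _ (ne_of_gt hx), exp_log (by positivity), mul_div_cancel₀ _ h0.ne']
  have hlim : Tendsto (fun t ↦ survival μ 0 * exp (κ * t)) (𝓝[<] 0) (𝓝 (survival μ 0)) := by
    refine Tendsto.mono_left ?_ nhdsWithin_le_nhds
    exact Continuous.tendsto' (by fun_prop) _ _ (by simp)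
  have hIci : μ.real (Ici 0) ≤ survival μ 0 := by
    refine ge_of_tendsto hlim (eventually_nhdsWithin_of_forall fun t (ht : t < 0) ↦ ?_)
    exact (measureReal_mono (Ici_subset_Ioi.2 ht)).trans
      (hR.le_mul_exp_of_nonpos h0 hx hκ.le ht.le)
  rw [survival_neg, neg_zero, hIci.antisymm (measureReal_mono Ioi_subset_Ici_self)]

lemma posMoment_one_rpow_le (hR : LogConcaveFn (survival μ)) (hm : 0 < posMoment μ 1) {p : ℝ}
    (hp : 1 ≤ p) :
    posMoment μ 1 ^ p ≤ survival μ 0 ^ (p - 1) * (Gamma (p + 1) * posMoment μ p) := by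
  have hp0 : 0 < p := by linarith
  have h0 := survival_zero_pos hm
  have hjensen := (convexOn_rpow hp).map_set_average_le (μ := μ) (t := Ioi 0) (f := (·⁺))
    (continuousOn_id.rpow_const fun _ _ ↦ .inr hp0.le) isClosed_Ici
    ((measureReal_ne_zero_iff).1 h0.ne') (measure_ne_top μ _)
    (ae_of_all _ fun x ↦ posPart_nonneg x) (integrable_posPart hR).integrableOn
    (integrable_posPart_rpow hR hp0).integrableOn
  have hsupport {s : ℝ} (hs : 0 < s) : ∫ x in Ioi 0, x⁺ ^ s ∂μ = ∫ x, x⁺ ^ s ∂μ :=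
    setIntegral_eq_integral_of_forall_compl_eq_zero fun x hx ↦ by
      rw [posPart_eq_zero.2 (not_lt.1 hx), zero_rpow hs.ne']
  have hsupport_one := hsupport one_pos
  simp only [rpow_one] at hsupport_one
  simp only [setAverage_eq] at hjensen
  rw [hsupport_one, hsupport hp0, ← posMoment_one, ← Gamma_mul_posMoment hp0] at hjensen
  change ((survival μ 0)⁻¹ * _) ^ p ≤ (survival μ 0)⁻¹ * _ at hjensen
  rw [mul_rpow (by positivity) hm.le, inv_rpow h0.le, inv_mul_le_iff₀ (by positivity)] at hjensen
  rwa [rpow_sub_one h0.ne', div_eq_mul_inv, mul_assoc]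

lemma rpow_mul_posMoment_le (hR : LogConcaveFn (survival μ)) (hm : 0 < posMoment μ 1) {p : ℝ}
    (hp : 1 ≤ p) : survival μ 0 ^ (p - 1) * posMoment μ p ≤ posMoment μ 1 ^ p := by
  have hp0 : 0 < p := by linarith
  have h0 := survival_zero_pos hm
  have hA := posMoment_nonneg (μ := μ) hp0
  have h := rpow_le_rpow (by positivity) (rpow_mul_posMoment_rpow_le hR hm one_pos hp) hp0.le
  rwa [mul_rpow (by positivity) (by positivity), ← rpow_mul h0.le, ← rpow_mul hA,
    div_mul_cancel₀ _ hp0.ne', rpow_one, sub_mul, div_mul_cancel₀ _ hp0.ne', one_mul] at h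

lemma posMoment_pos (hR : LogConcaveFn (survival μ)) (hm : 0 < posMoment μ 1) {p : ℝ}
    (hp : 1 ≤ p) : 0 < posMoment μ p := by
  refine (posMoment_nonneg (by linarith)).lt_of_ne fun h0 ↦ ?_
  have h := posMoment_one_rpow_le hR hm hp
  rw [← h0, mul_zero, mul_zero] at h
  exact (rpow_pos_of_pos hm p).not_ge h

lemma survival_zero_mem_Icc (h : HasLogConcaveTails μ) (hmean : ∫ x, x ∂μ = 0)
    (hm : 0 < posMoment μ 1) : survival μ 0 ∈ Icc (exp (-1)) (1 - exp (-1)) := by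
  refine ⟨exp_neg_one_le_survival_zero h hmean hm, ?_⟩
  have hneg := exp_neg_one_le_survival_zero h.neg (integral_id_neg_measure hmean)
    (by rwa [posMoment_neg_one h hmean])
  rw [survival_neg_zero h.right hm] at hneg
  linarith

lemma posMoment_le_mul_posMoment_neg (h : HasLogConcaveTails μ) (hmean : ∫ x, x ∂μ = 0)
    (hm : 0 < posMoment μ 1) {k n : ℕ} (hn : ((k + 2).factorial : ℝ) * 1.71829 ^ (k + 1) ≤ n)
    {p : ℝ} (hp : p ∈ Icc 1 ((k : ℝ) + 2)) : posMoment μ p ≤ n * posMoment μ.neg p := by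
  have hm' : 0 < posMoment μ.neg 1 := by rwa [posMoment_neg_one h hmean]
  have hB := posMoment_pos h.left hm' hp.1
  set a := survival μ 0
  obtain ⟨ha, ha'⟩ : a ∈ Icc (exp (-1)) (1 - exp (-1)) := survival_zero_mem_Icc h hmean hm
  have ha0 : 0 < a := (exp_pos _).trans_le ha
  have hb0 : 0 ≤ 1 - a := sub_nonneg.2 (ha'.trans (sub_le_self 1 (exp_pos _).le))
  have hodds := one_sub_div_le_of_exp_neg_one_le ha
  have hGamma := Gamma_add_one_le_factorial (n := k + 2) hp.1 (by exact_mod_cast hp.2)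
  have hcompare : a ^ (p - 1) * posMoment μ p ≤
      (1 - a) ^ (p - 1) * (Gamma (p + 1) * posMoment μ.neg p) := by
    rw [← survival_neg_zero h.right hm]
    refine (rpow_mul_posMoment_le h.right hm hp.1).trans ?_
    rw [← posMoment_neg_one h hmean]
    exact posMoment_one_rpow_le h.left hm' hp.1
  have hodds_rpow : ((1 - a) / a) ^ (p - 1) ≤ 1.71829 ^ (k + 1) := by
    rw [← rpow_natCast]
    exact (rpow_le_rpow (by positivity) hodds (sub_nonneg.2 hp.1)).trans
      (rpow_le_rpow_of_exponent_le (by norm_num) (by push_cast; linarith [hp.2]))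
  calc posMoment μ p
      ≤ ((1 - a) / a) ^ (p - 1) * (Gamma (p + 1) * posMoment μ.neg p) := by
        rw [div_rpow hb0 ha0.le, div_mul_eq_mul_div, le_div_iff₀ (by positivity), mul_comm]
        exact hcompare
    _ ≤ 1.71829 ^ (k + 1) * ((k + 2).factorial * posMoment μ.neg p) :=
        mul_le_mul hodds_rpow (by gcongr)
          (mul_nonneg (Gamma_pos_of_pos (by linarith [hp.1])).le hB.le) (by positivity)
    _ = (k + 2).factorial * 1.71829 ^ (k + 1) * posMoment μ.neg p := by ring
    _ ≤ n * posMoment μ.neg p := by gcongr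

/-- The proportion `A / (A + B)` of the `p`-th absolute moment carried by the positive part. -/
noncomputable def posShare (μ : Measure ℝ) (p : ℝ) : ℝ :=
  posMoment μ p / (posMoment μ p + posMoment μ.neg p)

lemma posShare_mem_Icc (h : HasLogConcaveTails μ) (hmean : ∫ x, x ∂μ = 0)
    (hm : 0 < posMoment μ 1) {k n : ℕ} (hn : ((k + 2).factorial : ℝ) * 1.71829 ^ (k + 1) ≤ n)
    {p : ℝ} (hp : p ∈ Icc 1 ((k : ℝ) + 2)) :
    posShare μ p ∈ Icc (1 - (n / (n + 1) : ℝ)) (n / (n + 1)) := by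
  have hm' : 0 < posMoment μ.neg 1 := by rwa [posMoment_neg_one h hmean]
  have hA := posMoment_pos h.right hm hp.1
  have hB := posMoment_pos h.left hm' hp.1
  have hAB := posMoment_le_mul_posMoment_neg h hmean hm hn hp
  have hBA := posMoment_le_mul_posMoment_neg h.neg (integral_id_neg_measure hmean) hm' hn hp
  rw [Measure.neg_neg] at hBA
  rw [one_sub_div (by positivity), add_sub_cancel_left]
  constructor
  · rw [posShare, div_le_div_iff₀ (by positivity) (by positivity)]
    linarith
  · rw [posShare, div_le_div_iff₀ (by positivity) (by positivity)]
    linarith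

lemma bernoulliKL_posShare_le (h : HasLogConcaveTails μ) (hmean : ∫ x, x ∂μ = 0)
    (hm : 0 < posMoment μ 1) {p W : ℝ} (hW : W ≤ 1) (hp : posShare μ p ∈ Icc (1 - W) W) :
    bernoulliKL (posShare μ p) (survival μ 0) ≤ bernoulliKL W (exp (-1)) :=
  bernoulliKL_le_of_mem_Icc (exp_pos _) (survival_zero_mem_Icc h hmean hm) hW hp

lemma absMoment_eq_add (h : HasLogConcaveTails μ) {s : ℝ} (hs : 0 < s) :
    absMoment μ s = posMoment μ s + posMoment μ.neg s := by
  rw [absMoment, integral_abs_rpow_eq h hs,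
    mul_div_cancel_left₀ _ (Gamma_pos_of_pos (by linarith)).ne']

lemma absMoment_pos (h : HasLogConcaveTails μ) (hm : 0 < posMoment μ 1) {s : ℝ} (hs : 1 ≤ s) :
    0 < absMoment μ s := by
  have hs0 : 0 < s := by linarith
  rw [absMoment_eq_add h hs0]
  exact add_pos_of_pos_of_nonneg (posMoment_pos h.right hm hs) (posMoment_nonneg hs0)

lemma exp_mul_absMoment_rpow_le (h : HasLogConcaveTails μ) (hmean : ∫ x, x ∂μ = 0)
    (hm : 0 < posMoment μ 1) {D p q : ℝ} (hq : 1 ≤ q) (hqp : q ≤ p)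
    (hD : bernoulliKL (posShare μ p) (survival μ 0) ≤ D) :
    exp (-((1 - q / p) * D)) * absMoment μ p ^ (q / p) ≤ absMoment μ q := by
  have hq0 : 0 < q := by linarith
  have hp : 1 ≤ p := hq.trans hqp
  have hp0 : 0 < p := by linarith
  have hm' : 0 < posMoment μ.neg 1 := by rwa [posMoment_neg_one h hmean]
  have hA := posMoment_pos h.right hm hp
  have hB := posMoment_pos h.left hm' hp
  have ha := survival_zero_mem_Icc h hmean hm
  have hmix := exp_neg_mul_bernoulliKL_mul_rpow_le (1 - q / p)
    (Icc_subset_Ioo (exp_pos _) (sub_lt_self 1 (exp_pos _)) ha) hA hB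
  rw [sub_sub_cancel, ← survival_neg_zero h.right hm] at hmix
  rw [absMoment_eq_add h hp0, absMoment_eq_add h hq0]
  calc exp (-((1 - q / p) * D)) * (posMoment μ p + posMoment μ.neg p) ^ (q / p)
      ≤ exp (-((1 - q / p) * bernoulliKL (posShare μ p) (survival μ 0))) *
          (posMoment μ p + posMoment μ.neg p) ^ (q / p) := by
        gcongr
        exact sub_nonneg.2 ((div_le_one hp0).2 hqp)
    _ ≤ _ := hmix
    _ ≤ posMoment μ q + posMoment μ.neg q :=
        add_le_add (rpow_mul_posMoment_rpow_le h.right hm hq0 hqp)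
          (rpow_mul_posMoment_rpow_le h.left hm' hq0 hqp)

lemma log_absMoment_add_div_le (h : HasLogConcaveTails μ) (hmean : ∫ x, x ∂μ = 0)
    (hm : 0 < posMoment μ 1) {D p q : ℝ} (hq : 1 ≤ q) (hqp : q ≤ p)
    (hD : bernoulliKL (posShare μ p) (survival μ 0) ≤ D) :
    (log (absMoment μ p) + D) / p ≤ (log (absMoment μ q) + D) / q := by
  have hq0 : 0 < q := by linarith
  have hp : 1 ≤ p := hq.trans hqp
  have hSp := absMoment_pos h hm hp
  have hlog := log_le_log (by positivity) (exp_mul_absMoment_rpow_le h hmean hm hq hqp hD)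
  rw [log_mul (exp_pos _).ne' (by positivity), log_exp, log_rpow hSp] at hlog
  rw [le_div_iff₀ hq0]
  calc (log (absMoment μ p) + D) / p * q
      = -((1 - q / p) * D) + q / p * log (absMoment μ p) + D := by ring
    _ ≤ log (absMoment μ q) + D := by gcongr

lemma antitoneOn_momNorm_div (h : HasLogConcaveTails μ) (hmean : ∫ x, x ∂μ = 0)
    (hm : 0 < posMoment μ 1) {D r Q : ℝ} {I : Set ℝ} (hr : 0 < r) (hrQ : r < Q) (hQ : 1 ≤ Q)
    (hD : D * (Q - r) ≤ Q * gammaDefect r - r * gammaDefect Q) (hI : I ⊆ Ici Q)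
    (hKL : ∀ p ∈ I, bernoulliKL (posShare μ p) (survival μ 0) ≤ D) :
    AntitoneOn (fun s ↦ momNorm μ s / s) I := by
  intro q hq p hp hqp
  have hq1 : 1 ≤ q := hQ.trans (hI hq)
  have hp1 : 1 ≤ p := hq1.trans hqp
  have hgamma := antitoneOn_gammaDefect_sub_div hr hrQ hD (hI hq) (hI hp) hqp
  have hmoment := log_absMoment_add_div_le h hmean hm hq1 hqp (hKL p hp)
  have hsplit (s : ℝ) : (gammaDefect s + log (absMoment μ s)) / s =
      (gammaDefect s - D) / s + (log (absMoment μ s) + D) / s := by ring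
  simp only
  rw [momNorm_div_eq_exp (by linarith) (absMoment_pos h hm hq1),
    momNorm_div_eq_exp (by linarith) (absMoment_pos h hm hp1), hsplit, hsplit]
  exact exp_le_exp.2 (add_le_add hgamma hmoment)

lemma antitoneOn_momNorm_div_Icc (h : HasLogConcaveTails μ) (hmean : ∫ x, x ∂μ = 0)
    (hm : 0 < posMoment μ 1) {k n : ℕ} {D : ℝ}
    (hn : ((k + 2).factorial : ℝ) * 1.71829 ^ (k + 1) ≤ n)
    (hKL : bernoulliKL (n / (n + 1)) (exp (-1)) ≤ D)
    (hD : D * ((k + 1) - (k + 1 / 2)) ≤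
      (k + 1) * gammaDefect (k + 1 / 2) - (k + 1 / 2) * gammaDefect (k + 1)) :
    AntitoneOn (fun s ↦ momNorm μ s / s) (Icc (k + 1) (k + 2)) := by
  refine antitoneOn_momNorm_div h hmean hm (by positivity) (by linarith)
    (le_add_of_nonneg_left k.cast_nonneg) hD (fun s hs ↦ hs.1) fun p hp ↦ ?_
  have hp1 : 1 ≤ p := (le_add_of_nonneg_left k.cast_nonneg).trans hp.1
  exact (bernoulliKL_posShare_le h hmean hm (div_le_one_of_le₀ (by linarith) (by positivity))
    (posShare_mem_Icc h hmean hm hn ⟨hp1, hp.2⟩)).trans hKL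

lemma antitoneOn_momNorm_div_Ici_four (h : HasLogConcaveTails μ) (hmean : ∫ x, x ∂μ = 0)
    (hm : 0 < posMoment μ 1) : AntitoneOn (fun s ↦ momNorm μ s / s) (Ici 4) := by
  refine antitoneOn_momNorm_div h hmean hm (by norm_num) (by norm_num) (by norm_num)
    one_le_gammaDefect_three_four subset_rfl fun p (hp : 4 ≤ p) ↦ ?_
  have hshare : posShare μ p ∈ Icc (1 - 1) 1 := by
    have hA := posMoment_nonneg (μ := μ) (s := p) (by linarith)
    have hB := posMoment_nonneg (μ := μ.neg) (s := p) (by linarith)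
    rw [sub_self]
    exact ⟨by unfold posShare; positivity,
      div_le_one_of_le₀ (le_add_of_nonneg_right hB) (by positivity)⟩
  refine (bernoulliKL_posShare_le h hmean hm le_rfl hshare).trans (le_of_eq ?_)
  simp [bernoulliKL]

lemma antitoneOn_momNorm_div_Ici_one (h : HasLogConcaveTails μ) (hmean : ∫ x, x ∂μ = 0)
    (hm : 0 < posMoment μ 1) : AntitoneOn (fun s ↦ momNorm μ s / s) (Ici 1) := by
  -- `n` bounds `A p / B p`, and `E = exp D` was chosen numerically between the two bounds to check.
  have h12 := antitoneOn_momNorm_div_Icc h hmean hm (k := 0) (n := 4)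
    (by norm_num [Nat.factorial])
    (bernoulliKL_natCast_div_add_one_le_log (by norm_num) (E := 1.5) (by norm_num) (by norm_num))
    (log_mul_half_le_gammaDefect 0 (by norm_num) (by norm_num [Nat.doubleFactorial, Nat.factorial]))
  have h23 := antitoneOn_momNorm_div_Icc h hmean hm (k := 1) (n := 18)
    (by norm_num [Nat.factorial])
    (bernoulliKL_natCast_div_add_one_le_log (by norm_num) (E := 2.17) (by norm_num) (by norm_num))
    (log_mul_half_le_gammaDefect 1 (by norm_num) (by norm_num [Nat.doubleFactorial, Nat.factorial]))
  have h34 := antitoneOn_momNorm_div_Icc h hmean hm (k := 2) (n := 124)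
    (by norm_num [Nat.factorial])
    (bernoulliKL_natCast_div_add_one_le_log (by norm_num) (E := 2.6) (by norm_num) (by norm_num))
    (log_mul_half_le_gammaDefect 2 (by norm_num) (by norm_num [Nat.doubleFactorial, Nat.factorial]))
  norm_num at h12 h23 h34
  have h4 := antitoneOn_momNorm_div_Ici_four h hmean hm
  have h3 := h34.union_right h4 (isGreatest_Icc (by norm_num)) isLeast_Ici
  rw [Icc_union_Ici_eq_Ici (by norm_num)] at h3
  have h2 := h23.union_right h3 (isGreatest_Icc (by norm_num)) isLeast_Ici
  rw [Icc_union_Ici_eq_Ici (by norm_num)] at h2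
  have h1 := h12.union_right h2 (isGreatest_Icc (by norm_num)) isLeast_Ici
  rwa [Icc_union_Ici_eq_Ici (by norm_num)] at h1

lemma posMoment_eq_zero (hR : LogConcaveFn (survival μ)) (hm : posMoment μ 1 = 0) {s : ℝ}
    (hs : 0 < s) : posMoment μ s = 0 := by
  rw [posMoment_one, integral_eq_zero_iff_of_nonneg (fun x ↦ posPart_nonneg x)
    (integrable_posPart hR)] at hm
  rw [posMoment, div_eq_zero_iff]
  refine .inl (integral_eq_zero_of_ae (hm.mono fun x hx ↦ ?_))
  simp only [hx, Pi.zero_apply, zero_rpow hs.ne']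

lemma momNorm_eq_zero (h : HasLogConcaveTails μ) (hmean : ∫ x, x ∂μ = 0)
    (hm : posMoment μ 1 = 0) {s : ℝ} (hs : 0 < s) : momNorm μ s = 0 := by
  have hm' : posMoment μ.neg 1 = 0 := by rwa [posMoment_neg_one h hmean]
  rw [momNorm, integral_abs_rpow_eq h hs, posMoment_eq_zero h.right hm hs,
    posMoment_eq_zero h.left hm' hs, add_zero, mul_zero, zero_rpow (one_div_pos.2 hs).ne']

theorem momNorm_le_of_logConcave_meanZero_general (h : HasLogConcaveTails μ)
    (hmean : ∫ x, x ∂μ = 0) {p q : ℝ} (hq : 1 ≤ q) (hpq : q ≤ p) :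
    momNorm μ p ≤ (p / q) * momNorm μ q := by
  have hq0 : 0 < q := by linarith
  have hp0 : 0 < p := by linarith
  rcases (posMoment_nonneg (μ := μ) one_pos).eq_or_lt with hm | hm
  · simp [momNorm_eq_zero h hmean hm.symm hp0, momNorm_eq_zero h hmean hm.symm hq0]
  · have hanti : momNorm μ p / p ≤ momNorm μ q / q :=
      antitoneOn_momNorm_div_Ici_one h hmean hm hq (hq.trans hpq) hpq
    rw [div_le_iff₀ hp0] at hanti
    exact hanti.trans_eq (by ring)

end PositiveParts

lemma logConcaveFn_indicator_one {s : Set ℝ} (hs : Convex ℝ s) :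
    LogConcaveFn (s.indicator fun _ ↦ 1) := by
  have hnonneg (x : ℝ) : 0 ≤ s.indicator (fun _ ↦ (1 : ℝ)) x :=
    indicator_nonneg (fun _ _ ↦ zero_le_one) x
  refine ⟨hnonneg, fun x y l hl hl' ↦ ?_⟩
  rcases hl.eq_or_lt with rfl | hl
  · simp
  rcases hl'.eq_or_lt with rfl | hl'
  · simp
  by_cases hx : x ∈ s
  · by_cases hy : y ∈ s
    · have hxy : l * x + (1 - l) * y ∈ s :=
        hs hx hy hl.le (sub_nonneg.2 hl'.le) (add_sub_cancel l 1)
      simp [hx, hy, hxy]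
    · rw [indicator_of_notMem hy, zero_rpow (sub_pos.2 hl').ne', mul_zero]
      exact hnonneg _
  · rw [indicator_of_notMem hx, zero_rpow hl.ne', zero_mul]
    exact hnonneg _

lemma survival_dirac (c : ℝ) : survival (.dirac c) = (Iio c).indicator fun _ ↦ 1 := by
  ext t
  by_cases h : t < c <;> simp [survival, measureReal_def, indicator, h]

lemma measure_neg_dirac (c : ℝ) : (Measure.dirac c).neg = .dirac (-c) :=
  Measure.map_dirac' measurable_neg c

lemma hasLogConcaveTails_dirac (c : ℝ) : HasLogConcaveTails (.dirac c) := by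
  constructor
  · rw [survival_dirac]
    exact logConcaveFn_indicator_one (convex_Iio c)
  · rw [measure_neg_dirac, survival_dirac]
    exact logConcaveFn_indicator_one (convex_Iio (-c))

section Density

variable {f : ℝ → ℝ}

lemma LogConcaveFn.integrable (hf : LogConcaveFn f)
    [IsFiniteMeasure (volume.withDensity fun x ↦ ENNReal.ofReal (f x))] : Integrable f := by
  rw [← lintegral_ofReal_ne_top_iff_integrable hf.measurable.aestronglyMeasurable
    (Eventually.of_forall hf.nonneg), ← setLIntegral_univ, ← withDensity_apply _ .univ]
  exact measure_ne_top _ _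

lemma LogConcaveFn.measureReal_withDensity (hf : LogConcaveFn f) {s : Set ℝ}
    (hs : MeasurableSet s) :
    (volume.withDensity fun x ↦ ENNReal.ofReal (f x)).real s = ∫ x in s, f x := by
  rw [measureReal_def, withDensity_apply _ hs, integral_eq_lintegral_of_nonneg_ae
    (Eventually.of_forall hf.nonneg) hf.measurable.aestronglyMeasurable]

lemma LogConcaveFn.hasLogConcaveTails (hf : LogConcaveFn f)
    [IsFiniteMeasure (volume.withDensity fun x ↦ ENNReal.ofReal (f x))] :
    HasLogConcaveTails (volume.withDensity fun x ↦ ENNReal.ofReal (f x)) := by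
  constructor
  · have hright : survival (volume.withDensity fun x ↦ ENNReal.ofReal (f x)) =
        fun t ↦ ∫ x in Ioi t, f x := funext fun t ↦ hf.measureReal_withDensity measurableSet_Ioi
    rw [hright]
    exact hf.setIntegral_Ioi hf.integrable
  · have hleft : survival (volume.withDensity fun x ↦ ENNReal.ofReal (f x)).neg =
        fun t ↦ ∫ x in Ioi t, f (-x) := by
      ext t
      rw [survival, measureReal_def, Measure.neg_apply, neg_Ioi, ← measureReal_def,
        hf.measureReal_withDensity measurableSet_Iio, integral_comp_neg_Ioi,
        integral_Iic_eq_integral_Iio]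
    rw [hleft]
    exact hf.comp_neg.setIntegral_Ioi hf.integrable.comp_neg

end Density

lemma IsLogConcave.hasLogConcaveTails {μ : Measure ℝ} (hμ : IsLogConcave μ) :
    HasLogConcaveTails μ := by
  obtain ⟨hprob, ⟨c, rfl⟩ | ⟨f, hf0, rfl, hf⟩⟩ := hμ
  · exact hasLogConcaveTails_dirac c
  · exact LogConcaveFn.hasLogConcaveTails ⟨hf0, hf⟩

end

/-- For a mean zero log-concave real random variable `X` and `p ≥ q ≥ 1` one has
`‖X‖_p ≤ (p/q) ‖X‖_q`. -/
theorem momNorm_le_of_logConcave_meanZero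
    (μ : Measure ℝ) (hμ : IsLogConcave μ) (hmean : ∫ x, x ∂μ = 0)
    (p q : ℝ) (hq : 1 ≤ q) (hpq : q ≤ p) :
    momNorm μ p ≤ (p / q) * momNorm μ q :=
  have := hμ.1
  momNorm_le_of_logConcave_meanZero_general hμ.hasLogConcaveTails hmean hq hpq
end

section
/- Let X be any log-concave real random variable and let p, q be real numbers with p > q ≥ 2. Then ‖X‖_p ≤ C₀·(p/q)·‖X‖_q, where C₀ = e^{W(1/e)} and W(1/e) is the unique positive real number w satisfying w·e^w = 1/e (so C₀ = 1/(e·W(1/e)) ≈ 1.3211). -/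
open MeasureTheory

open Set Real

/-! For a log-concave density `f`, compare `f` on a half-line with the multiple `g` of an
exponential density that has the same mass and the same `q`-th moment there. As `log (f / g)` is
concave, `f - g` changes sign twice on the half-line, in the order `-, +, -`, so `f` has the smaller
`p`-th moment and `f ≤ g` on the opposite half-line. The latter bounds the scale of `g` by
`‖X‖_q / κ` for every `κ` with `e ^ κ * κ ^ q ≤ Γ (q + 1)`. Adding the two half-lines gives
`E|X|^p ≤ Γ (p + 1) / Γ (q + 1) * (‖X‖_q / κ) ^ (p - q) * E|X|^q`, and `κ = w q e^(w/q)` turns the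
right-hand side into the claimed bound. -/

section SignChange

lemma exists_endpoints_of_ordConnected {S : Set ℝ} {a : ℝ} (hS : S.OrdConnected)
    (ha : S ⊆ Ici a) :
    ∃ α ≥ a, (Ioi α ⊆ S ∧ S ⊆ Ici α) ∨ ∃ β ≥ α, Ioo α β ⊆ S ∧ S ⊆ Icc α β := by
  rcases S.eq_empty_or_nonempty with rfl | hne
  · exact ⟨a, le_rfl, .inr ⟨a, le_rfl, by simp⟩⟩
  have hbelow : BddBelow S := ⟨a, ha⟩
  refine ⟨sInf S, le_csInf hne ha, ?_⟩
  by_cases habove : BddAbove S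
  · exact .inr ⟨sSup S, csInf_le_csSup hne hbelow habove,
      IsConnected.Ioo_csInf_csSup_subset ⟨hne, hS.isPreconnected⟩ hbelow habove,
      subset_Icc_csInf_csSup hbelow habove⟩
  · exact .inl ⟨hS.isPreconnected.Ioi_csInf_subset hbelow habove, fun x hx => csInf_le hbelow hx⟩

lemma rpow_chord_le {p q x y z : ℝ} (hq : 0 < q) (hpq : q ≤ p) (hx : 0 ≤ x) (hxy : x ≤ y)
    (hyz : y ≤ z) :
    (z ^ q - x ^ q) * y ^ p ≤ (z ^ q - y ^ q) * x ^ p + (y ^ q - x ^ q) * z ^ p := by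
  rcases hxy.eq_or_lt with rfl | hxy
  · simp
  rcases hyz.eq_or_lt with rfl | hyz
  · simp
  have hy : 0 ≤ y := hx.trans hxy.le
  have rpow_rpow (t : ℝ) (ht : 0 ≤ t) : (t ^ q) ^ (p / q) = t ^ p := by
    rw [← rpow_mul ht, mul_div_cancel₀ _ hq.ne']
  have h := (convexOn_rpow ((one_le_div₀ hq).2 hpq)).secant_mono_aux1 (rpow_nonneg hx q)
    (rpow_nonneg (hy.trans hyz.le) q) (rpow_lt_rpow hx hxy hq) (rpow_lt_rpow hy hyz hq)
  rwa [rpow_rpow x hx, rpow_rpow y hy, rpow_rpow z (hy.trans hyz.le)] at h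

/-- The function `h` is integrable on `(0, ∞)` against `1` and `x ^ q`, with both integrals zero;
the case of interest is the difference of two densities of equal mass and equal `q`-th moment. -/
structure HasVanishingMoments (q : ℝ) (h : ℝ → ℝ) : Prop where
  integrableOn : IntegrableOn h (Ioi 0)
  integrableOn_rpow : IntegrableOn (fun x => x ^ q * h x) (Ioi 0)
  integral_eq_zero : ∫ x in Ioi (0 : ℝ), h x = 0
  integral_rpow_eq_zero : ∫ x in Ioi (0 : ℝ), x ^ q * h x = 0

namespace HasVanishingMoments

variable {h : ℝ → ℝ} {m p q : ℝ}

lemma neg (hh : HasVanishingMoments q h) : HasVanishingMoments q (-h) where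
  integrableOn := hh.integrableOn.neg
  integrableOn_rpow := by
    simpa only [Pi.neg_apply, mul_neg] using hh.integrableOn_rpow.fun_neg
  integral_eq_zero := by
    simp only [Pi.neg_apply, integral_neg, hh.integral_eq_zero, neg_zero]
  integral_rpow_eq_zero := by
    simp only [Pi.neg_apply, mul_neg, integral_neg, hh.integral_rpow_eq_zero, neg_zero]

lemma ae_eq_zero_of_sign_change (hh : HasVanishingMoments q h) (hq : 0 < q) (hm : 0 ≤ m)
    (hneg : ∀ x, 0 < x → x < m → h x ≤ 0) (hpos : ∀ x, m < x → 0 ≤ h x) :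
    ∀ᵐ x ∂volume.restrict (Ioi 0), h x = 0 := by
  have hexpand : (fun x => (x ^ q - m ^ q) * h x) = fun x => x ^ q * h x - m ^ q * h x := by
    simp only [sub_mul]
  have hint : IntegrableOn (fun x => (x ^ q - m ^ q) * h x) (Ioi 0) := by
    rw [hexpand]
    exact hh.integrableOn_rpow.sub (hh.integrableOn.const_mul _)
  have hzero : ∫ x in Ioi (0 : ℝ), (x ^ q - m ^ q) * h x = 0 := by
    rw [hexpand, integral_sub hh.integrableOn_rpow (hh.integrableOn.const_mul _),
      integral_const_mul, hh.integral_eq_zero, hh.integral_rpow_eq_zero, mul_zero, sub_zero]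
  have hnonneg : ∀ x ∈ Ioi (0 : ℝ), 0 ≤ (x ^ q - m ^ q) * h x := by
    intro x (hx : 0 < x)
    rcases lt_trichotomy x m with hxm | rfl | hmx
    · exact mul_nonneg_of_nonpos_of_nonpos
        (sub_nonpos.2 (rpow_le_rpow hx.le hxm.le hq.le)) (hneg x hx hxm)
    · simp
    · exact mul_nonneg (sub_nonneg.2 (rpow_le_rpow hm hmx.le hq.le)) (hpos x hmx)
  have hae := (setIntegral_eq_zero_iff_of_nonneg_ae
    (ae_restrict_of_forall_mem measurableSet_Ioi hnonneg) hint).1 hzero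
  filter_upwards [hae, ae_restrict_mem measurableSet_Ioi, ae_restrict_of_ae (volume.ae_ne m)]
    with x hx hx0 hxm
  exact (mul_eq_zero.1 hx).resolve_left
    (sub_ne_zero.2 fun heq => hxm ((rpow_left_inj (le_of_lt hx0) hm hq.ne').1 heq))

lemma not_strict_sign_change (hh : HasVanishingMoments q h) (hq : 0 < q) (hm : 0 ≤ m)
    (hneg : ∀ x, 0 < x → x < m → h x < 0) : ¬ ∀ x, m < x → 0 < h x := by
  intro hpos
  have hae := hh.ae_eq_zero_of_sign_change hq hm (fun x hx hxm => (hneg x hx hxm).le)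
    fun x hx => (hpos x hx).le
  have : (ae (volume.restrict (Ioi (0 : ℝ)))).NeBot :=
    ae_restrict_neBot.2 (by simp)
  obtain ⟨x, ⟨hx, hx0⟩, hxm⟩ := ((hae.and (ae_restrict_mem measurableSet_Ioi)).and
    (ae_restrict_of_ae (volume.ae_ne m))).exists
  rcases hxm.lt_or_gt with hlt | hgt
  · exact (hneg x hx0 hlt).ne hx
  · exact (hpos x hgt).ne' hx

/-- Subtracting from `x ^ p` the combination of `1` and `x ^ q` that agrees with it at `α` and `β`
leaves the integral unchanged and makes the integrand nonpositive. -/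
lemma integral_rpow_mul_nonpos_of_sign_changes (hh : HasVanishingMoments q h) (hq : 0 < q)
    (hpq : q ≤ p) (hint : IntegrableOn (fun x => x ^ p * h x) (Ioi 0)) {α β : ℝ} (hα : 0 ≤ α)
    (hαβ : α < β) (hleft : ∀ x, 0 < x → x < α → h x ≤ 0) (hmid : ∀ x, α < x → x < β → 0 ≤ h x)
    (hright : ∀ x, β < x → h x ≤ 0) :
    ∫ x in Ioi (0 : ℝ), x ^ p * h x ≤ 0 := by
  have hexpand : (fun x => ((β ^ q - α ^ q) * x ^ p
        - ((β ^ q - x ^ q) * α ^ p + (x ^ q - α ^ q) * β ^ p)) * h x) =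
      fun x => (β ^ q - α ^ q) * (x ^ p * h x) - (β ^ p - α ^ p) * (x ^ q * h x)
        - (β ^ q * α ^ p - α ^ q * β ^ p) * h x := by
    funext x; ring
  have hnonpos : ∀ x ∈ Ioi (0 : ℝ), ((β ^ q - α ^ q) * x ^ p
      - ((β ^ q - x ^ q) * α ^ p + (x ^ q - α ^ q) * β ^ p)) * h x ≤ 0 := by
    intro x (hx : 0 < x)
    rcases lt_trichotomy x α with hxα | rfl | hαx
    · have := rpow_chord_le hq hpq hx.le hxα.le hαβ.le
      exact mul_nonpos_of_nonneg_of_nonpos (by linarith) (hleft x hx hxα)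
    · simp
    rcases lt_trichotomy x β with hxβ | rfl | hβx
    · have := rpow_chord_le hq hpq hα hαx.le hxβ.le
      exact mul_nonpos_of_nonpos_of_nonneg (by linarith) (hmid x hαx hxβ)
    · simp
    · have := rpow_chord_le hq hpq hα hαβ.le hβx.le
      exact mul_nonpos_of_nonneg_of_nonpos (by linarith) (hright x hβx)
  have hle := setIntegral_nonpos (μ := volume) measurableSet_Ioi hnonpos
  have hint_p := hint.const_mul (β ^ q - α ^ q)
  have hint_q := hh.integrableOn_rpow.const_mul (β ^ p - α ^ p)
  have hint_pq : IntegrableOn (fun x => (β ^ q - α ^ q) * (x ^ p * h x)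
      - (β ^ p - α ^ p) * (x ^ q * h x)) (Ioi 0) := hint_p.sub hint_q
  rw [hexpand, integral_sub hint_pq (hh.integrableOn.const_mul _),
    integral_sub hint_p hint_q, integral_const_mul, integral_const_mul, integral_const_mul,
    hh.integral_eq_zero, hh.integral_rpow_eq_zero, mul_zero, mul_zero, sub_zero, sub_zero] at hle
  exact nonpos_of_mul_nonpos_right hle (sub_pos.2 (rpow_lt_rpow hα hαβ hq))

theorem integral_rpow_mul_nonpos (hh : HasVanishingMoments q h) (hq : 0 < q) (hpq : q ≤ p)
    (hint : IntegrableOn (fun x => x ^ p * h x) (Ioi 0))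
    (hconn : {x | 0 ≤ h x}.OrdConnected) :
    ∫ x in Ioi (0 : ℝ), x ^ p * h x ≤ 0 := by
  set S : Set ℝ := {x | 0 ≤ h x} ∩ Ioi 0
  have nonpos_of_notMem (x : ℝ) (hx : 0 < x) (hxS : x ∉ S) : h x ≤ 0 :=
    le_of_not_ge fun hhx => hxS ⟨hhx, hx⟩
  obtain ⟨α, hα, ⟨hIoi, hIci⟩ | ⟨β, hαβ, hIoo, hIcc⟩⟩ := exists_endpoints_of_ordConnected
    (hconn.inter ordConnected_Ioi) (inter_subset_right.trans Ioi_subset_Ici_self)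
  · have hae := hh.ae_eq_zero_of_sign_change hq hα
      (fun x hx hxα => nonpos_of_notMem x hx fun hxS => (hIci hxS).not_gt hxα)
      fun x hαx => (hIoi hαx).1
    refine (integral_eq_zero_of_ae ?_).le
    filter_upwards [hae] with x hx
    simp [hx]
  have hleft (x : ℝ) (hx : 0 < x) (hxα : x < α) : h x ≤ 0 :=
    nonpos_of_notMem x hx fun hxS => (hIcc hxS).1.not_gt hxα
  have hright (x : ℝ) (hβx : β < x) : h x ≤ 0 :=
    nonpos_of_notMem x (hα.trans_lt (lt_of_le_of_lt hαβ hβx)) fun hxS => (hIcc hxS).2.not_gt hβx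
  rcases hαβ.eq_or_lt with rfl | hαβ
  · refine integral_nonpos_of_ae ?_
    filter_upwards [ae_restrict_mem measurableSet_Ioi, ae_restrict_of_ae (volume.ae_ne α)]
      with x hx hxα
    exact mul_nonpos_of_nonneg_of_nonpos (rpow_nonneg (le_of_lt hx) p)
      (hxα.lt_or_gt.elim (hleft x hx) (hright x))
  · exact hh.integral_rpow_mul_nonpos_of_sign_changes hq hpq hint hα hαβ hleft
      (fun x hαx hxβ => (hIoo ⟨hαx, hxβ⟩).1) hright

theorem nonpos_of_nonpos (hh : HasVanishingMoments q h) (hq : 0 < q)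
    (hmid : ∀ x y z, x < y → y < z → 0 < h x → 0 ≤ h z → 0 < h y) {x : ℝ} (hx : x ≤ 0) :
    h x ≤ 0 := by
  by_contra! hhx
  set S : Set ℝ := {z | 0 < z ∧ 0 ≤ h z}
  have pos_below (y z : ℝ) (hy : 0 < y) (hyz : y < z) (hz : z ∈ S) : 0 < h y :=
    hmid x y z (hx.trans_lt hy) hyz hhx hz.2
  by_cases hS : BddAbove S
  · have hβ : 0 ≤ sSup S := Real.sSup_nonneg fun z hz => hz.1.le
    refine hh.neg.not_strict_sign_change hq hβ (fun y hy hyβ => ?_) fun y hβy => ?_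
    · have hne : S.Nonempty := by
        by_contra! hempty
        rw [hempty, Real.sSup_empty] at hyβ
        exact hy.not_gt hyβ
      obtain ⟨z, hz, hyz⟩ := exists_lt_of_lt_csSup hne hyβ
      exact neg_neg_of_pos (pos_below y z hy hyz hz)
    · refine neg_pos.2 (lt_of_not_ge fun hhy => ?_)
      exact (le_csSup hS ⟨hβ.trans_lt hβy, hhy⟩).not_gt hβy
  · refine hh.not_strict_sign_change hq le_rfl (fun y hy hy0 => (hy.not_gt hy0).elim) fun y hy => ?_
    obtain ⟨z, hz, hyz⟩ := not_bddAbove_iff.1 hS y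
    exact pos_below y z hy hyz hz

end HasVanishingMoments

end SignChange

section ExpDensity

/-- The density `θ / b * e ^ (-x / b)` of `θ` times the exponential law of mean `b`, extended
log-affinely to the whole line. -/
noncomputable def expDensity (θ b x : ℝ) : ℝ :=
  θ / b * exp (-(x / b))

variable {θ b : ℝ}

lemma expDensity_pos (hθ : 0 < θ) (hb : 0 < b) (x : ℝ) : 0 < expDensity θ b x := by
  unfold expDensity
  positivity

lemma expDensity_rpow_mul_rpow (hθ : 0 < θ) (hb : 0 < b) (x y l : ℝ) :
    expDensity θ b x ^ l * expDensity θ b y ^ (1 - l) = expDensity θ b (l * x + (1 - l) * y) := by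
  have hC : 0 < θ / b := div_pos hθ hb
  simp only [expDensity]
  rw [mul_rpow hC.le (exp_pos _).le, mul_rpow hC.le (exp_pos _).le, ← exp_mul, ← exp_mul,
    mul_mul_mul_comm, ← rpow_add hC, ← exp_add, add_sub_cancel, rpow_one]
  ring_nf

lemma exists_expDensity_eq {a c u v : ℝ} (hac : a < c) (hv : 0 < v) (hvu : v < u) :
    ∃ θ b : ℝ, 0 < θ ∧ 0 < b ∧ expDensity θ b a = u ∧ expDensity θ b c = v := by
  have hu : 0 < u := hv.trans hvu
  have hlog : 0 < log (u / v) := log_pos ((one_lt_div hv).2 hvu)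
  have hca : 0 < c - a := sub_pos.2 hac
  set b := (c - a) / log (u / v) with hb_def
  have hb : 0 < b := div_pos hca hlog
  refine ⟨b * u * exp (a / b), b, by positivity, hb, ?_, ?_⟩
  · rw [expDensity, mul_assoc, mul_div_cancel_left₀ _ hb.ne', mul_assoc, ← exp_add,
      add_neg_cancel, exp_zero, mul_one]
  · have hexponent : a / b + -(c / b) = -log (u / v) := by
      rw [hb_def]
      field_simp
      ring
    rw [expDensity, mul_assoc, mul_div_cancel_left₀ _ hb.ne', mul_assoc, ← exp_add, hexponent,
      exp_neg, exp_log (div_pos hu hv), inv_div, mul_div_cancel₀ _ hu.ne']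

lemma integrableOn_rpow_mul_expDensity {s : ℝ} (hs : -1 < s) (hb : 0 < b) :
    IntegrableOn (fun x => x ^ s * expDensity θ b x) (Ioi 0) := by
  have h := (integrableOn_rpow_mul_exp_neg_mul_rpow hs one_pos (inv_pos.2 hb)).const_mul (θ / b)
  refine h.congr (.of_forall fun x => ?_)
  simp only [expDensity, rpow_one]
  ring_nf

lemma integral_rpow_mul_expDensity {s : ℝ} (hs : -1 < s) (hb : 0 < b) :
    ∫ x in Ioi (0 : ℝ), x ^ s * expDensity θ b x = θ * Gamma (s + 1) * b ^ s := by
  have hgamma := integral_rpow_mul_exp_neg_mul_Ioi (a := s + 1) (neg_lt_iff_pos_add.1 hs)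
    (inv_pos.2 hb)
  calc ∫ x in Ioi (0 : ℝ), x ^ s * expDensity θ b x
      = ∫ x in Ioi (0 : ℝ), θ / b * (x ^ (s + 1 - 1) * exp (-(b⁻¹ * x))) := by
        refine integral_congr_ae (.of_forall fun x => ?_)
        simp only [expDensity, add_sub_cancel_right]
        ring_nf
    _ = θ * Gamma (s + 1) * b ^ s := by
        rw [integral_const_mul, hgamma, one_div, inv_inv, rpow_add hb, rpow_one]
        field_simp

lemma integrableOn_expDensity (hb : 0 < b) (a : ℝ) : IntegrableOn (expDensity θ b) (Ioi a) := by
  have h := (integrableOn_exp_mul_Ioi (neg_neg_of_pos (inv_pos.2 hb)) a).const_mul (θ / b)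
  refine h.congr (.of_forall fun x => ?_)
  simp only [expDensity]
  ring_nf

lemma integral_expDensity_Ioi (hb : 0 < b) (a : ℝ) :
    ∫ x in Ioi a, expDensity θ b x = θ * exp (-(a / b)) := by
  calc ∫ x in Ioi a, expDensity θ b x = ∫ x in Ioi a, θ / b * exp (-b⁻¹ * x) := by
        refine integral_congr_ae (.of_forall fun x => ?_)
        simp only [expDensity]
        ring_nf
    _ = θ * exp (-(a / b)) := by
        rw [integral_const_mul, integral_exp_mul_Ioi (neg_neg_of_pos (inv_pos.2 hb)),
          neg_div_neg_eq, div_inv_eq_mul, neg_mul, inv_mul_eq_div]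
        field_simp

end ExpDensity

/-- The function `f` is nonnegative and log-concave on the line; this is the condition on the
density in `IsLogConcave`. -/
structure LogConcave (f : ℝ → ℝ) : Prop where
  nonneg : ∀ x, 0 ≤ f x
  rpow_mul_rpow_le :
    ∀ x y l : ℝ, 0 ≤ l → l ≤ 1 → f x ^ l * f y ^ (1 - l) ≤ f (l * x + (1 - l) * y)

namespace LogConcave

variable {f : ℝ → ℝ} {θ b : ℝ}

lemma comp_neg (hf : LogConcave f) : LogConcave fun x => f (-x) where
  nonneg x := hf.nonneg (-x)
  rpow_mul_rpow_le x y l hl0 hl1 := by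
    convert! hf.rpow_mul_rpow_le (-x) (-y) l hl0 hl1 using 2
    ring

lemma convex_setOf_le (hf : LogConcave f) {c : ℝ} (hc : 0 < c) : Convex ℝ {x | c ≤ f x} := by
  intro x (hx : c ≤ f x) y (hy : c ≤ f y) l l' hl hl' hll'
  obtain rfl : l' = 1 - l := by linarith
  calc c = c ^ l * c ^ (1 - l) := by rw [← rpow_add hc, add_sub_cancel, rpow_one]
    _ ≤ f x ^ l * f y ^ (1 - l) := by have := hf.nonneg x; gcongr
    _ ≤ f (l * x + (1 - l) * y) := hf.rpow_mul_rpow_le x y l hl (by linarith)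

lemma measurable (hf : LogConcave f) : Measurable f := by
  refine measurable_of_Ici fun c => ?_
  rcases le_or_gt c 0 with hc | hc
  · have huniv : f ⁻¹' Ici c = univ := eq_univ_of_forall fun x => hc.trans (hf.nonneg x)
    rw [huniv]
    exact MeasurableSet.univ
  · exact (hf.convex_setOf_le hc).ordConnected.measurableSet

lemma ordConnected_setOf_expDensity_le (hf : LogConcave f) (hθ : 0 < θ) (hb : 0 < b) :
    {x | expDensity θ b x ≤ f x}.OrdConnected := by
  refine Convex.ordConnected fun x hx y hy l l' hl hl' hll' => ?_
  obtain rfl : l' = 1 - l := by linarith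
  have hgx := expDensity_pos hθ hb x
  have hgy := expDensity_pos hθ hb y
  calc expDensity θ b (l * x + (1 - l) * y)
      = expDensity θ b x ^ l * expDensity θ b y ^ (1 - l) :=
        (expDensity_rpow_mul_rpow hθ hb x y l).symm
    _ ≤ f x ^ l * f y ^ (1 - l) :=
        mul_le_mul (rpow_le_rpow hgx.le hx hl) (rpow_le_rpow hgy.le hy hl') (by positivity)
          (rpow_nonneg (hf.nonneg x) l)
    _ ≤ f (l * x + (1 - l) * y) := hf.rpow_mul_rpow_le x y l hl (by linarith)

lemma expDensity_lt_of_lt_of_lt (hf : LogConcave f) (hθ : 0 < θ) (hb : 0 < b) {x y z : ℝ}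
    (hxy : x < y) (hyz : y < z) (hx : expDensity θ b x < f x) (hz : expDensity θ b z ≤ f z) :
    expDensity θ b y < f y := by
  have hy : y ∈ openSegment ℝ x z := by
    rw [openSegment_eq_Ioo (hxy.trans hyz)]
    exact ⟨hxy, hyz⟩
  obtain ⟨l, l', hl, hl', hll', rfl⟩ := hy
  obtain rfl : l' = 1 - l := by linarith
  have hgx := expDensity_pos hθ hb x
  have hgz := expDensity_pos hθ hb z
  calc expDensity θ b (l * x + (1 - l) * z)
      = expDensity θ b x ^ l * expDensity θ b z ^ (1 - l) :=
        (expDensity_rpow_mul_rpow hθ hb x z l).symm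
    _ < f x ^ l * f z ^ (1 - l) :=
        mul_lt_mul (rpow_lt_rpow hgx.le hx hl) (rpow_le_rpow hgz.le hz hl'.le) (by positivity)
          (rpow_nonneg (hf.nonneg x) l)
    _ ≤ f (l * x + (1 - l) * z) := hf.rpow_mul_rpow_le x z l hl.le (by linarith)

lemma exists_le_expDensity (hf : LogConcave f) (hfi : IntegrableOn f (Ioi 0)) :
    ∃ c θ b : ℝ, 0 ≤ c ∧ 0 < b ∧ ∀ x > c, f x ≤ expDensity θ b x := by
  by_cases! hpos : ∃ a > 0, 0 < f a
  swap
  · exact ⟨0, 1, 1, le_rfl, one_pos, fun x hx =>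
      (hpos x hx).trans (expDensity_pos one_pos one_pos x).le⟩
  obtain ⟨a, ha, hfa⟩ := hpos
  obtain ⟨c, hac, hfc⟩ : ∃ c > a, f c < f a := by
    by_contra! hge
    have hconst : IntegrableOn (fun _ => f a) (Ioi a) := by
      refine Integrable.mono' (hfi.mono_set (Ioi_subset_Ioi ha.le)) aestronglyMeasurable_const ?_
      filter_upwards [ae_restrict_mem measurableSet_Ioi] with x hx
      rw [norm_of_nonneg hfa.le]
      exact hge x hx
    simp [integrableOn_const_iff, hfa.ne'] at hconst
  have hfc0 := hf.nonneg c
  obtain ⟨θ, b, hθ, hb, hga, hgc⟩ :=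
    exists_expDensity_eq (u := f a) (v := (f a + f c) / 2) hac (by linarith) (by linarith)
  refine ⟨c, θ, b, (ha.trans hac).le, hb, fun x hx => le_of_not_ge fun hgx => ?_⟩
  have hle : expDensity θ b c ≤ f c :=
    (hf.ordConnected_setOf_expDensity_le hθ hb).out hga.le hgx ⟨hac.le, le_of_lt hx⟩
  linarith

lemma integrableOn_rpow_mul (hf : LogConcave f) (hfi : IntegrableOn f (Ioi 0)) {s : ℝ}
    (hs : 0 ≤ s) : IntegrableOn (fun x => x ^ s * f x) (Ioi 0) := by
  obtain ⟨c, θ, b, hc, hb, hfg⟩ := hf.exists_le_expDensity hfi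
  have hmeas : Measurable fun x : ℝ => x ^ s * f x :=
    (measurable_id.pow_const s).mul hf.measurable
  rw [← Ioc_union_Ioi_eq_Ioi hc]
  refine IntegrableOn.union ?_ ?_
  · refine Integrable.mono' ((hfi.mono_set Ioc_subset_Ioi_self).const_mul (c ^ s))
      hmeas.aestronglyMeasurable ?_
    filter_upwards [ae_restrict_mem measurableSet_Ioc] with x hx
    rw [norm_of_nonneg (mul_nonneg (rpow_nonneg hx.1.le s) (hf.nonneg x))]
    exact mul_le_mul_of_nonneg_right (rpow_le_rpow hx.1.le hx.2 hs) (hf.nonneg x)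
  · have hg : IntegrableOn (fun x => x ^ s * expDensity θ b x) (Ioi c) :=
      (integrableOn_rpow_mul_expDensity (by linarith) hb).mono_set (Ioi_subset_Ioi hc)
    refine Integrable.mono' hg hmeas.aestronglyMeasurable ?_
    filter_upwards [ae_restrict_mem measurableSet_Ioi] with x hx
    have hx0 : 0 ≤ x ^ s := rpow_nonneg (hc.trans (le_of_lt hx)) s
    rw [norm_of_nonneg (mul_nonneg hx0 (hf.nonneg x))]
    exact mul_le_mul_of_nonneg_left (hfg x hx) hx0

lemma integral_rpow_mul_eq_zero (hf : LogConcave f) (hfi : IntegrableOn f (Ioi 0)) {s : ℝ}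
    (hs : 0 ≤ s) (hzero : ∫ x in Ioi (0 : ℝ), x ^ s * f x = 0) (t : ℝ) :
    ∫ x in Ioi (0 : ℝ), x ^ t * f x = 0 := by
  have hae := (setIntegral_eq_zero_iff_of_nonneg_ae
    (ae_restrict_of_forall_mem measurableSet_Ioi fun x hx =>
      mul_nonneg (rpow_nonneg (le_of_lt hx) s) (hf.nonneg x))
    (hf.integrableOn_rpow_mul hfi hs)).1 hzero
  refine integral_eq_zero_of_ae ?_
  filter_upwards [hae, ae_restrict_mem measurableSet_Ioi] with x hx hx0
  simp only [(mul_eq_zero.1 hx).resolve_left (rpow_pos_of_pos hx0 s).ne', mul_zero, Pi.zero_apply]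

lemma integrable_abs_rpow_mul (hf : LogConcave f) (hfi : Integrable f) {s : ℝ} (hs : 0 ≤ s) :
    Integrable fun x => |x| ^ s * f x := by
  have hpos : IntegrableOn (fun x => |x| ^ s * f x) (Ioi 0) :=
    (hf.integrableOn_rpow_mul hfi.integrableOn hs).congr_fun
      (fun x hx => by simp only [abs_of_pos (mem_Ioi.1 hx)]) measurableSet_Ioi
  have hneg : IntegrableOn (fun x => |x| ^ s * f (-x)) (Ioi 0) :=
    (hf.comp_neg.integrableOn_rpow_mul hfi.comp_neg.integrableOn hs).congr_fun
      (fun x hx => by simp only [abs_of_pos (mem_Ioi.1 hx)]) measurableSet_Ioi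
  rw [← integrableOn_univ, ← Iio_union_Ici (a := (0 : ℝ)), integrableOn_union,
    integrableOn_Ici_iff_integrableOn_Ioi]
  exact ⟨by simpa using hneg.comp_neg, hpos⟩

lemma integral_abs_rpow_mul (hf : LogConcave f) (hfi : Integrable f) {s : ℝ} (hs : 0 ≤ s) :
    ∫ x, |x| ^ s * f x =
      (∫ x in Ioi (0 : ℝ), x ^ s * f x) + ∫ x in Ioi (0 : ℝ), x ^ s * f (-x) := by
  have hint := hf.integrable_abs_rpow_mul hfi hs
  have hpos : ∫ x in Ioi (0 : ℝ), |x| ^ s * f x = ∫ x in Ioi (0 : ℝ), x ^ s * f x :=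
    setIntegral_congr_fun measurableSet_Ioi fun x hx => by
      simp only [abs_of_pos (mem_Ioi.1 hx)]
  have hneg : ∫ x in Iic (0 : ℝ), |x| ^ s * f x = ∫ x in Ioi (0 : ℝ), x ^ s * f (-x) := by
    rw [← neg_zero, ← integral_comp_neg_Ioi 0 fun x => |x| ^ s * f x, neg_zero]
    exact setIntegral_congr_fun measurableSet_Ioi fun x hx => by
      simp only [abs_neg, abs_of_pos (mem_Ioi.1 hx)]
  rw [← intervalIntegral.integral_Iic_add_Ioi hint.integrableOn hint.integrableOn, hneg, hpos,
    add_comm]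

lemma rpow_mul_integral_Ioi_le (hf : LogConcave f) (hfi : IntegrableOn f (Ioi 0)) {c s : ℝ}
    (hc : 0 ≤ c) (hs : 0 ≤ s) :
    c ^ s * ∫ x in Ioi c, f x ≤ ∫ x in Ioi (0 : ℝ), x ^ s * f x := by
  have hint := hf.integrableOn_rpow_mul hfi hs
  have hsub : Ioi c ⊆ Ioi 0 := Ioi_subset_Ioi hc
  calc c ^ s * ∫ x in Ioi c, f x = ∫ x in Ioi c, c ^ s * f x := (integral_const_mul _ _).symm
    _ ≤ ∫ x in Ioi c, x ^ s * f x :=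
        setIntegral_mono_on ((hfi.mono_set hsub).const_mul _) (hint.mono_set hsub)
          measurableSet_Ioi fun x hx =>
            mul_le_mul_of_nonneg_right (rpow_le_rpow hc (le_of_lt hx) hs) (hf.nonneg x)
    _ ≤ ∫ x in Ioi (0 : ℝ), x ^ s * f x :=
        setIntegral_mono_set hint
          (ae_restrict_of_forall_mem measurableSet_Ioi fun x hx =>
            mul_nonneg (rpow_nonneg (le_of_lt hx) s) (hf.nonneg x))
          hsub.eventuallyLE

end LogConcave

/-- On `(0, ∞)` the nonzero function `f` has the same mass and the same `q`-th moment as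
`expDensity θ b`. -/
structure MatchesExpDensity (f : ℝ → ℝ) (q θ b : ℝ) : Prop where
  mass_pos : 0 < θ
  mean_pos : 0 < b
  integral_eq : ∫ x in Ioi (0 : ℝ), f x = θ
  integral_rpow_eq : ∫ x in Ioi (0 : ℝ), x ^ q * f x = θ * Gamma (q + 1) * b ^ q

namespace LogConcave

variable {f : ℝ → ℝ} {p q θ b κ : ℝ}

lemma exists_matchesExpDensity (hf : LogConcave f) (hfi : IntegrableOn f (Ioi 0)) (hq : 0 < q)
    (hne : ∫ x in Ioi (0 : ℝ), x ^ q * f x ≠ 0) : ∃ θ b, MatchesExpDensity f q θ b := by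
  set θ := ∫ x in Ioi (0 : ℝ), f x
  set A := ∫ x in Ioi (0 : ℝ), x ^ q * f x
  have hθ : 0 < θ := by
    refine (integral_nonneg hf.nonneg).lt_of_ne' fun hzero => hne ?_
    exact hf.integral_rpow_mul_eq_zero hfi le_rfl (by simpa only [rpow_zero, one_mul]) q
  have hA : 0 < A := (setIntegral_nonneg measurableSet_Ioi fun x hx =>
    mul_nonneg (rpow_nonneg (le_of_lt hx) q) (hf.nonneg x)).lt_of_ne' hne
  have hΓ : 0 < Gamma (q + 1) := Gamma_pos_of_pos (by linarith)
  refine ⟨θ, (A / (θ * Gamma (q + 1))) ^ q⁻¹, hθ, by positivity, rfl, ?_⟩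
  rw [rpow_inv_rpow (by positivity) hq.ne', mul_div_cancel₀ _ (mul_pos hθ hΓ).ne']

lemma hasVanishingMoments_sub (hf : LogConcave f) (hfi : IntegrableOn f (Ioi 0)) (hq : 0 < q)
    (hm : MatchesExpDensity f q θ b) : HasVanishingMoments q fun x => f x - expDensity θ b x := by
  have hb := hm.mean_pos
  have hfq := hf.integrableOn_rpow_mul hfi hq.le
  have hg : IntegrableOn (expDensity θ b) (Ioi 0) := integrableOn_expDensity hb 0
  have hgq : IntegrableOn (fun x => x ^ q * expDensity θ b x) (Ioi 0) :=
    integrableOn_rpow_mul_expDensity (by linarith) hb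
  refine ⟨hfi.sub hg, ?_, ?_, ?_⟩
  · simp only [mul_sub]
    exact hfq.sub hgq
  · rw [integral_sub hfi hg, hm.integral_eq, integral_expDensity_Ioi hb, zero_div, neg_zero,
      exp_zero, mul_one, sub_self]
  · simp only [mul_sub]
    rw [integral_sub hfq hgq, hm.integral_rpow_eq, integral_rpow_mul_expDensity (by linarith) hb,
      sub_self]

lemma integral_rpow_mul_le (hf : LogConcave f) (hfi : IntegrableOn f (Ioi 0)) (hq : 0 < q)
    (hpq : q ≤ p) (hm : MatchesExpDensity f q θ b) :
    ∫ x in Ioi (0 : ℝ), x ^ p * f x ≤ θ * Gamma (p + 1) * b ^ p := by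
  have hp : 0 ≤ p := hq.le.trans hpq
  have hfp := hf.integrableOn_rpow_mul hfi hp
  have hgp : IntegrableOn (fun x => x ^ p * expDensity θ b x) (Ioi 0) :=
    integrableOn_rpow_mul_expDensity (by linarith) hm.mean_pos
  have hconn : {x | 0 ≤ f x - expDensity θ b x}.OrdConnected := by
    simpa only [sub_nonneg] using hf.ordConnected_setOf_expDensity_le hm.mass_pos hm.mean_pos
  have hle := (hf.hasVanishingMoments_sub hfi hq hm).integral_rpow_mul_nonpos hq hpq
    (by simp only [mul_sub]; exact hfp.sub hgp) hconn
  simp only [mul_sub] at hle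
  rwa [integral_sub hfp hgp, integral_rpow_mul_expDensity (by linarith) hm.mean_pos,
    sub_nonpos] at hle

lemma le_expDensity_of_nonpos (hf : LogConcave f) (hfi : IntegrableOn f (Ioi 0)) (hq : 0 < q)
    (hm : MatchesExpDensity f q θ b) {x : ℝ} (hx : x ≤ 0) : f x ≤ expDensity θ b x := by
  refine sub_nonpos.1 ((hf.hasVanishingMoments_sub hfi hq hm).nonpos_of_nonpos hq ?_ hx)
  intro x y z hxy hyz hfx hfz
  exact sub_pos.2 (hf.expDensity_lt_of_lt_of_lt hm.mass_pos hm.mean_pos hxy hyz (sub_pos.1 hfx)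
    (sub_nonneg.1 hfz))

lemma integral_Ioi_le (hf : LogConcave f) (hfi : Integrable f) (hq : 0 < q)
    (hm : MatchesExpDensity f q θ b) {a : ℝ} (ha : a ≤ 0) :
    ∫ x in Ioi a, f x ≤ θ * exp (-(a / b)) := by
  have hg : IntegrableOn (expDensity θ b) (Ioi a) := integrableOn_expDensity hm.mean_pos a
  have split (u : ℝ → ℝ) (hu : IntegrableOn u (Ioi a)) :
      ∫ x in Ioi a, u x = (∫ x in Ioc a 0, u x) + ∫ x in Ioi 0, u x := by
    rw [← setIntegral_union (Ioc_disjoint_Ioi le_rfl) measurableSet_Ioi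
      (hu.mono_set Ioc_subset_Ioi_self) (hu.mono_set (Ioi_subset_Ioi ha)),
      Ioc_union_Ioi_eq_Ioi ha]
  have hIoi : ∫ x in Ioi (0 : ℝ), f x = ∫ x in Ioi (0 : ℝ), expDensity θ b x := by
    rw [hm.integral_eq, integral_expDensity_Ioi hm.mean_pos, zero_div, neg_zero, exp_zero, mul_one]
  rw [← integral_expDensity_Ioi hm.mean_pos, split f hfi.integrableOn, split _ hg, hIoi]
  refine add_le_add_left ?_ _
  exact setIntegral_mono_on hfi.integrableOn (hg.mono_set Ioc_subset_Ioi_self) measurableSet_Ioc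
    fun x hx => hf.le_expDensity_of_nonpos hfi.integrableOn hq hm hx.2

lemma rpow_mul_integral_le (hf : LogConcave f) (hfi : Integrable f) (hq : 0 < q)
    (hm : MatchesExpDensity f q θ b) (hκ : 0 < κ) (hκΓ : exp κ * κ ^ q ≤ Gamma (q + 1)) :
    (b * κ) ^ q * ∫ x, f x ≤ ∫ x, |x| ^ q * f x := by
  have hθ := hm.mass_pos
  have hb := hm.mean_pos
  have hright : (b * κ) ^ q * ∫ x in Ioi (-(b * κ)), f x ≤ ∫ x in Ioi (0 : ℝ), x ^ q * f x :=
    calc (b * κ) ^ q * ∫ x in Ioi (-(b * κ)), f x ≤ (b * κ) ^ q * (θ * exp κ) := by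
          gcongr
          convert! hf.integral_Ioi_le hfi hq hm (neg_nonpos.2 (mul_pos hb hκ).le) using 3
          field_simp
      _ = θ * (exp κ * κ ^ q) * b ^ q := by rw [mul_rpow hb.le hκ.le]; ring
      _ ≤ θ * Gamma (q + 1) * b ^ q := by gcongr
      _ = ∫ x in Ioi (0 : ℝ), x ^ q * f x := hm.integral_rpow_eq.symm
  have hleft : (b * κ) ^ q * ∫ x in Iic (-(b * κ)), f x ≤ ∫ x in Ioi (0 : ℝ), x ^ q * f (-x) := by
    rw [← integral_comp_neg_Ioi]
    exact hf.comp_neg.rpow_mul_integral_Ioi_le hfi.comp_neg.integrableOn (mul_pos hb hκ).le hq.le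
  rw [← intervalIntegral.integral_Iic_add_Ioi (b := -(b * κ)) hfi.integrableOn hfi.integrableOn,
    mul_add, hf.integral_abs_rpow_mul hfi hq.le]
  linarith

lemma integral_Ioi_rpow_mul_le (hf : LogConcave f) (hfi : Integrable f) (hmass : ∫ x, f x = 1)
    (hq : 0 < q) (hpq : q ≤ p) (hκ : 0 < κ) (hκΓ : exp κ * κ ^ q ≤ Gamma (q + 1)) :
    ∫ x in Ioi (0 : ℝ), x ^ p * f x ≤ Gamma (p + 1) / Gamma (q + 1) *
      ((∫ x, |x| ^ q * f x) ^ (1 / q) / κ) ^ (p - q) * ∫ x in Ioi (0 : ℝ), x ^ q * f x := by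
  by_cases hne : ∫ x in Ioi (0 : ℝ), x ^ q * f x = 0
  · rw [hf.integral_rpow_mul_eq_zero hfi.integrableOn hq.le hne p, hne, mul_zero]
  obtain ⟨θ, b, hm⟩ := hf.exists_matchesExpDensity hfi.integrableOn hq hne
  have hθ := hm.mass_pos
  have hb := hm.mean_pos
  have hΓp : 0 < Gamma (p + 1) := Gamma_pos_of_pos (by linarith)
  have hΓq : 0 < Gamma (q + 1) := Gamma_pos_of_pos (by linarith)
  have hscale : b ≤ (∫ x, |x| ^ q * f x) ^ (1 / q) / κ := by
    have h := hf.rpow_mul_integral_le hfi hq hm hκ hκΓ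
    rw [hmass, mul_one] at h
    rw [le_div_iff₀ hκ, one_div]
    exact (le_rpow_inv_iff_of_pos (by positivity) ((rpow_nonneg (by positivity) q).trans h) hq).2 h
  calc ∫ x in Ioi (0 : ℝ), x ^ p * f x ≤ θ * Gamma (p + 1) * b ^ p :=
        hf.integral_rpow_mul_le hfi.integrableOn hq hpq hm
    _ = Gamma (p + 1) / Gamma (q + 1) * b ^ (p - q) * (θ * Gamma (q + 1) * b ^ q) := by
        rw [rpow_sub hb]
        field_simp [hΓq.ne']
    _ = Gamma (p + 1) / Gamma (q + 1) * b ^ (p - q) * ∫ x in Ioi (0 : ℝ), x ^ q * f x := by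
        rw [hm.integral_rpow_eq]
    _ ≤ _ := by
        have hA : 0 ≤ ∫ x in Ioi (0 : ℝ), x ^ q * f x := by
          rw [hm.integral_rpow_eq]
          positivity
        gcongr

theorem integral_abs_rpow_mul_le (hf : LogConcave f) (hfi : Integrable f) (hmass : ∫ x, f x = 1)
    (hq : 0 < q) (hpq : q ≤ p) (hκ : 0 < κ) (hκΓ : exp κ * κ ^ q ≤ Gamma (q + 1)) :
    ∫ x, |x| ^ p * f x ≤ Gamma (p + 1) / Gamma (q + 1) *
      ((∫ x, |x| ^ q * f x) ^ (1 / q) / κ) ^ (p - q) * ∫ x, |x| ^ q * f x := by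
  have hpos := hf.integral_Ioi_rpow_mul_le hfi hmass hq hpq hκ hκΓ
  have hmass_neg : ∫ x, f (-x) = 1 := (integral_neg_eq_self f volume).trans hmass
  have hmoment_neg : ∫ x, |x| ^ q * f (-x) = ∫ x, |x| ^ q * f x := by
    simpa only [abs_neg] using integral_neg_eq_self (fun x => |x| ^ q * f x) volume
  have hneg := hf.comp_neg.integral_Ioi_rpow_mul_le hfi.comp_neg hmass_neg hq hpq hκ hκΓ
  rw [hmoment_neg] at hneg
  set C := Gamma (p + 1) / Gamma (q + 1) * ((∫ x, |x| ^ q * f x) ^ (1 / q) / κ) ^ (p - q)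
  rw [hf.integral_abs_rpow_mul hfi (hq.le.trans hpq), hf.integral_abs_rpow_mul hfi hq.le, mul_add]
  exact add_le_add hpos hneg

end LogConcave

section LogGamma

variable {x : ℝ}

lemma log_Gamma_add_one (hx : 0 < x) : log (Gamma (x + 1)) = log x + log (Gamma x) := by
  rw [Gamma_add_one hx.ne', log_mul hx.ne' (Gamma_pos_of_pos hx).ne']

lemma differentiableAt_log_comp_Gamma (hx : 0 < x) : DifferentiableAt ℝ (log ∘ Gamma) x :=
  (differentiableAt_log (Gamma_pos_of_pos hx).ne').comp x <| differentiableAt_Gamma fun m =>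
    (lt_of_le_of_lt (neg_nonpos.2 m.cast_nonneg) hx).ne'

lemma deriv_log_comp_Gamma_le_log (hx : 0 < x) : deriv (log ∘ Gamma) x ≤ log x := by
  have h := convexOn_log_Gamma.deriv_le_slope (mem_Ioi.2 hx) (mem_Ioi.2 (by linarith))
    (lt_add_one x) (differentiableAt_log_comp_Gamma hx)
  simpa [slope_def_field, log_Gamma_add_one hx] using h

lemma log_le_deriv_log_comp_Gamma_add_one (hx : 0 < x) :
    log x ≤ deriv (log ∘ Gamma) (x + 1) := by
  have h := convexOn_log_Gamma.slope_le_deriv (mem_Ioi.2 hx) (mem_Ioi.2 (by linarith))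
    (lt_add_one x) (differentiableAt_log_comp_Gamma (by linarith))
  simpa [slope_def_field, log_Gamma_add_one hx] using h

lemma hasDerivAt_mul_log_sub_self (hx : x ≠ 0) :
    HasDerivAt (fun x => x * log x - x) (log x) x :=
  ((hasDerivAt_mul_log hx).sub (hasDerivAt_id x)).congr_deriv (by ring)

lemma antitoneOn_log_Gamma_sub :
    AntitoneOn (fun x => log (Gamma x) - (x * log x - x)) (Ioi 0) := by
  have hderiv (x : ℝ) (hx : 0 < x) : HasDerivAt (fun x => log (Gamma x) - (x * log x - x))
      (deriv (log ∘ Gamma) x - log x) x :=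
    (differentiableAt_log_comp_Gamma hx).hasDerivAt.sub (hasDerivAt_mul_log_sub_self hx.ne')
  refine antitoneOn_of_hasDerivWithinAt_nonpos (convex_Ioi 0)
    (fun x hx => (hderiv x hx).continuousAt.continuousWithinAt)
    (fun x hx => (hderiv x (interior_subset hx)).hasDerivWithinAt) fun x hx => ?_
  exact sub_nonpos.2 (deriv_log_comp_Gamma_le_log (interior_subset hx))

lemma monotoneOn_log_Gamma_add_one_sub :
    MonotoneOn (fun x => log (Gamma (x + 1)) - (x * log x - x)) (Ioi 0) := by
  have hderiv (x : ℝ) (hx : 0 < x) : HasDerivAt (fun x => log (Gamma (x + 1)) - (x * log x - x))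
      (deriv (log ∘ Gamma) (x + 1) - log x) x :=
    ((differentiableAt_log_comp_Gamma (by linarith)).hasDerivAt.comp_add_const x 1).sub
      (hasDerivAt_mul_log_sub_self hx.ne')
  refine monotoneOn_of_hasDerivWithinAt_nonneg (convex_Ioi 0)
    (fun x hx => (hderiv x hx).continuousAt.continuousWithinAt)
    (fun x hx => (hderiv x (interior_subset hx)).hasDerivWithinAt) fun x hx => ?_
  exact sub_nonneg.2 (log_le_deriv_log_comp_Gamma_add_one (interior_subset hx))

lemma one_add_mul_log_sub_self_le_log_Gamma (hx : 1 ≤ x) :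
    1 + (x * log x - x) ≤ log (Gamma (x + 1)) := by
  have h := monotoneOn_log_Gamma_add_one_sub (mem_Ioi.2 one_pos) (mem_Ioi.2 (one_pos.trans_le hx))
    hx
  norm_num at h
  linarith

end LogGamma

section LambertScale

/-- The scale `κ = w q e^(w/q)`. With it, Stirling-type monotonicity of `Γ` reduces the bound
`Γ (p + 1) / Γ (q + 1) ≤ (e^w p/q)^p κ^(p-q)` to `log (p / q) ≤ w p / q + (q - 1) w`, which for
`q = 2` is the tangent-line inequality `log t ≤ t - 1` at `t = w p / q`. -/
noncomputable def lambertScale (w q : ℝ) : ℝ :=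
  w * q * exp (w / q)

variable {w p q : ℝ}

lemma lambertScale_pos (hw : 0 < w) (hq : 0 < q) : 0 < lambertScale w q := by
  unfold lambertScale
  positivity

lemma log_eq_of_mul_exp_eq (hw : 0 < w) (hwe : w * exp w = exp (-1)) : log w = -1 - w := by
  have h := congrArg log hwe
  rw [log_mul hw.ne' (exp_pos w).ne', log_exp, log_exp] at h
  linarith

lemma log_lambertScale (hw : 0 < w) (hwe : w * exp w = exp (-1)) (hq : 0 < q) :
    log (lambertScale w q) = -1 - w + log q + w / q := by
  rw [lambertScale, log_mul (by positivity) (exp_pos _).ne', log_mul hw.ne' hq.ne', log_exp,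
    log_eq_of_mul_exp_eq hw hwe]

lemma lambertScale_le (hw : 0 < w) (hwe : w * exp w = exp (-1)) (hq : 1 ≤ q) :
    lambertScale w q ≤ 1 - w + w * q := by
  have hq0 : 0 < q := one_pos.trans_le hq
  have bernoulli : 1 + q * (exp (w / q) - 1) ≤ exp w := by
    have h := one_add_mul_self_le_rpow_one_add (s := exp (w / q) - 1)
      (by linarith [exp_pos (w / q)]) hq
    rwa [add_sub_cancel, ← exp_mul, div_mul_cancel₀ _ hq0.ne'] at h
  have hle : w * (1 + q * (exp (w / q) - 1)) ≤ 1 :=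
    calc w * (1 + q * (exp (w / q) - 1)) ≤ w * exp w := by gcongr
      _ = exp (-1) := hwe
      _ ≤ 1 := exp_le_one_iff.2 (by norm_num)
  rw [lambertScale]
  linarith

lemma exp_mul_rpow_lambertScale_le (hw : 0 < w) (hwe : w * exp w = exp (-1)) (hq : 1 ≤ q) :
    exp (lambertScale w q) * lambertScale w q ^ q ≤ Gamma (q + 1) := by
  have hq0 : 0 < q := one_pos.trans_le hq
  have hκ := lambertScale_pos hw hq0
  rw [← log_le_log_iff (by positivity) (Gamma_pos_of_pos (by linarith)),
    log_mul (exp_pos _).ne' (by positivity), log_exp, log_rpow hκ, log_lambertScale hw hwe hq0]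
  calc lambertScale w q + q * (-1 - w + log q + w / q)
      = lambertScale w q + w - w * q + (q * log q - q) := by field_simp; ring
    _ ≤ 1 + (q * log q - q) := by linarith [lambertScale_le hw hwe hq]
    _ ≤ log (Gamma (q + 1)) := one_add_mul_log_sub_self_le_log_Gamma hq

lemma Gamma_div_Gamma_le (hw : 0 < w) (hwe : w * exp w = exp (-1)) (hq2 : 2 ≤ q) (hpq : q ≤ p) :
    Gamma (p + 1) / Gamma (q + 1) ≤ (exp w * (p / q)) ^ p * lambertScale w q ^ (p - q) := by
  have hq : 0 < q := two_pos.trans_le hq2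
  have hp : 0 < p := hq.trans_le hpq
  have hκ := lambertScale_pos hw hq
  have hΓp : 0 < Gamma (p + 1) := Gamma_pos_of_pos (by linarith)
  have hΓq : 0 < Gamma (q + 1) := Gamma_pos_of_pos (by linarith)
  have hΓ : log (Gamma p) - (p * log p - p) ≤ log (Gamma q) - (q * log q - q) :=
    antitoneOn_log_Gamma_sub hq hp hpq
  have htangent : -1 - w + (log p - log q) ≤ w * (p / q) - 1 := by
    have h := log_le_sub_one_of_pos (mul_pos hw (div_pos hp hq))
    rwa [log_mul hw.ne' (div_pos hp hq).ne', log_div hp.ne' hq.ne',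
      log_eq_of_mul_exp_eq hw hwe] at h
  rw [← log_le_log_iff (by positivity) (by positivity), log_div hΓp.ne' hΓq.ne',
    log_Gamma_add_one hp, log_Gamma_add_one hq, log_mul (by positivity) (by positivity),
    log_rpow (by positivity), log_rpow hκ, log_mul (exp_pos w).ne' (div_pos hp hq).ne', log_exp,
    log_div hp.ne' hq.ne', log_lambertScale hw hwe hq]
  have hexponent : (p - q) * (w / q) = w * (p / q) - w := by field_simp
  have hwq : w * 2 ≤ w * q := mul_le_mul_of_nonneg_left hq2 hw.le
  linarith

end LambertScale

lemma LogConcave.integral_abs_rpow_mul_le_rpow {f : ℝ → ℝ} (hf : LogConcave f)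
    (hmass : ∫ x, f x = 1) {w p q : ℝ} (hw : 0 < w) (hwe : w * exp w = exp (-1)) (hq : 2 ≤ q)
    (hpq : q ≤ p) :
    ∫ x, |x| ^ p * f x ≤ (exp w * (p / q) * (∫ x, |x| ^ q * f x) ^ (1 / q)) ^ p := by
  have hq0 : 0 < q := two_pos.trans_le hq
  have hp0 : 0 < p := hq0.trans_le hpq
  have hκ := lambertScale_pos hw hq0
  have hM : 0 ≤ ∫ x, |x| ^ q * f x :=
    integral_nonneg fun x => mul_nonneg (rpow_nonneg (abs_nonneg x) q) (hf.nonneg x)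
  have hle := hf.integral_abs_rpow_mul_le (integrable_of_integral_eq_one hmass) hmass hq0 hpq hκ
    (exp_mul_rpow_lambertScale_le hw hwe (one_le_two.trans hq))
  set M := ∫ x, |x| ^ q * f x
  set κ := lambertScale w q
  set N := M ^ (1 / q)
  have hN : 0 ≤ N := rpow_nonneg hM _
  have hNq : N ^ q = M := by rw [← rpow_mul hM, one_div_mul_cancel hq0.ne', rpow_one]
  have hpq' : 0 ≤ p - q := sub_nonneg.2 hpq
  calc ∫ x, |x| ^ p * f x ≤ Gamma (p + 1) / Gamma (q + 1) * (N / κ) ^ (p - q) * M := hle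
    _ ≤ (exp w * (p / q)) ^ p * κ ^ (p - q) * (N / κ) ^ (p - q) * M := by
        gcongr
        exact Gamma_div_Gamma_le hw hwe hq hpq
    _ = (exp w * (p / q)) ^ p * (N ^ (p - q) * N ^ q) := by
        rw [hNq, mul_assoc _ (κ ^ _), ← mul_rpow hκ.le (by positivity), mul_div_cancel₀ _ hκ.ne',
          mul_assoc]
    _ = (exp w * (p / q) * N) ^ p := by
        rw [← rpow_add_of_nonneg hN hpq' hq0.le, sub_add_cancel, ← mul_rpow (by positivity) hN]

lemma momNorm_dirac (c : ℝ) {s : ℝ} (hs : s ≠ 0) : momNorm (Measure.dirac c) s = |c| := by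
  rw [momNorm, integral_dirac, ← rpow_mul (abs_nonneg c), mul_one_div_cancel hs, rpow_one]

lemma momNorm_le_of_integral_le {μ : Measure ℝ} {s B : ℝ} (hs : 0 < s) (hB : 0 ≤ B)
    (h : ∫ x, |x| ^ s ∂μ ≤ B ^ s) : momNorm μ s ≤ B := by
  rw [momNorm, one_div]
  exact (rpow_inv_le_iff_of_pos (integral_nonneg fun x => rpow_nonneg (abs_nonneg x) s) hB hs).2 h

lemma LogConcave.integral_withDensity {f : ℝ → ℝ} (hf : LogConcave f) (g : ℝ → ℝ) :
    ∫ x, g x ∂volume.withDensity (fun x => ENNReal.ofReal (f x)) = ∫ x, g x * f x := by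
  rw [integral_withDensity_eq_integral_toReal_smul hf.measurable.ennreal_ofReal
    (.of_forall fun _ => ENNReal.ofReal_lt_top)]
  simp only [ENNReal.toReal_ofReal (hf.nonneg _), smul_eq_mul, mul_comm]

/-- For any log-concave real random variable `X` and any `p > q ≥ 2` one has
`‖X‖_p ≤ C₀ (p/q) ‖X‖_q`, where `C₀ = e^{W(1/e)}` and `W(1/e)` is the unique
positive real `w` with `w e^w = 1/e`. -/
theorem momNorm_le_logConcave_bestConst
    (w : ℝ) (hw : 0 < w) (hwe : w * Real.exp w = Real.exp (-1))
    (μ : Measure ℝ) (hμ : IsLogConcave μ)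
    (p q : ℝ) (hq : 2 ≤ q) (hpq : q < p) :
    momNorm μ p ≤ Real.exp w * (p / q) * momNorm μ q := by
  have hq0 : 0 < q := two_pos.trans_le hq
  have hp0 : 0 < p := hq0.trans hpq
  obtain ⟨_, ⟨c, rfl⟩ | ⟨f, hf0, rfl, hfl⟩⟩ := hμ
  · rw [momNorm_dirac c hp0.ne', momNorm_dirac c hq0.ne']
    exact le_mul_of_one_le_left (abs_nonneg c)
      (one_le_mul_of_one_le_of_one_le (one_le_exp hw.le) ((one_le_div₀ hq0).2 hpq.le))
  have hf : LogConcave f := ⟨hf0, hfl⟩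
  have hmass : ∫ x, f x = 1 := by
    simpa using (hf.integral_withDensity fun _ => 1).symm
  have hle := hf.integral_abs_rpow_mul_le_rpow hmass hw hwe hq hpq.le
  simp only [← hf.integral_withDensity] at hle
  refine momNorm_le_of_integral_le hp0 ?_ hle
  exact mul_nonneg (by positivity) (rpow_nonneg (integral_nonneg fun x => by positivity) _)
end

section
/- Let X be a log-concave real random variable which is symmetric (X has the same distribution as −X) or nonnegative (X ≥ 0 almost surely). Then for all real numbers p > q ≥ 1 one has ‖X‖_p ≤ (p/q)·‖X‖_q. -/
open MeasureTheory

/-!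
Replacing a log-concave `f` on `(0, ∞)` of mass one by the exponential density with the same tail
at a point `t` shows that its tail `G` satisfies `G (r * t) ≤ G t ^ r` for `r ≥ 1`: the set where
the exponential density is at most `f` is an interval, so the two densities cross in the right
order. By symmetry or nonnegativity, the tail of `|X|` has this form. For `r = p / q` and
`Y = |X| ^ q`, the layer cake formula then gives
`E (|X| / r) ^ p ≤ ∫ r * t ^ (r - 1) * P (Y > t) ^ r dt`, and the right-hand side is at most
`(∫ P (Y > t) dt) ^ r = (E |X| ^ q) ^ r`, because an antitone `h ≥ 0` with primitive `S` satisfies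
`t * h t ≤ S t`, whence `r * t ^ (r - 1) * h t ^ r ≤ (S ^ r)' t`.
-/

open Set Filter
open scoped ENNReal

section AntitoneIntegral

variable {h : ℝ → ℝ} {a b r : ℝ}

lemma mul_le_integral_of_antitone (hanti : Antitone h) (hab : a ≤ b) :
    (b - a) * h b ≤ ∫ t in a..b, h t := by
  simpa using intervalIntegral.integral_mono_on hab intervalIntegrable_const
    (hanti.intervalIntegrable (μ := volume)) fun t ht ↦ hanti ht.2

lemma continuous_integral_rpow_of_antitone (hanti : Antitone h) (hr : 0 ≤ r) :
    Continuous fun t ↦ (∫ u in a..t, h u) ^ r :=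
  (intervalIntegral.continuous_primitive (fun _ _ ↦ hanti.intervalIntegrable) a).rpow_const
    fun _ ↦ .inr hr

lemma intervalIntegrable_mul_integral_rpow_mul_of_antitone (hanti : Antitone h) (hr : 1 ≤ r) :
    IntervalIntegrable (fun t ↦ r * (∫ u in a..t, h u) ^ (r - 1) * h t) volume a b :=
  hanti.intervalIntegrable.continuousOn_mul <| Continuous.continuousOn <|
    continuous_const.mul (continuous_integral_rpow_of_antitone hanti (sub_nonneg.2 hr))

lemma integral_mul_integral_rpow_mul_of_antitone (hanti : Antitone h) (hab : a ≤ b) (hr : 1 ≤ r) :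
    ∫ t in a..b, r * (∫ u in a..t, h u) ^ (r - 1) * h t = (∫ t in a..b, h t) ^ r := by
  have hderiv : ∀ t, ContinuousAt h t →
      HasDerivAt (fun t ↦ (∫ u in a..t, h u) ^ r) (r * (∫ u in a..t, h u) ^ (r - 1) * h t) t := by
    intro t ht
    have hprim := intervalIntegral.integral_hasDerivAt_right (a := a) hanti.intervalIntegrable
      hanti.measurable.stronglyMeasurable.stronglyMeasurableAtFilter ht
    convert! hprim.rpow_const (.inr hr) using 1
    ring
  rw [integral_eq_of_hasDerivAt_off_countable_of_le (fun t ↦ (∫ u in a..t, h u) ^ r) _ hab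
    hanti.countable_not_continuousAt
    (continuous_integral_rpow_of_antitone hanti (zero_le_one.trans hr)).continuousOn
    (fun t ht ↦ hderiv t (not_not.mp ht.2))
    (intervalIntegrable_mul_integral_rpow_mul_of_antitone hanti hr)]
  simp [Real.zero_rpow (zero_lt_one.trans_le hr).ne']

lemma mul_rpow_mul_rpow_le_of_antitone (hanti : Antitone h) (hb : 0 ≤ b) (hhb : 0 ≤ h b)
    (hr : 1 ≤ r) : r * b ^ (r - 1) * h b ^ r ≤ r * (∫ t in 0..b, h t) ^ (r - 1) * h b := by
  calc r * b ^ (r - 1) * h b ^ r = r * (b * h b) ^ (r - 1) * h b := by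
        rw [← sub_add_cancel r 1, Real.rpow_add_of_nonneg hhb (by linarith) zero_le_one,
          Real.rpow_one, add_sub_cancel_right, Real.mul_rpow hb hhb]
        ring
    _ ≤ r * (∫ t in 0..b, h t) ^ (r - 1) * h b := by
        gcongr
        simpa using mul_le_integral_of_antitone hanti hb

lemma setLIntegral_Ioc_mul_rpow_mul_rpow_le_of_antitone (hanti : Antitone h) (hnn : ∀ t, 0 ≤ h t)
    (hb : 0 ≤ b) (hr : 1 ≤ r) :
    ∫⁻ t in Ioc 0 b, ENNReal.ofReal (r * t ^ (r - 1) * h t ^ r) ≤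
      (∫⁻ t in Ioc 0 b, ENNReal.ofReal (h t)) ^ r := by
  have hprim : ∀ t, 0 ≤ t → 0 ≤ ∫ u in 0..t, h u := fun t ht ↦
    intervalIntegral.integral_nonneg ht fun u _ ↦ hnn u
  calc ∫⁻ t in Ioc 0 b, ENNReal.ofReal (r * t ^ (r - 1) * h t ^ r)
      ≤ ∫⁻ t in Ioc 0 b, ENNReal.ofReal (r * (∫ u in 0..t, h u) ^ (r - 1) * h t) :=
        setLIntegral_mono' measurableSet_Ioc fun t ht ↦ ENNReal.ofReal_le_ofReal <|
          mul_rpow_mul_rpow_le_of_antitone hanti ht.1.le (hnn t) hr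
    _ = ENNReal.ofReal (∫ t in 0..b, r * (∫ u in 0..t, h u) ^ (r - 1) * h t) := by
        rw [intervalIntegral.integral_of_le hb, ofReal_integral_eq_lintegral_ofReal
          (intervalIntegrable_mul_integral_rpow_mul_of_antitone hanti hr).1]
        filter_upwards [ae_restrict_mem measurableSet_Ioc] with t ht
        have := hprim t ht.1.le
        have := hnn t
        positivity
    _ = (∫⁻ t in Ioc 0 b, ENNReal.ofReal (h t)) ^ r := by
        rw [integral_mul_integral_rpow_mul_of_antitone hanti hb hr,
          ← ENNReal.ofReal_rpow_of_nonneg (hprim b hb) (by linarith),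
          intervalIntegral.integral_of_le hb,
          ofReal_integral_eq_lintegral_ofReal hanti.intervalIntegrable.1 (ae_of_all _ hnn)]

lemma setLIntegral_Ioi_mul_rpow_mul_rpow_le_of_antitone (hanti : Antitone h) (hnn : ∀ t, 0 ≤ h t)
    (hr : 1 ≤ r) :
    ∫⁻ t in Ioi 0, ENNReal.ofReal (r * t ^ (r - 1) * h t ^ r) ≤
      (∫⁻ t in Ioi 0, ENNReal.ofReal (h t)) ^ r := by
  have hmeas := hanti.measurable
  have hlim := (aecover_Iic (μ := volume.restrict (Ioi (0 : ℝ)))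
    tendsto_id).lintegral_tendsto_of_countably_generated
    (f := fun t ↦ ENNReal.ofReal (r * t ^ (r - 1) * h t ^ r)) (by fun_prop)
  refine le_of_tendsto hlim ((eventually_ge_atTop 0).mono fun b hb ↦ ?_)
  rw [Measure.restrict_restrict measurableSet_Iic, inter_comm, id, Ioi_inter_Iic]
  exact (setLIntegral_Ioc_mul_rpow_mul_rpow_le_of_antitone hanti hnn hb hr).trans
    (ENNReal.rpow_le_rpow (lintegral_mono_set Ioc_subset_Ioi_self) (by linarith))

end AntitoneIntegral

section TailComparison

variable {α : Type*} [MeasurableSpace α] {μ : Measure α}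

lemma lintegral_rpow_le_of_meas_lt_le_rpow [IsFiniteMeasure μ] {f g : α → ℝ} {r : ℝ}
    (hf : AEMeasurable f μ) (hf₀ : 0 ≤ᵐ[μ] f) (hg : AEMeasurable g μ) (hg₀ : 0 ≤ᵐ[μ] g)
    (hr : 1 ≤ r) (htail : ∀ t > 0, μ {x | t < g x} ≤ μ {x | t < f x} ^ r) :
    ∫⁻ x, ENNReal.ofReal (g x ^ r) ∂μ ≤ (∫⁻ x, ENNReal.ofReal (f x) ∂μ) ^ r := by
  have hr₀ : 0 < r := by linarith
  have hanti : Antitone fun t ↦ μ.real {x | t < f x} := fun s t hst ↦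
    measureReal_mono fun x hx ↦ hst.trans_lt hx
  calc ∫⁻ x, ENNReal.ofReal (g x ^ r) ∂μ
      = ∫⁻ t in Ioi 0, ENNReal.ofReal r * (μ {x | t < g x} * ENNReal.ofReal (t ^ (r - 1))) := by
        rw [lintegral_rpow_eq_lintegral_meas_lt_mul μ hg₀ hg hr₀,
          lintegral_const_mul' _ _ ENNReal.ofReal_ne_top]
    _ ≤ ∫⁻ t in Ioi 0, ENNReal.ofReal (r * t ^ (r - 1) * μ.real {x | t < f x} ^ r) := by
        refine setLIntegral_mono' measurableSet_Ioi fun t (ht : 0 < t) ↦ ?_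
        rw [ENNReal.ofReal_mul (by positivity), ENNReal.ofReal_mul hr₀.le,
          ← ENNReal.ofReal_rpow_of_nonneg measureReal_nonneg hr₀.le, ofReal_measureReal,
          mul_assoc, mul_comm (ENNReal.ofReal (t ^ (r - 1)))]
        gcongr
        exact htail t ht
    _ ≤ (∫⁻ t in Ioi 0, ENNReal.ofReal (μ.real {x | t < f x})) ^ r :=
        setLIntegral_Ioi_mul_rpow_mul_rpow_le_of_antitone hanti (fun _ ↦ measureReal_nonneg) hr
    _ = (∫⁻ x, ENNReal.ofReal (f x) ∂μ) ^ r := by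
        simp only [ofReal_measureReal (measure_ne_top μ _), lintegral_eq_lintegral_meas_lt μ hf₀ hf]

/-- The tail of `‖f‖` under `μ` has increasing failure rate on average, that is,
`t ↦ -log μ {x | t < ‖f x‖}` is star-shaped on `[0, ∞)`. The condition is written multiplicatively
so that it makes sense for vanishing tails. -/
def HasIFRATail {E : Type*} [NormedAddCommGroup E] (f : α → E) (μ : Measure α) : Prop :=
  ∀ t r : ℝ, 0 ≤ t → 1 ≤ r → μ {x | r * t < ‖f x‖} ≤ μ {x | t < ‖f x‖} ^ r

variable {E : Type*} [NormedAddCommGroup E] {f : α → E}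

lemma HasIFRATail.meas_lt_div_rpow_le (h : HasIFRATail f μ) {q r t : ℝ} (hq : 0 < q) (hr : 1 ≤ r)
    (ht : 0 ≤ t) : μ {x | t < (‖f x‖ / r) ^ q} ≤ μ {x | t < ‖f x‖ ^ q} ^ r := by
  have hr₀ : 0 < r := by linarith
  have hroot : ∀ y, 0 ≤ y → (t < y ^ q ↔ t ^ q⁻¹ < y) := fun y hy ↦
    (Real.rpow_inv_lt_iff_of_pos ht hy hq).symm
  have hscaled : ∀ x, t < (‖f x‖ / r) ^ q ↔ r * t ^ q⁻¹ < ‖f x‖ := fun x ↦ by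
    rw [hroot _ (by positivity), lt_div_iff₀' hr₀]
  simp_rw [hscaled, hroot _ (norm_nonneg _)]
  exact h _ r (by positivity) hr

lemma HasIFRATail.eLpNorm'_le [IsFiniteMeasure μ] (h : HasIFRATail f μ)
    (hf : AEStronglyMeasurable f μ) {p q : ℝ} (hq : 0 < q) (hqp : q ≤ p) :
    eLpNorm' f p μ ≤ ENNReal.ofReal (p / q) * eLpNorm' f q μ := by
  have hp : 0 < p := hq.trans_le hqp
  have hr : 1 ≤ p / q := (one_le_div hq).2 hqp
  have hqr : q * (p / q) = p := mul_div_cancel₀ p hq.ne'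
  have hscale : ∀ x, ‖f x‖ₑ ^ p =
      ENNReal.ofReal (p / q) ^ p * ENNReal.ofReal (((‖f x‖ / (p / q)) ^ q) ^ (p / q)) := fun x ↦ by
    rw [← Real.rpow_mul (by positivity), hqr, ← ENNReal.ofReal_rpow_of_nonneg (by positivity) hp.le,
      ← ENNReal.mul_rpow_of_nonneg _ _ hp.le, ← ENNReal.ofReal_mul (by positivity),
      mul_div_cancel₀ _ (by positivity), ofReal_norm]
  rw [← ENNReal.rpow_le_rpow_iff hp]
  calc eLpNorm' f p μ ^ p
      = ENNReal.ofReal (p / q) ^ p *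
          ∫⁻ x, ENNReal.ofReal (((‖f x‖ / (p / q)) ^ q) ^ (p / q)) ∂μ := by
        rw [← lintegral_rpow_enorm_eq_rpow_eLpNorm' hp, ← lintegral_const_mul' _ _ (by finiteness)]
        simp_rw [hscale]
    _ ≤ ENNReal.ofReal (p / q) ^ p * (∫⁻ x, ENNReal.ofReal (‖f x‖ ^ q) ∂μ) ^ (p / q) := by
        gcongr
        exact lintegral_rpow_le_of_meas_lt_le_rpow (hf.norm.aemeasurable.pow_const q)
          (ae_of_all _ fun x ↦ by positivity) ((hf.norm.aemeasurable.div_const _).pow_const q)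
          (ae_of_all _ fun x ↦ by positivity) hr fun t ht ↦ h.meas_lt_div_rpow_le hq hr ht.le
    _ = (ENNReal.ofReal (p / q) * eLpNorm' f q μ) ^ p := by
        simp_rw [← ENNReal.ofReal_rpow_of_nonneg (norm_nonneg _) hq.le, ofReal_norm]
        rw [lintegral_rpow_enorm_eq_rpow_eLpNorm' hq, ← ENNReal.rpow_mul, hqr,
          ENNReal.mul_rpow_of_nonneg _ _ hp.le]

end TailComparison

lemma setLIntegral_Ioi_le_of_ordConnected {f g : ℝ → ℝ≥0∞} {a x y : ℝ} (hg : Measurable g)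
    (hfin : ∫⁻ u in Ioi a, f u ≠ ∞) (hcross : {u | g u ≤ f u}.OrdConnected)
    (hax : a < x) (hxy : x ≤ y) (ha : ∫⁻ u in Ioi a, g u ≤ ∫⁻ u in Ioi a, f u)
    (hx : ∫⁻ u in Ioi x, f u ≤ ∫⁻ u in Ioi x, g u) :
    ∫⁻ u in Ioi y, f u ≤ ∫⁻ u in Ioi y, g u := by
  have hsplit : ∀ (k : ℝ → ℝ≥0∞) {c d : ℝ}, c ≤ d →
      ∫⁻ u in Ioi c, k u = (∫⁻ u in Ioc c d, k u) + ∫⁻ u in Ioi d, k u := fun k c d hcd ↦ by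
    rw [← lintegral_union measurableSet_Ioi (Ioc_disjoint_Ioi le_rfl), Ioc_union_Ioi_eq_Ioi hcd]
  have hfinite : ∀ {s : Set ℝ}, s ⊆ Ioi a → ∫⁻ u in s, f u ≠ ∞ := fun hs ↦
    ne_top_of_le_ne_top hfin (lintegral_mono_set hs)
  by_contra! hlt
  obtain ⟨v, hv, hgv⟩ : ∃ v ∈ Ioi y, g v ≤ f v := by
    by_contra! hfg
    exact hlt.not_ge (setLIntegral_mono' measurableSet_Ioi fun u hu ↦ (hfg u hu).le)
  obtain ⟨u, hu, hfu⟩ : ∃ u ∈ Ioc x y, f u < g u := by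
    by_contra! hgf
    rw [hsplit f hxy, hsplit g hxy] at hx
    have hle := setLIntegral_mono' (μ := volume) measurableSet_Ioc hgf
    have hgfin := ne_top_of_le_ne_top (hfinite fun u hu ↦ hax.trans hu.1) hle
    exact hx.not_gt (ENNReal.add_lt_add_of_le_of_lt hgfin hle hlt)
  have hbefore : ∀ w ∈ Ioc a x, f w < g w := by
    intro w hw
    by_contra! hgw
    exact hfu.not_ge (hcross.out hgw hgv ⟨hw.2.trans hu.1.le, hu.2.trans (le_of_lt hv)⟩)
  have hstrict : ∫⁻ u in Ioc a x, f u < ∫⁻ u in Ioc a x, g u :=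
    setLIntegral_strict_mono measurableSet_Ioc (by simp [hax]) hg (hfinite Ioc_subset_Ioi_self)
      (ae_of_all _ hbefore)
  rw [hsplit f hax.le, hsplit g hax.le] at ha
  exact ha.not_gt (ENNReal.add_lt_add_of_lt_of_le (hfinite (Ioi_subset_Ioi hax.le)) hstrict hx)

/-- Log-concavity of a real function. It includes nonnegativity because the real power `rpow` is
meaningless at a negative base. -/
structure LogConcaveFun (f : ℝ → ℝ) : Prop where
  nonneg : ∀ x, 0 ≤ f x
  rpow_mul_rpow_le : ∀ x y l : ℝ, 0 ≤ l → l ≤ 1 → f x ^ l * f y ^ (1 - l) ≤ f (l * x + (1 - l) * y)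

namespace LogConcaveFun

variable {f : ℝ → ℝ}

lemma const_mul (hf : LogConcaveFun f) {c : ℝ} (hc : 0 ≤ c) : LogConcaveFun fun x ↦ c * f x where
  nonneg x := mul_nonneg hc (hf.nonneg x)
  rpow_mul_rpow_le x y l hl₀ hl₁ := by
    calc (c * f x) ^ l * (c * f y) ^ (1 - l)
        = (c ^ l * c ^ (1 - l)) * (f x ^ l * f y ^ (1 - l)) := by
          rw [Real.mul_rpow hc (hf.nonneg x), Real.mul_rpow hc (hf.nonneg y)]; ring
      _ = c * (f x ^ l * f y ^ (1 - l)) := by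
          rw [← Real.rpow_add_of_nonneg hc hl₀ (sub_nonneg.2 hl₁), add_sub_cancel, Real.rpow_one]
      _ ≤ c * f (l * x + (1 - l) * y) :=
          mul_le_mul_of_nonneg_left (hf.rpow_mul_rpow_le x y l hl₀ hl₁) hc

lemma ordConnected_mul_exp_le (hf : LogConcaveFun f) {c : ℝ} (hc : 0 ≤ c) (k : ℝ) :
    {x | c * Real.exp (k * x) ≤ f x}.OrdConnected := by
  refine Convex.ordConnected fun x hx y hy l m hl hm hlm ↦ ?_
  obtain rfl : m = 1 - l := by linarith
  simp only [mem_ofPred_eq, smul_eq_mul] at hx hy ⊢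
  calc c * Real.exp (k * (l * x + (1 - l) * y))
      = (c ^ l * c ^ (1 - l)) * (Real.exp (k * x * l) * Real.exp (k * y * (1 - l))) := by
        rw [← Real.rpow_add_of_nonneg hc hl hm, ← Real.exp_add, add_sub_cancel, Real.rpow_one]
        ring_nf
    _ = (c * Real.exp (k * x)) ^ l * (c * Real.exp (k * y)) ^ (1 - l) := by
        rw [Real.mul_rpow hc (Real.exp_pos _).le, Real.mul_rpow hc (Real.exp_pos _).le,
          Real.exp_mul (k * x) l, Real.exp_mul (k * y) (1 - l)]
        ring
    _ ≤ f x ^ l * f y ^ (1 - l) := by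
        have := hf.nonneg x
        gcongr
    _ ≤ f (l * x + (1 - l) * y) := hf.rpow_mul_rpow_le x y l hl (by linarith)

end LogConcaveFun

lemma lintegral_Ioi_ofReal_mul_exp_neg_mul {k : ℝ} (hk : 0 < k) (s : ℝ) :
    ∫⁻ u in Ioi s, ENNReal.ofReal (k * Real.exp (-k * u)) = ENNReal.ofReal (Real.exp (-k * s)) := by
  rw [← ofReal_integral_eq_lintegral_ofReal
      ((integrableOn_exp_mul_Ioi (neg_lt_zero.2 hk) s).const_mul k)
      (ae_of_all _ fun u ↦ by positivity),
    integral_const_mul, integral_exp_mul_Ioi (neg_lt_zero.2 hk)]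
  congr 1
  field_simp

lemma exists_pos_eq_ofReal_exp_neg_mul {T : ℝ≥0∞} (hT₀ : T ≠ 0) (hT₁ : T < 1) {t : ℝ} (ht : 0 < t) :
    ∃ k > 0, T = ENNReal.ofReal (Real.exp (-k * t)) := by
  have hfin : T ≠ ∞ := hT₁.ne_top
  have hpos : 0 < T.toReal := ENNReal.toReal_pos hT₀ hfin
  refine ⟨-Real.log T.toReal / t, div_pos (neg_pos.2 (Real.log_neg hpos ?_)) ht, ?_⟩
  · simpa using ENNReal.toReal_strict_mono ENNReal.one_ne_top hT₁
  · rw [← neg_div, neg_neg, div_mul_cancel₀ _ ht.ne', Real.exp_log hpos, ENNReal.ofReal_toReal hfin]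

lemma LogConcaveFun.lintegral_Ioi_mul_le_rpow {f : ℝ → ℝ} (hf : LogConcaveFun f)
    (hmass : ∫⁻ u in Ioi 0, ENNReal.ofReal (f u) = 1) {t r : ℝ} (ht : 0 ≤ t) (hr : 1 ≤ r) :
    ∫⁻ u in Ioi (r * t), ENNReal.ofReal (f u) ≤ (∫⁻ u in Ioi t, ENNReal.ofReal (f u)) ^ r := by
  have hle_one : ∀ s, 0 ≤ s → ∫⁻ u in Ioi s, ENNReal.ofReal (f u) ≤ 1 := fun s hs ↦
    hmass ▸ lintegral_mono_set (Ioi_subset_Ioi hs)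
  have htrt : t ≤ r * t := le_mul_of_one_le_left ht hr
  have hr₀ : 0 < r := by linarith
  rcases (hle_one t ht).eq_or_lt with heq | hlt
  · simpa [heq] using hle_one (r * t) (by positivity)
  rcases eq_zero_or_pos (∫⁻ u in Ioi t, ENNReal.ofReal (f u)) with hzero | hpos
  · simpa [hzero, hr₀] using lintegral_mono_set (μ := volume)
      (f := fun u ↦ ENNReal.ofReal (f u)) (Ioi_subset_Ioi htrt)
  have ht₀ : 0 < t := ht.lt_of_ne (by rintro rfl; exact hlt.ne hmass)
  obtain ⟨k, hk, htk⟩ := exists_pos_eq_ofReal_exp_neg_mul hpos.ne' hlt ht₀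
  have hcross :
      {u | ENNReal.ofReal (k * Real.exp (-k * u)) ≤ ENNReal.ofReal (f u)}.OrdConnected := by
    simpa only [ENNReal.ofReal_le_ofReal_iff (hf.nonneg _)] using
      hf.ordConnected_mul_exp_le hk.le (-k)
  calc ∫⁻ u in Ioi (r * t), ENNReal.ofReal (f u)
      ≤ ∫⁻ u in Ioi (r * t), ENNReal.ofReal (k * Real.exp (-k * u)) :=
        setLIntegral_Ioi_le_of_ordConnected (by fun_prop) (by simp [hmass]) hcross ht₀ htrt
          (by simpa [hmass] using (lintegral_Ioi_ofReal_mul_exp_neg_mul hk 0).le)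
          (by rw [htk, lintegral_Ioi_ofReal_mul_exp_neg_mul hk])
    _ = (∫⁻ u in Ioi t, ENNReal.ofReal (f u)) ^ r := by
        rw [lintegral_Ioi_ofReal_mul_exp_neg_mul hk, htk,
          ENNReal.ofReal_rpow_of_pos (Real.exp_pos _), ← Real.exp_mul]
        ring_nf

lemma exists_measure_lt_abs_eq_const_mul {μ : Measure ℝ}
    (hsym : μ.map (fun x ↦ -x) = μ ∨ μ {x : ℝ | x < 0} = 0) :
    ∃ C : ℝ, 0 ≤ C ∧ ∀ t, 0 ≤ t → μ {x | t < |x|} = ENNReal.ofReal C * μ (Ioi t) := by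
  have hsplit : ∀ t, 0 ≤ t → μ {x | t < |x|} = μ (Ioi t) + μ (Iio (-t)) := fun t ht ↦ by
    rw [← measure_union (Ioi_disjoint_Iio_of_le (by linarith)) measurableSet_Iio]
    congr 1
    ext x
    simp [lt_abs, lt_neg]
  rcases hsym with hsym | hnonneg
  · refine ⟨2, zero_le_two, fun t ht ↦ ?_⟩
    have hreflect : μ (Iio (-t)) = μ (Ioi t) := by
      conv_lhs => rw [← hsym, Measure.map_apply measurable_neg measurableSet_Iio]
      simp
    rw [hsplit t ht, hreflect, ENNReal.ofReal_ofNat, two_mul]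
  · refine ⟨1, zero_le_one, fun t ht ↦ ?_⟩
    have hnull : μ (Iio (-t)) = 0 := measure_mono_null (Iio_subset_Iio (by linarith)) hnonneg
    rw [hsplit t ht, hnull, ENNReal.ofReal_one, one_mul, add_zero]

lemma hasIFRATail_dirac {α E : Type*} [MeasurableSpace α] [MeasurableSingletonClass α]
    [NormedAddCommGroup E] (f : α → E) (a : α) : HasIFRATail f (Measure.dirac a) := by
  intro t r ht hr
  by_cases ha : t < ‖f a‖
  · simpa [ha] using prob_le_one (μ := Measure.dirac a)
  · have : ¬ r * t < ‖f a‖ := fun h ↦ ha ((le_mul_of_one_le_left ht hr).trans_lt h)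
    simp [ha, this]

lemma LogConcaveFun.hasIFRATail_withDensity {f : ℝ → ℝ} (hf : LogConcaveFun f) {μ : Measure ℝ}
    [IsProbabilityMeasure μ] (hμ : μ = volume.withDensity fun x ↦ ENNReal.ofReal (f x))
    (hsym : μ.map (fun x ↦ -x) = μ ∨ μ {x : ℝ | x < 0} = 0) : HasIFRATail id μ := by
  obtain ⟨C, hC, htail⟩ := exists_measure_lt_abs_eq_const_mul hsym
  have hdensity : ∀ t, 0 ≤ t →
      μ {x | t < |x|} = ∫⁻ u in Ioi t, ENNReal.ofReal (C * f u) := fun t ht ↦ by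
    rw [htail t ht, hμ, withDensity_apply _ measurableSet_Ioi]
    simp_rw [ENNReal.ofReal_mul hC]
    rw [lintegral_const_mul' _ _ ENNReal.ofReal_ne_top]
  have hmass : ∫⁻ u in Ioi 0, ENNReal.ofReal (C * f u) = 1 := by
    have hzero : μ {0} = 0 := hμ ▸ withDensity_absolutelyContinuous _ _ Real.volume_singleton
    have hsupport : {x : ℝ | 0 < |x|} = {0}ᶜ := by ext; simp
    rw [← hdensity 0 le_rfl, hsupport, prob_compl_eq_one_iff (measurableSet_singleton 0), hzero]
  intro t r ht hr
  simp only [id, Real.norm_eq_abs]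
  rw [hdensity t ht, hdensity (r * t) (by positivity)]
  exact (hf.const_mul hC).lintegral_Ioi_mul_le_rpow hmass ht hr

lemma IsLogConcave.hasIFRATail_id {μ : Measure ℝ} (hμ : IsLogConcave μ)
    (hsym : μ.map (fun x ↦ -x) = μ ∨ μ {x : ℝ | x < 0} = 0) : HasIFRATail id μ := by
  obtain ⟨_, ⟨c, rfl⟩ | ⟨f, hf₀, hdensity, hf⟩⟩ := hμ
  · exact hasIFRATail_dirac id c
  · exact LogConcaveFun.hasIFRATail_withDensity ⟨hf₀, hf⟩ hdensity hsym

lemma momNorm_eq_toReal_eLpNorm' (μ : Measure ℝ) {s : ℝ} (hs : 0 ≤ s) :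
    momNorm μ s = (eLpNorm' id s μ).toReal := by
  rw [momNorm, eLpNorm'_eq_lintegral_enorm, ← ENNReal.toReal_rpow,
    integral_eq_lintegral_of_nonneg_ae (ae_of_all _ fun x ↦ by positivity) (by fun_prop)]
  simp_rw [← Real.norm_eq_abs, ← ENNReal.ofReal_rpow_of_nonneg (norm_nonneg _) hs, ofReal_norm, id]

lemma momNorm_le_of_hasIFRATail {μ : Measure ℝ} [IsProbabilityMeasure μ]
    (hμ : HasIFRATail id μ) {p q : ℝ} (hq : 0 < q) (hqp : q ≤ p) :
    momNorm μ p ≤ p / q * momNorm μ q := by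
  have hp : 0 < p := hq.trans_le hqp
  have hid : AEStronglyMeasurable (id : ℝ → ℝ) μ := aestronglyMeasurable_id
  rw [momNorm_eq_toReal_eLpNorm' _ hp.le, momNorm_eq_toReal_eLpNorm' _ hq.le]
  by_cases hfin : eLpNorm' id q μ = ∞
  · have : eLpNorm' id p μ = ∞ := top_le_iff.1 <|
      hfin ▸ eLpNorm'_le_eLpNorm'_of_exponent_le hq hqp μ hid
    simp [this, hfin]
  · have := ENNReal.toReal_mono (by finiteness) (hμ.eLpNorm'_le hid hq hqp)
    rwa [ENNReal.toReal_mul, ENNReal.toReal_ofReal (by positivity)] at this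

theorem momNorm_le_of_logConcave_symm_or_nonneg_general {μ : Measure ℝ} (hμ : IsLogConcave μ)
    (hsym : μ.map (fun x ↦ -x) = μ ∨ μ {x : ℝ | x < 0} = 0) {p q : ℝ} (hq : 0 < q) (hqp : q ≤ p) :
    momNorm μ p ≤ (p / q) * momNorm μ q :=
  have := hμ.1
  momNorm_le_of_hasIFRATail (hμ.hasIFRATail_id hsym) hq hqp

/-- If `X` is log-concave and symmetric (`X` has the same distribution as `-X`)
or nonnegative (`X ≥ 0` a.s.), then for `p > q ≥ 1` one has `‖X‖_p ≤ (p/q) ‖X‖_q`. -/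
theorem momNorm_le_of_logConcave_symm_or_nonneg
    (μ : Measure ℝ) (hμ : IsLogConcave μ)
    (hsym : μ.map (fun x => -x) = μ ∨ μ {x : ℝ | x < 0} = 0)
    (p q : ℝ) (hq : 1 ≤ q) (hpq : q < p) :
    momNorm μ p ≤ (p / q) * momNorm μ q := by
  exact momNorm_le_of_logConcave_symm_or_nonneg_general hμ hsym (by linarith) hpq.le
end

section
/- If X is a log-concave real random variable with a density and with E X = 0, then P(X < 0) ≥ 1/e. -/
open MeasureTheory

/-!
Let `F` be the distribution function of `μ` and `m` its mean. Comparing the log-concave density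
`f` with the exponential `x ↦ f a * exp (c * (x - a))`, `c = f a / F a`, which has the same mass
on `(-∞, a]` and the same value at `a`, gives `F x ≤ F a * exp (c * (x - a))`, the tangent-line
bound for the concave function `log F`. On the other hand `∫ -log F ∂μ ≤ 1`, because
`μ {F ≤ u} ≤ u`. Taking `a = m` and integrating `c * (m - x) ≤ -log (F x) + log (F m)` yields
`0 ≤ 1 + log (F m)`.
-/

open ProbabilityTheory Real Set

/-- Log-concavity of a nonnegative function on a real vector space, in the multiplicative form
which makes sense where `f` vanishes. The convention `0 ^ 0 = 1` is harmless: for weights `0, 1`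
the inequality is trivial. -/
structure IsLogConcave_s5 {E : Type*} [AddCommGroup E] [Module ℝ E] (f : E → ℝ) : Prop where
  nonneg : ∀ x, 0 ≤ f x
  rpow_mul_rpow_le : ∀ ⦃x y : E⦄ ⦃a b : ℝ⦄, 0 ≤ a → 0 ≤ b → a + b = 1 →
    f x ^ a * f y ^ b ≤ f (a • x + b • y)

namespace IsLogConcave_s5

section Module

variable {E F : Type*} [AddCommGroup E] [Module ℝ E] [AddCommGroup F] [Module ℝ F]
  {f g : E → ℝ}

theorem mul (hf : IsLogConcave_s5 f) (hg : IsLogConcave_s5 g) : IsLogConcave_s5 fun x ↦ f x * g x where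
  nonneg x := mul_nonneg (hf.nonneg x) (hg.nonneg x)
  rpow_mul_rpow_le x y a b ha hb hab := by
    rw [mul_rpow (hf.nonneg x) (hg.nonneg x), mul_rpow (hf.nonneg y) (hg.nonneg y),
      mul_mul_mul_comm]
    exact mul_le_mul (hf.rpow_mul_rpow_le ha hb hab) (hg.rpow_mul_rpow_le ha hb hab)
      (mul_nonneg (rpow_nonneg (hg.nonneg x) a) (rpow_nonneg (hg.nonneg y) b)) (hf.nonneg _)

theorem comp_linearMap {f : F → ℝ} (hf : IsLogConcave_s5 f) (L : E →ₗ[ℝ] F) :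
    IsLogConcave_s5 (f ∘ L) where
  nonneg x := hf.nonneg (L x)
  rpow_mul_rpow_le x y a b ha hb hab := by
    simpa using hf.rpow_mul_rpow_le (x := L x) (y := L y) ha hb hab

theorem exp_of_concaveOn {u : E → ℝ} (hu : ConcaveOn ℝ univ u) :
    IsLogConcave_s5 fun x ↦ exp (u x) where
  nonneg x := (exp_pos (u x)).le
  rpow_mul_rpow_le x y a b ha hb hab := by
    rw [← exp_mul, ← exp_mul, ← exp_add, exp_le_exp, mul_comm (u x), mul_comm (u y)]
    exact hu.2 (mem_univ x) (mem_univ y) ha hb hab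

theorem quasiconcaveOn (hf : IsLogConcave_s5 f) : QuasiconcaveOn ℝ univ f := by
  refine quasiconcaveOn_iff_min_le.2 ⟨convex_univ, fun x _ y _ a b ha hb hab ↦ ?_⟩
  have hm : 0 ≤ min (f x) (f y) := le_min (hf.nonneg x) (hf.nonneg y)
  calc min (f x) (f y) = min (f x) (f y) ^ a * min (f x) (f y) ^ b := by
        rw [← rpow_add_of_nonneg hm ha hb, hab, rpow_one]
    _ ≤ f x ^ a * f y ^ b := by
        gcongr
        exacts [rpow_nonneg (hf.nonneg x) a, min_le_left _ _, min_le_right _ _]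
    _ ≤ f (a • x + b • y) := hf.rpow_mul_rpow_le ha hb hab

theorem le_of_mem_openSegment (hf : IsLogConcave_s5 f) {x y z : E} (hz : z ∈ openSegment ℝ x y)
    (hz0 : 0 < f z) (hzx : f z ≤ f x) : f y ≤ f z := by
  obtain ⟨a, b, ha, hb, hab, rfl⟩ := hz
  set z := a • x + b • y
  by_contra! hlt
  refine (hf.rpow_mul_rpow_le ha.le hb.le hab : f x ^ a * f y ^ b ≤ f z).not_gt ?_
  calc f z = f z ^ a * f z ^ b := by rw [← rpow_add hz0, hab, rpow_one]
    _ < f z ^ a * f y ^ b := by gcongr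
    _ ≤ f x ^ a * f y ^ b := by gcongr; exact rpow_nonneg (hf.nonneg y) b

end Module

variable {f : ℝ → ℝ}

theorem le_of_mem_Icc (hf : IsLogConcave_s5 f) {x y z r : ℝ} (hx : r ≤ f x) (hy : r ≤ f y)
    (hz : z ∈ Icc x y) : r ≤ f z :=
  ((hf.quasiconcaveOn r).ordConnected.out ⟨mem_univ x, hx⟩ ⟨mem_univ y, hy⟩ hz).2

theorem measurable (hf : IsLogConcave_s5 f) : Measurable f :=
  measurable_of_Ici fun _ ↦ OrdConnected.measurableSet
    ⟨fun _ hx _ hy _ hz ↦ hf.le_of_mem_Icc hx hy hz⟩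

theorem div_exp (hf : IsLogConcave_s5 f) (c a : ℝ) :
    IsLogConcave_s5 fun x ↦ f x / exp (c * (x - a)) := by
  have hconcave : ConcaveOn ℝ univ fun x ↦ -c * x + c * a :=
    ((LinearMap.mulLeft ℝ (-c)).concaveOn convex_univ).add_const (c * a)
  convert hf.mul (exp_of_concaveOn hconcave) using 2 with x
  rw [div_eq_mul_inv, ← exp_neg]
  ring_nf

theorem mul_exp_le_of_mem_Icc (hf : IsLogConcave_s5 f) {a c x z : ℝ}
    (hx : f a * exp (c * (x - a)) ≤ f x) (hz : z ∈ Icc x a) : f a * exp (c * (z - a)) ≤ f z := by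
  rw [← le_div_iff₀ (exp_pos _)] at hx ⊢
  exact (hf.div_exp c a).le_of_mem_Icc hx (by simp) hz

theorem le_mul_exp_of_lt_of_lt (hf : IsLogConcave_s5 f) {a c x z : ℝ} (hfa : 0 < f a)
    (hx : f a * exp (c * (x - a)) ≤ f x) (hxa : x < a) (haz : a < z) :
    f z ≤ f a * exp (c * (z - a)) := by
  rw [← le_div_iff₀ (exp_pos _)] at hx
  rw [← div_le_iff₀ (exp_pos _)]
  have ha : a ∈ openSegment ℝ x z := by
    rw [openSegment_eq_Ioo (hxa.trans haz)]
    exact ⟨hxa, haz⟩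
  simpa using (hf.div_exp c a).le_of_mem_openSegment ha (by simpa using hfa) (by simpa using hx)

end IsLogConcave_s5

theorem integrableOn_exp_mul_sub_Iic {c : ℝ} (hc : 0 < c) (a x : ℝ) :
    IntegrableOn (fun z ↦ exp (c * (z - a))) (Iic x) := by
  simp only [mul_sub, exp_sub]
  exact (integrableOn_exp_mul_Iic hc x).div_const (exp (c * a))

theorem integral_exp_mul_sub_Iic {c : ℝ} (hc : 0 < c) (a x : ℝ) :
    ∫ z in Iic x, exp (c * (z - a)) = exp (c * (x - a)) / c := by
  simp only [mul_sub, exp_sub, integral_div, integral_exp_mul_Iic hc]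
  ring

theorem setIntegral_Iic_nonneg_of_sign_change {μ : Measure ℝ} {h : ℝ → ℝ} {a : ℝ}
    (hint : ∀ x, IntegrableOn h (Iic x) μ) (hzero : ∫ z in Iic a, h z ∂μ = 0)
    (hleft : ∀ x z, x ≤ z → z ≤ a → h x ≤ 0 → h z ≤ 0) (hright : ∀ z, a ≤ z → 0 ≤ h z) (x : ℝ) :
    0 ≤ ∫ z in Iic x, h z ∂μ := by
  have hdiff := intervalIntegral.integral_Iic_sub_Iic (hint a) (hint x)
  rw [hzero, sub_zero] at hdiff
  rcases le_total a x with hax | hxa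
  · rw [hdiff]
    exact intervalIntegral.integral_nonneg hax fun z hz ↦ hright z hz.1
  · rcases le_or_gt (h x) 0 with hx | hx
    · rw [hdiff, intervalIntegral.integral_symm, ← intervalIntegral.integral_neg]
      exact intervalIntegral.integral_nonneg hxa fun z hz ↦
        neg_nonneg.2 (hleft x z hz.1 hz.2 hx)
    · refine setIntegral_nonneg measurableSet_Iic fun z hz ↦ ?_
      by_contra! hz0
      exact hx.not_ge (hleft z x hz hxa hz0.le)

theorem exists_lt_nonpos_of_setIntegral_Iic_nonpos {h : ℝ → ℝ} {a : ℝ}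
    (hint : IntegrableOn h (Iic a)) (hnonpos : ∫ z in Iic a, h z ≤ 0) : ∃ x < a, h x ≤ 0 := by
  by_contra! hpos
  have hsupport : Iio a ⊆ Function.support h := fun z hz ↦ (hpos z hz).ne'
  refine hnonpos.not_gt ?_
  rw [integral_Iic_eq_integral_Iio, setIntegral_pos_iff_support_of_nonneg_ae
    (ae_restrict_of_forall_mem measurableSet_Iio fun z hz ↦ (hpos z hz).le)
    (hint.mono_set Iio_subset_Iic_self), inter_eq_right.2 hsupport]
  simp

theorem IsLogConcave_s5.setIntegral_Iic_le {f : ℝ → ℝ} (hf : IsLogConcave_s5 f)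
    (hint : ∀ x, IntegrableOn f (Iic x)) {a : ℝ} (hfa : 0 < f a) (hFa : 0 < ∫ z in Iic a, f z)
    (x : ℝ) :
    ∫ z in Iic x, f z ≤ (∫ z in Iic a, f z) * exp (f a / (∫ z in Iic a, f z) * (x - a)) := by
  set c := f a / ∫ z in Iic a, f z with hc
  have hc0 : 0 < c := div_pos hfa hFa
  let g : ℝ → ℝ := fun z ↦ f a * exp (c * (z - a))
  have hg_int (x : ℝ) : IntegrableOn g (Iic x) := (integrableOn_exp_mul_sub_Iic hc0 a x).const_mul _
  have hg (x : ℝ) : ∫ z in Iic x, g z = (∫ z in Iic a, f z) * exp (c * (x - a)) := by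
    rw [integral_const_mul, integral_exp_mul_sub_Iic hc0, hc]
    field_simp
  have hsub (x : ℝ) : ∫ z in Iic x, (g z - f z) = (∫ z in Iic x, g z) - ∫ z in Iic x, f z :=
    integral_sub (hg_int x) (hint x)
  have hzero : ∫ z in Iic a, (g z - f z) = 0 := by simp [hsub, hg]
  obtain ⟨x₀, hx₀a, hx₀⟩ := exists_lt_nonpos_of_setIntegral_Iic_nonpos
    ((hg_int a).sub (hint a)) hzero.le
  have hleft (x z : ℝ) (hxz : x ≤ z) (hza : z ≤ a) (hx : g x - f x ≤ 0) : g z - f z ≤ 0 :=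
    sub_nonpos.2 (hf.mul_exp_le_of_mem_Icc (sub_nonpos.1 hx) ⟨hxz, hza⟩)
  have hright (z : ℝ) (haz : a ≤ z) : 0 ≤ g z - f z := by
    rcases haz.eq_or_lt with rfl | haz
    · simp [g]
    · exact sub_nonneg.2 (hf.le_mul_exp_of_lt_of_lt hfa (sub_nonpos.1 hx₀) hx₀a haz)
  have hnonneg : 0 ≤ ∫ z in Iic x, (g z - f z) := setIntegral_Iic_nonneg_of_sign_change
    (fun x ↦ (hg_int x).sub (hint x)) hzero hleft hright x
  rwa [hsub, hg, sub_nonneg] at hnonneg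

section CDF

variable (μ : Measure ℝ)

theorem neg_log_cdf_nonneg (x : ℝ) : 0 ≤ -log (cdf μ x) :=
  neg_nonneg.2 (log_nonpos (cdf_nonneg μ x) (cdf_le_one μ x))

theorem measurable_neg_log_cdf : Measurable fun x ↦ -log (cdf μ x) :=
  (measurable_log.comp (monotone_cdf μ).measurable).neg

variable [IsProbabilityMeasure μ]

theorem measure_cdf_le_le (u : ℝ) : μ {x | cdf μ x ≤ u} ≤ ENNReal.ofReal u := by
  have hconn : OrdConnected {x | cdf μ x ≤ u} := ordConnected_Iic.preimage_mono (monotone_cdf μ)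
  rw [hconn.measurableSet.measure_eq_iSup_isCompact]
  refine iSup₂_le fun K hKu ↦ iSup_le fun hK ↦ ?_
  rcases K.eq_empty_or_nonempty with rfl | hne
  · simp
  obtain ⟨m, hm, hmax⟩ := hK.exists_isGreatest hne
  calc μ K ≤ μ (Iic m) := measure_mono fun x hx ↦ hmax hx
    _ = ENNReal.ofReal (cdf μ m) := (ofReal_cdf μ m).symm
    _ ≤ ENNReal.ofReal u := ENNReal.ofReal_le_ofReal (hKu hm)

theorem ae_cdf_pos : ∀ᵐ x ∂μ, 0 < cdf μ x := by
  simpa [ae_iff] using measure_cdf_le_le μ 0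

theorem measure_le_neg_log_cdf_le (t : ℝ) :
    μ {x | t ≤ -log (cdf μ x)} ≤ ENNReal.ofReal (exp (-t)) := by
  refine (measure_mono_ae ?_).trans (measure_cdf_le_le μ (exp (-t)))
  filter_upwards [ae_cdf_pos μ] with x hx (ht : t ≤ -log (cdf μ x))
  exact (log_le_iff_le_exp hx).1 (le_neg.1 ht)

theorem lintegral_neg_log_cdf_le_one : ∫⁻ x, ENNReal.ofReal (-log (cdf μ x)) ∂μ ≤ 1 := by
  calc ∫⁻ x, ENNReal.ofReal (-log (cdf μ x)) ∂μ
      = ∫⁻ t in Ioi 0, μ {x | t ≤ -log (cdf μ x)} :=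
        lintegral_eq_lintegral_meas_le μ (ae_of_all _ (neg_log_cdf_nonneg μ))
          (measurable_neg_log_cdf μ).aemeasurable
    _ ≤ ∫⁻ t in Ioi 0, ENNReal.ofReal (exp (-t)) :=
        lintegral_mono (measure_le_neg_log_cdf_le μ)
    _ = ENNReal.ofReal (∫ t in Ioi 0, exp (-t)) :=
        (ofReal_integral_eq_lintegral_ofReal (integrableOn_exp_neg_Ioi 0)
          (ae_of_all _ fun t ↦ (exp_pos (-t)).le)).symm
    _ = 1 := by rw [integral_exp_neg_Ioi_zero, ENNReal.ofReal_one]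

theorem integrable_neg_log_cdf : Integrable (fun x ↦ -log (cdf μ x)) μ := by
  refine ⟨(measurable_neg_log_cdf μ).aestronglyMeasurable, ?_⟩
  rw [hasFiniteIntegral_iff_ofReal (ae_of_all _ (neg_log_cdf_nonneg μ))]
  exact (lintegral_neg_log_cdf_le_one μ).trans_lt ENNReal.one_lt_top

theorem integral_neg_log_cdf_le_one : ∫ x, -log (cdf μ x) ∂μ ≤ 1 := by
  rw [integral_eq_lintegral_of_nonneg_ae (ae_of_all _ (neg_log_cdf_nonneg μ))
    (measurable_neg_log_cdf μ).aestronglyMeasurable]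
  exact ENNReal.toReal_le_of_le_ofReal zero_le_one (by simpa using lintegral_neg_log_cdf_le_one μ)

variable {μ} {a c C : ℝ}

theorem pos_of_cdf_le_mul_exp (h : ∀ x, cdf μ x ≤ C * exp (c * (x - a))) : 0 < C := by
  obtain ⟨x, hx⟩ := (ae_cdf_pos μ).exists
  exact pos_of_mul_pos_left (hx.trans_le (h x)) (exp_pos _).le

theorem ae_mul_sub_le_of_cdf_le_mul_exp (h : ∀ x, cdf μ x ≤ C * exp (c * (x - a))) :
    ∀ᵐ x ∂μ, c * (a - x) ≤ -log (cdf μ x) + log C := by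
  filter_upwards [ae_cdf_pos μ] with x hx
  have hlog : log (cdf μ x) ≤ log C + c * (x - a) := by
    rw [← log_exp (c * (x - a)), ← log_mul (pos_of_cdf_le_mul_exp h).ne' (exp_pos _).ne']
    exact log_le_log hx (h x)
  linarith

theorem integrable_negPart_of_cdf_le_mul_exp (hc : 0 < c)
    (h : ∀ x, cdf μ x ≤ C * exp (c * (x - a))) : Integrable (fun x ↦ x⁻) μ := by
  have hbound : Integrable (fun x ↦ c⁻¹ * (-log (cdf μ x) + |log C|) + |a|) μ :=
    (((integrable_neg_log_cdf μ).add (integrable_const _)).const_mul _).add (integrable_const _)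
  refine hbound.mono' (by fun_prop) ?_
  filter_upwards [ae_mul_sub_le_of_cdf_le_mul_exp h] with x hx
  have hdiv : a - x ≤ c⁻¹ * (-log (cdf μ x) + |log C|) := by
    rw [← div_eq_inv_mul, le_div_iff₀' hc]
    linarith [le_abs_self (log C)]
  have hnonneg : 0 ≤ c⁻¹ * (-log (cdf μ x) + |log C|) :=
    mul_nonneg (inv_nonneg.2 hc.le) (add_nonneg (neg_log_cdf_nonneg μ x) (abs_nonneg _))
  rw [norm_of_nonneg (negPart_nonneg x), negPart_def]
  exact sup_le (by linarith [neg_abs_le a]) (by positivity)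

theorem exp_neg_one_le_of_cdf_le_mul_exp (hint : Integrable (fun x ↦ x) μ)
    (h : ∀ x, cdf μ x ≤ C * exp (c * (x - ∫ y, y ∂μ))) : exp (-1) ≤ C := by
  have hmean : ∫ x, c * ((∫ y, y ∂μ) - x) ∂μ = 0 := by
    rw [integral_const_mul, integral_sub (integrable_const _) hint]
    simp
  have hlog : 0 ≤ 1 + log C :=
    calc 0 = ∫ x, c * ((∫ y, y ∂μ) - x) ∂μ := hmean.symm
      _ ≤ ∫ x, (-log (cdf μ x) + log C) ∂μ :=
          integral_mono_ae (((integrable_const _).sub hint).const_mul c)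
            ((integrable_neg_log_cdf μ).add (integrable_const _))
            (ae_mul_sub_le_of_cdf_le_mul_exp h)
      _ = ∫ x, -log (cdf μ x) ∂μ + log C := by
          rw [integral_add (integrable_neg_log_cdf μ) (integrable_const _)]
          simp
      _ ≤ 1 + log C := by gcongr; exact integral_neg_log_cdf_le_one μ
  rw [← le_log_iff_exp_le (pos_of_cdf_le_mul_exp h)]
  linarith

end CDF

section WithDensity

variable {α β : Type*} [MeasurableSpace α] [MeasurableSpace β] {μ : Measure α} {ν : Measure β}

theorem map_withDensity_of_measurePreserving (e : α ≃ᵐ β) (he : MeasurePreserving e μ ν)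
    (g : α → ENNReal) : (μ.withDensity g).map e = ν.withDensity (g ∘ e.symm) := by
  ext s hs
  rw [e.map_apply, withDensity_apply _ (e.measurable hs), withDensity_apply _ hs,
    ← he.setLIntegral_comp_preimage_emb e.measurableEmbedding]
  simp

variable {f : α → ℝ}

theorem ae_withDensity_ofReal_pos (hf : Measurable f) :
    ∀ᵐ x ∂μ.withDensity fun x ↦ ENNReal.ofReal (f x), 0 < f x := by
  simp [ae_withDensity_iff hf.ennreal_ofReal]

theorem integrable_of_isFiniteMeasure_withDensity_ofReal (hf : AEStronglyMeasurable f μ)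
    (hf0 : 0 ≤ᵐ[μ] f) [IsFiniteMeasure (μ.withDensity fun x ↦ ENNReal.ofReal (f x))] :
    Integrable f μ := by
  refine ⟨hf, ?_⟩
  rw [hasFiniteIntegral_iff_ofReal hf0, ← setLIntegral_univ, ← withDensity_apply _ .univ]
  exact measure_lt_top _ _

theorem measureReal_withDensity_ofReal (hf : AEStronglyMeasurable f μ) (hf0 : 0 ≤ᵐ[μ] f)
    {s : Set α} (hs : MeasurableSet s) :
    (μ.withDensity fun x ↦ ENNReal.ofReal (f x)).real s = ∫ x in s, f x ∂μ := by
  rw [integral_eq_lintegral_of_nonneg_ae (ae_restrict_of_ae hf0) hf.restrict, measureReal_def,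
    withDensity_apply _ hs]

end WithDensity

namespace IsLogConcave_s5

variable {μ : Measure ℝ} {f : ℝ → ℝ}

theorem density_pos (hf : IsLogConcave_s5 f)
    (hμ : μ = volume.withDensity fun x ↦ ENNReal.ofReal (f x)) {a : ℝ}
    (hIic : μ (Iic a) ≠ 0) (hIci : μ (Ici a) ≠ 0) : 0 < f a := by
  have hpos : ∀ᵐ x ∂μ, 0 < f x := hμ ▸ ae_withDensity_ofReal_pos hf.measurable
  obtain ⟨x, hxa, hx⟩ := ((frequently_ae_mem_iff.2 hIic).and_eventually hpos).exists
  obtain ⟨y, hay, hy⟩ := ((frequently_ae_mem_iff.2 hIci).and_eventually hpos).exists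
  have hmin : min (f x) (f y) ≤ f a :=
    hf.le_of_mem_Icc (min_le_left _ _) (min_le_right _ _) ⟨hxa, hay⟩
  exact (lt_min hx hy).trans_le hmin

variable [IsProbabilityMeasure μ]

theorem cdf_le (hf : IsLogConcave_s5 f)
    (hμ : μ = volume.withDensity fun x ↦ ENNReal.ofReal (f x)) {a : ℝ} (hfa : 0 < f a)
    (hFa : 0 < cdf μ a) (x : ℝ) :
    cdf μ x ≤ cdf μ a * exp (f a / cdf μ a * (x - a)) := by
  have hF (x : ℝ) : cdf μ x = ∫ z in Iic x, f z := by
    rw [cdf_eq_real, hμ, measureReal_withDensity_ofReal hf.measurable.aestronglyMeasurable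
      (ae_of_all _ hf.nonneg) measurableSet_Iic]
  have hint : Integrable f := by
    subst hμ
    exact integrable_of_isFiniteMeasure_withDensity_ofReal hf.measurable.aestronglyMeasurable
      (ae_of_all _ hf.nonneg)
  simp only [hF] at hFa ⊢
  exact hf.setIntegral_Iic_le (fun _ ↦ hint.integrableOn) hfa hFa x

theorem integrable_negPart (hf : IsLogConcave_s5 f)
    (hμ : μ = volume.withDensity fun x ↦ ENNReal.ofReal (f x)) :
    Integrable (fun x ↦ x⁻) μ := by
  have hpos : ∀ᵐ x ∂μ, 0 < f x := hμ ▸ ae_withDensity_ofReal_pos hf.measurable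
  obtain ⟨a, hfa, hFa⟩ := (hpos.and (ae_cdf_pos μ)).exists
  exact integrable_negPart_of_cdf_le_mul_exp (div_pos hfa hFa) (hf.cdf_le hμ hfa hFa)

theorem integrable_id (hf : IsLogConcave_s5 f)
    (hμ : μ = volume.withDensity fun x ↦ ENNReal.ofReal (f x)) :
    Integrable (fun x ↦ x) μ := by
  have hpos : Integrable (fun x ↦ x⁺) μ := by
    have : IsProbabilityMeasure (μ.map (MeasurableEquiv.neg ℝ)) :=
      Measure.isProbabilityMeasure_map (MeasurableEquiv.neg ℝ).measurable.aemeasurable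
    have hneg := (hf.comp_linearMap (-LinearMap.id)).integrable_negPart
      (μ := μ.map (MeasurableEquiv.neg ℝ))
      (hμ ▸ map_withDensity_of_measurePreserving _ (Measure.measurePreserving_neg volume) _)
    exact (hneg.comp_measurable (MeasurableEquiv.neg ℝ).measurable).congr
      (ae_of_all _ negPart_neg)
  exact (hpos.sub (hf.integrable_negPart hμ)).congr (ae_of_all _ posPart_sub_negPart)

theorem exp_neg_one_le_cdf_mean (hf : IsLogConcave_s5 f)
    (hμ : μ = volume.withDensity fun x ↦ ENNReal.ofReal (f x)) :
    exp (-1) ≤ cdf μ (∫ x, x ∂μ) := by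
  have hint := hf.integrable_id hμ
  have hIic : μ (Iic (∫ x, x ∂μ)) ≠ 0 := (measure_le_integral_pos hint).ne'
  have hIci : μ (Ici (∫ x, x ∂μ)) ≠ 0 := (measure_integral_le_pos hint).ne'
  have hcdf : 0 < cdf μ (∫ x, x ∂μ) := by
    rwa [← ENNReal.ofReal_pos, ofReal_cdf, pos_iff_ne_zero]
  exact exp_neg_one_le_of_cdf_le_mul_exp hint (hf.cdf_le hμ (hf.density_pos hμ hIic hIci) hcdf)

end IsLogConcave_s5

theorem measure_neg_ge_inv_e_of_logConcave_meanZero_general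
    (μ : Measure ℝ) [IsProbabilityMeasure μ] (f : ℝ → ℝ)
    (hf0 : ∀ x, 0 ≤ f x)
    (hμf : μ = volume.withDensity (fun x => ENNReal.ofReal (f x)))
    (hlc : ∀ x y l : ℝ, 0 ≤ l → l ≤ 1 → f x ^ l * f y ^ (1 - l) ≤ f (l * x + (1 - l) * y)) :
    Real.exp (-1) ≤ (μ {x : ℝ | x < ∫ y, y ∂μ}).toReal := by
  have hf : IsLogConcave_s5 f := ⟨hf0, fun x y a b ha hb hab ↦ by
    obtain rfl : b = 1 - a := by linarith
    exact hlc x y a ha (by linarith)⟩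
  have : NullSingletonClass μ := by rw [hμf]; infer_instance
  calc exp (-1) ≤ cdf μ (∫ x, x ∂μ) := hf.exp_neg_one_le_cdf_mean hμf
    _ = (μ (Iic (∫ x, x ∂μ))).toReal := cdf_eq_real μ _
    _ = (μ {x | x < ∫ y, y ∂μ}).toReal := by rw [← measure_congr Iio_ae_eq_Iic]; rfl

/-- If `X` is a log-concave real random variable with a density and `E X = 0`,
then `P(X < 0) ≥ 1/e`. Here having a log-concave density means that the
distribution `μ` of `X` equals `f · Lebesgue` with
`f x ^ l * f y ^ (1 - l) ≤ f (l * x + (1 - l) * y)` for all `x y` and `l ∈ [0, 1]`. -/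
theorem measure_neg_ge_inv_e_of_logConcave_meanZero
    (μ : Measure ℝ) [IsProbabilityMeasure μ] (f : ℝ → ℝ)
    (hf0 : ∀ x, 0 ≤ f x)
    (hμf : μ = volume.withDensity (fun x => ENNReal.ofReal (f x)))
    (hlc : ∀ x y l : ℝ, 0 ≤ l → l ≤ 1 → f x ^ l * f y ^ (1 - l) ≤ f (l * x + (1 - l) * y))
    (hmean : ∫ x, x ∂μ = 0) :
    Real.exp (-1) ≤ (μ {x : ℝ | x < 0}).toReal := by
  simpa only [hmean] using
    measure_neg_ge_inv_e_of_logConcave_meanZero_general μ f hf0 hμf hlc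
end
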